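/- Let G be a finite group and p a prime. If T(G) ≥ (√3/p)·|G|, then G is p-solvable. -/

import Mathlib

open CategoryTheory

/-- `χ : G → ℂ` is an irreducible complex character of the group `G`, i.e. the character of
an irreducible (simple) finite-dimensional complex representation of `G`. -/
def IsIrrChar (G : Type) [Group G] (χ : G → ℂ) : Prop :=
  ∃ V : FDRep ℂ G, Simple V ∧ χ = FDRep.character V

/-- `charDegSum G` is `T(G)`, the sum of the degrees `χ(1)` of the irreducible complex
characters of `G`. -/
noncomputable def charDegSum (G : Type) [Group G] : ℝ :=
  ∑ᶠ χ ∈ {χ : G → ℂ | IsIrrChar G χ}, (χ 1).re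

/-- A group `G` is `p`-solvable if it has a subnormal series `⊥ = H₀ ⊴ H₁ ⊴ ⋯ ⊴ Hₙ = ⊤`
in which each factor `H_{i+1}/H_i` is either a `p`-group or has order coprime to `p`. -/
def IsPSolvable (p : ℕ) (G : Type*) [Group G] : Prop :=
  ∃ (n : ℕ) (H : Fin (n + 1) → Subgroup G),
    H 0 = ⊥ ∧ H (Fin.last n) = ⊤ ∧
    (∀ i : Fin n, H i.castSucc ≤ H i.succ) ∧
    (∀ i : Fin n, ∃ _ : ((H i.castSucc).subgroupOf (H i.succ)).Normal,
      IsPGroup p (↥(H i.succ) ⧸ (H i.castSucc).subgroupOf (H i.succ)) ∨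
      (Nat.card (↥(H i.succ) ⧸ (H i.castSucc).subgroupOf (H i.succ))).Coprime p)

section part1
set_option linter.all false
open scoped ComplexConjugate MonoidAlgebra
open Representation

/-- characters (not necessarily irreducible) -/
def IsCh (G : Type) [Group G] (χ : G → ℂ) : Prop :=
  ∃ (V : Type) (_ : AddCommGroup V) (_ : Module ℂ V) (_ : FiniteDimensional ℂ V)
    (ρ : Representation ℂ G V), χ = ρ.character

section basic
variable {G : Type} [Group G]

lemma IsIrrChar.isCh {χ : G → ℂ} (h : IsIrrChar G χ) : IsCh G χ := by
  obtain ⟨V, _, rfl⟩ := h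
  exact ⟨V, inferInstance, inferInstance, inferInstance, V.ρ, rfl⟩

lemma isIrrChar_of_norm [Fintype G] {χ : G → ℂ} (h : IsCh G χ)
    (hn : ∑ g, χ g * χ g⁻¹ = Fintype.card G) : IsIrrChar G χ := by
  obtain ⟨V, _, _, _, ρ, rfl⟩ := h
  refine ⟨FDRep.of ρ, ?_, rfl⟩
  rw [FDRep.simple_iff_char_is_norm_one]
  rw [Nat.card_eq_fintype_card]
  exact hn

lemma IsIrrChar.norm [Fintype G] {χ : G → ℂ} (h : IsIrrChar G χ) :
    ∑ g, χ g * χ g⁻¹ = Fintype.card G := by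
  obtain ⟨V, hV, rfl⟩ := h
  rw [FDRep.simple_iff_char_is_norm_one] at hV
  rw [Nat.card_eq_fintype_card] at hV
  exact hV

lemma IsIrrChar.orth [Fintype G] {χ ψ : G → ℂ} (h : IsIrrChar G χ) (h' : IsIrrChar G ψ)
    (hne : χ ≠ ψ) : ∑ g, χ g * ψ g⁻¹ = 0 := by
  classical
  obtain ⟨V, hV, rfl⟩ := h
  obtain ⟨W, hW, rfl⟩ := h'
  have hc : (Nat.card G : ℂ) ≠ 0 := by simp [Nat.card_eq_fintype_card]
  let _ := invertibleOfNonzero hc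
  have := FDRep.char_orthonormal V W
  rw [if_neg] at this
  · simpa [hc] using this
  · rintro ⟨i⟩
    exact hne (FDRep.char_iso i)

lemma IsCh.ip_nat [Fintype G] {χ ψ : G → ℂ} (h : IsCh G χ) (h' : IsCh G ψ) :
    ∃ n : ℕ, ((Fintype.card G : ℂ))⁻¹ * ∑ g, χ g * ψ g⁻¹ = n := by
  obtain ⟨V, _, _, _, ρ, rfl⟩ := h
  obtain ⟨W, _, _, _, σ, rfl⟩ := h'
  have hc : (Nat.card G : ℂ) ≠ 0 := by simp [Nat.card_eq_fintype_card]
  let _ := invertibleOfNonzero hc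
  have := card_inv_mul_sum_char_mul_char_eq_finrank σ ρ
  rw [Nat.card_eq_fintype_card] at this
  exact ⟨_, this⟩

lemma IsCh.conj_inv {χ : G → ℂ} (h : IsCh G χ) (x y : G) : χ (x * y * x⁻¹) = χ y := by
  obtain ⟨V, _, _, _, ρ, rfl⟩ := h
  exact char_conj ρ y x

lemma IsCh.mul {χ ψ : G → ℂ} (h : IsCh G χ) (h' : IsCh G ψ) : IsCh G (fun g => χ g * ψ g) := by
  obtain ⟨V, _, _, _, ρ, rfl⟩ := h
  obtain ⟨W, _, _, _, σ, rfl⟩ := h'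
  refine ⟨TensorProduct ℂ V W, inferInstance, inferInstance, inferInstance, tprod ρ σ, ?_⟩
  rw [char_tensor]; rfl

lemma IsCh.inv {χ : G → ℂ} (h : IsCh G χ) : IsCh G (fun g => χ g⁻¹) := by
  obtain ⟨V, _, _, _, ρ, rfl⟩ := h
  refine ⟨Module.Dual ℂ V, inferInstance, inferInstance, inferInstance, ρ.dual, ?_⟩
  ext g; rw [char_dual]

lemma IsCh.comp {H : Type} [Group H] {χ : G → ℂ} (h : IsCh G χ) (f : H →* G) :
    IsCh H (fun x => χ (f x)) := by
  obtain ⟨V, _, _, _, ρ, rfl⟩ := h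
  exact ⟨V, inferInstance, inferInstance, inferInstance, MonoidHom.comp ρ f, rfl⟩

lemma isCh_lin (l : G →* ℂˣ) : IsCh G (fun x => (l x : ℂ)) := by
  refine ⟨ℂ, inferInstance, inferInstance, inferInstance,
    (Algebra.lmul ℂ ℂ).toRingHom.toMonoidHom.comp ((Units.coeHom ℂ).comp l), ?_⟩
  ext g
  have : LinearMap.mulLeft ℂ (l g : ℂ) = (l g : ℂ) • LinearMap.id := by ext; simp
  simp only [character]
  change _ = LinearMap.trace ℂ ℂ (LinearMap.mulLeft ℂ (l g : ℂ))
  rw [this]; simp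

lemma IsCh.one_nat {χ : G → ℂ} (h : IsCh G χ) : ∃ n : ℕ, χ 1 = n := by
  obtain ⟨V, _, _, _, ρ, rfl⟩ := h
  exact ⟨_, char_one ρ⟩

/-- Schur -/
lemma schur_scalar [Fintype G] {V : Type} [AddCommGroup V] [Module ℂ V] [FiniteDimensional ℂ V]
    (ρ : Representation ℂ G V) (hn : ∑ g, ρ.character g * ρ.character g⁻¹ = Fintype.card G)
    (T : V →ₗ[ℂ] V) (hT : ∀ g, T ∘ₗ ρ g = ρ g ∘ₗ T) : ∃ c : ℂ, T = c • LinearMap.id := by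
  have hc : (Nat.card G : ℂ) ≠ 0 := by simp [Nat.card_eq_fintype_card]
  let _ := invertibleOfNonzero hc
  have := card_inv_mul_sum_char_mul_char_eq_finrank ρ ρ
  rw [hn, Nat.card_eq_fintype_card, inv_mul_cancel₀ (by simp)] at this
  have h1 : Module.finrank ℂ (IntertwiningMap ρ ρ) = 1 := by exact_mod_cast this.symm
  have hne : (IntertwiningMap.id ρ) ≠ 0 := by
    intro h0
    have hV : ∀ v : V, v = 0 := fun v => by
      have := congrArg (fun f => f v) h0
      simpa using this
    have : Subsingleton (IntertwiningMap ρ ρ) := ⟨fun a b => by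
      ext v; rw [hV v]; simp⟩
    rw [Module.finrank_zero_of_subsingleton] at h1
    omega
  obtain ⟨c, hc⟩ := (finrank_eq_one_iff_of_nonzero' _ hne).mp h1 ⟨T, hT⟩
  refine ⟨c, ?_⟩
  have := congrArg (fun f => f.toLinearMap) hc
  exact this.symm

end basic

end part1

section part2
set_option linter.all false
open scoped ComplexConjugate MonoidAlgebra
open Representation

section cyc
variable {G : Type} [Group G]

lemma exists_zmod_hom {M : Type} [Group M] {n : ℕ} (g : M) (hg : g ^ n = 1) :
    ∃ φ : Multiplicative (ZMod n) →* M,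
      ∀ k : ℕ, φ (Multiplicative.ofAdd (k : ZMod n)) = g ^ k := by
  refine ⟨AddMonoidHom.toMultiplicativeLeft
    (ZMod.lift n ⟨(zmultiplesHom (Additive M)) (Additive.ofMul g), by
      simp [← ofMul_pow, hg]⟩), fun k => ?_⟩
  have := ZMod.lift_coe n ⟨(zmultiplesHom (Additive M)) (Additive.ofMul g), by
      simp [← ofMul_pow, hg]⟩ (k : ℤ)
  simp at this
  change Additive.toMul (ZMod.lift n ⟨(zmultiplesHom (Additive M)) (Additive.ofMul g), _⟩ (k : ZMod n)) = _
  rw [this]; rfl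

open Finset in
/-- Fourier expansion of a character on a cyclic subgroup -/
lemma IsCh.fourier {χ : G → ℂ} (h : IsCh G χ) {n : ℕ} [NeZero n] (g : G) (hg : g ^ n = 1)
    {ζ : ℂ} (hζ : IsPrimitiveRoot ζ n) :
    ∃ a : ℕ → ℕ, ∀ k : ℕ, χ (g ^ k) = ∑ i ∈ range n, (a i : ℂ) * ζ ^ (i * k) := by
  have hn0 : n ≠ 0 := NeZero.ne n
  obtain ⟨φ, hφ⟩ := exists_zmod_hom g hg
  have hζu : IsUnit ζ := hζ.isUnit hn0
  obtain ⟨z, hz⟩ := hζu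
  have hzn : z ^ n = 1 := by ext; simp [hz, hζ.pow_eq_one]
  obtain ⟨l, hl⟩ := exists_zmod_hom z hzn
  have key : ∀ i : ℕ, ∃ a : ℕ, (n : ℂ)⁻¹ * ∑ k ∈ range n, χ (g ^ k) * (ζ ^ (i * k))⁻¹ = a := by
    intro i
    obtain ⟨a, ha⟩ := (h.comp φ).ip_nat (isCh_lin (l ^ i))
    refine ⟨a, ?_⟩
    rw [← ha]
    congr 1
    · simp [ZMod.card]
    · symm
      apply Finset.sum_bij' (fun x _ => (Multiplicative.toAdd x : ZMod n).val)
        (fun k _ => Multiplicative.ofAdd (k : ZMod n))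
      · intro x _; simp [ZMod.val_lt]
      · simp
      · intro x _; simp
      · intro k hk; simp at hk ⊢; rw [Nat.mod_eq_of_lt hk]
      · intro x _
        have hx : x = Multiplicative.ofAdd (((Multiplicative.toAdd x : ZMod n).val : ℕ) : ZMod n) := by
          simp
        rw [map_inv]
        conv_lhs => rw [hx, hφ, MonoidHom.pow_apply, hl]
        push_cast
        rw [hz, mul_comm i, pow_mul]
  choose a ha using key
  refine ⟨a, fun k => ?_⟩
  have hnc : (n : ℂ) ≠ 0 := by exact_mod_cast hn0
  have hζ0 : ζ ≠ 0 := hζ.ne_zero hn0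
  have orth : ∀ j k : ℕ, j < n → k < n →
      ∑ i ∈ range n, (ζ ^ (i * j))⁻¹ * ζ ^ (i * k) = if j = k then (n : ℂ) else 0 := by
    intro j k hj hk
    have h1 : ∀ i, (ζ ^ (i * j))⁻¹ * ζ ^ (i * k) = ((ζ ^ j)⁻¹ * ζ ^ k) ^ i := by
      intro i; rw [mul_pow, inv_pow, ← pow_mul, ← pow_mul, mul_comm j, mul_comm k]
    simp_rw [h1]
    split_ifs with hjk
    · subst hjk; simp [hζ0]
    · have hne : (ζ ^ j)⁻¹ * ζ ^ k ≠ 1 := by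
        intro he
        have : ζ ^ k = ζ ^ j := by
          field_simp at he; exact he
        exact hjk (hζ.pow_inj hj hk this.symm)
      rw [geom_sum_eq hne]
      have : ((ζ ^ j)⁻¹ * ζ ^ k) ^ n = 1 := by
        rw [mul_pow, inv_pow, ← pow_mul, ← pow_mul, mul_comm j, mul_comm k, pow_mul, pow_mul,
          hζ.pow_eq_one]; simp
      rw [this]; simp
  have hk : ∀ k, k < n → χ (g ^ k) = ∑ i ∈ range n, (a i : ℂ) * ζ ^ (i * k) := by
    intro k hk
    simp_rw [← ha, mul_assoc, sum_mul, mul_assoc]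
    rw [← mul_sum, sum_comm]
    simp_rw [← mul_sum]
    have : ∀ j ∈ range n, χ (g ^ j) * ∑ i ∈ range n, (ζ ^ (i * j))⁻¹ * ζ ^ (i * k)
        = if j = k then χ (g ^ j) * n else 0 := by
      intro j hj
      rw [orth j k (by simpa using hj) hk]; split_ifs <;> simp
    rw [sum_congr rfl this]
    simp [hk]
    field_simp
  have h1 : g ^ k = g ^ (k % n) := by conv_lhs => rw [← Nat.mod_add_div k n, pow_add, pow_mul, hg, one_pow, mul_one]
  have h2 : ∀ i, ζ ^ (i * k) = ζ ^ (i * (k % n)) := by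
    intro i
    rw [mul_comm i k, mul_comm i, pow_mul, pow_mul]; congr 1
    conv_lhs => rw [← Nat.mod_add_div k n, pow_add, pow_mul, hζ.pow_eq_one, one_pow, mul_one]
  rw [h1, hk _ (Nat.mod_lt _ (Nat.pos_of_ne_zero hn0))]
  simp_rw [h2]

end cyc

end part2

section part3
set_option linter.all false
open scoped ComplexConjugate MonoidAlgebra
open Representation Finset

section conjs
variable {G : Type} [Group G]

lemma IsCh.conj [Finite G] {χ : G → ℂ} (h : IsCh G χ) (g : G) : χ g⁻¹ = conj (χ g) := by
  have hpos : 0 < orderOf g := orderOf_pos g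
  have : NeZero (orderOf g) := ⟨hpos.ne'⟩
  have hζ := Complex.isPrimitiveRoot_exp (orderOf g) hpos.ne'
  set ζ := Complex.exp (2 * Real.pi * Complex.I / (orderOf g))
  obtain ⟨a, ha⟩ := h.fourier g (pow_orderOf_eq_one g) hζ
  have h1 : g⁻¹ = g ^ (orderOf g - 1) := by
    rw [inv_eq_iff_mul_eq_one, ← pow_succ', Nat.sub_add_cancel hpos, pow_orderOf_eq_one]
  have hn : ‖ζ‖ = 1 := hζ.norm'_eq_one hpos.ne'
  have hcz : conj ζ = ζ ^ (orderOf g - 1) := by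
    have h0 : ζ ≠ 0 := hζ.ne_zero hpos.ne'
    have e1 : conj ζ * ζ = 1 := by
      rw [← Complex.normSq_eq_conj_mul_self, Complex.normSq_eq_norm_sq, hn]; simp
    have e2 : ζ ^ (orderOf g - 1) * ζ = 1 := by
      rw [← pow_succ, Nat.sub_add_cancel hpos, hζ.pow_eq_one]
    exact mul_right_cancel₀ h0 (e1.trans e2.symm)
  have h2 := ha 1
  rw [pow_one] at h2
  rw [h1, ha, h2, map_sum]
  refine sum_congr rfl fun i _ => ?_
  rw [map_mul, map_pow, hcz]
  simp [← pow_mul, mul_comm]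

variable [Fintype G]

/-- inner product of functions on a finite group -/
noncomputable def ip (f f' : G → ℂ) : ℂ := (Fintype.card G : ℂ)⁻¹ * ∑ g, f g * conj (f' g)

lemma cardG_ne : (Fintype.card G : ℂ) ≠ 0 := by simp

lemma IsCh.ip_nat' {χ ψ : G → ℂ} (h : IsCh G χ) (h' : IsCh G ψ) :
    ∃ n : ℕ, ip χ ψ = n := by
  obtain ⟨n, hn⟩ := h.ip_nat h'
  refine ⟨n, ?_⟩
  rw [← hn, ip]; simp_rw [h'.conj]

lemma IsIrrChar.ip_self {χ : G → ℂ} (h : IsIrrChar G χ) : ip χ χ = 1 := by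
  have := h.norm
  simp_rw [h.isCh.conj] at this
  rw [ip, this, inv_mul_cancel₀ cardG_ne]

lemma IsIrrChar.ip_ne {χ ψ : G → ℂ} (h : IsIrrChar G χ) (h' : IsIrrChar G ψ) (hne : χ ≠ ψ) :
    ip χ ψ = 0 := by
  have := h.orth h' hne
  simp_rw [h'.isCh.conj] at this
  rw [ip, this, mul_zero]

lemma isIrrChar_of_ip {χ : G → ℂ} (h : IsCh G χ) (h1 : ip χ χ = 1) : IsIrrChar G χ := by
  apply isIrrChar_of_norm h
  simp_rw [h.conj]
  rw [ip, inv_mul_eq_iff_eq_mul₀ cardG_ne, mul_one] at h1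
  exact h1

lemma ip_add_left (f f' h : G → ℂ) : ip (f + f') h = ip f h + ip f' h := by
  simp [ip, add_mul, sum_add_distrib, mul_add]
lemma ip_add_right (f f' h : G → ℂ) : ip h (f + f') = ip h f + ip h f' := by
  simp [ip, sum_add_distrib, mul_add]
lemma ip_sub_left (f f' h : G → ℂ) : ip (f - f') h = ip f h - ip f' h := by
  simp [ip, sub_mul, sum_sub_distrib, mul_sub]
lemma ip_sub_right (f f' h : G → ℂ) : ip h (f - f') = ip h f - ip h f' := by
  simp [ip, sum_sub_distrib, mul_sub]
lemma ip_smul_left (c : ℂ) (f h : G → ℂ) : ip (c • f) h = c * ip f h := by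
  simp only [ip, Pi.smul_apply, smul_eq_mul, mul_sum]
  exact sum_congr rfl fun _ _ => by ring
lemma ip_smul_right (c : ℂ) (f h : G → ℂ) : ip h (c • f) = conj c * ip h f := by
  simp only [ip, Pi.smul_apply, smul_eq_mul, mul_sum, map_mul]
  exact sum_congr rfl fun _ _ => by ring
lemma ip_sum_left {ι : Type*} (s : Finset ι) (f : ι → G → ℂ) (h : G → ℂ) :
    ip (∑ i ∈ s, f i) h = ∑ i ∈ s, ip (f i) h := by
  simp only [ip, Finset.sum_apply, sum_mul]; rw [sum_comm, mul_sum]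
lemma ip_sum_right {ι : Type*} (s : Finset ι) (f : ι → G → ℂ) (h : G → ℂ) :
    ip h (∑ i ∈ s, f i) = ∑ i ∈ s, ip h (f i) := by
  simp only [ip, Finset.sum_apply, mul_sum, map_sum]; rw [sum_comm]
lemma ip_conj (f h : G → ℂ) : conj (ip f h) = ip h f := by
  simp [ip, mul_comm]
lemma ip_self_eq (f : G → ℂ) : ip f f = (((Fintype.card G : ℝ)⁻¹ * ∑ g, ‖f g‖ ^ 2 : ℝ) : ℂ) := by
  simp only [ip, Complex.mul_conj, Complex.normSq_eq_norm_sq]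
  push_cast; rfl

lemma ip_self_zero {f : G → ℂ} (h : ip f f = 0) : f = 0 := by
  rw [ip_self_eq] at h
  have h1 : (Fintype.card G : ℝ)⁻¹ * ∑ g, ‖f g‖ ^ 2 = 0 := by exact_mod_cast h
  have h2 : ∑ g, ‖f g‖ ^ 2 = 0 := by
    rcases mul_eq_zero.1 h1 with h | h
    · simp at h
    · exact h
  rw [sum_eq_zero_iff_of_nonneg (fun _ _ => by positivity)] at h2
  ext g
  simpa using h2 g (mem_univ g)

/-- class functions -/
def IsCF (f : G → ℂ) : Prop := ∀ x y, f (x * y * x⁻¹) = f y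

lemma IsCh.isCF {χ : G → ℂ} (h : IsCh G χ) : IsCF χ := h.conj_inv

lemma isIrr_of_irreducible {V : Type} [AddCommGroup V] [Module ℂ V] [FiniteDimensional ℂ V]
    (ρ : Representation ℂ G V) [IsIrreducible ρ] : IsIrrChar G ρ.character := by
  apply isIrrChar_of_norm ⟨V, inferInstance, inferInstance, inferInstance, ρ, rfl⟩
  have hc : (Nat.card G : ℂ) ≠ 0 := by simp [Nat.card_eq_fintype_card]
  let _ := invertibleOfNonzero hc
  have := Representation.char_orthonormal ρ ρ
  rw [if_pos ⟨Representation.Equiv.refl ρ⟩] at this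
  rw [inv_mul_eq_iff_eq_mul₀ hc] at this
  simpa using this

lemma complete_aux {f : G → ℂ} (hf : IsCF f) (h : ∀ χ, IsIrrChar G χ → ip f χ = 0)
    {V : Type} [AddCommGroup V] [Module ℂ V] [FiniteDimensional ℂ V]
    (ρ : Representation ℂ G V) [IsIrreducible ρ] : ∑ g, f g • ρ g⁻¹ = 0 := by
  have hirr := isIrr_of_irreducible ρ
  obtain ⟨c, hc⟩ := schur_scalar ρ hirr.norm (∑ g, f g • ρ g⁻¹) (by
    intro x
    have e : ∑ g, f g • ρ g⁻¹ = ∑ g, f g • ρ (x * g⁻¹ * x⁻¹) := by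
      rw [← Equiv.sum_comp (MulAut.conj x).toEquiv]
      refine sum_congr rfl fun g _ => ?_
      have := hf x g
      rw [show (MulAut.conj x).toEquiv g = x * g * x⁻¹ from rfl, hf x g]
      simp [mul_assoc]
    conv_lhs => rw [e]
    rw [← Module.End.mul_eq_comp, ← Module.End.mul_eq_comp, sum_mul, mul_sum]
    refine sum_congr rfl fun g _ => ?_
    rw [smul_mul_assoc, mul_smul_comm, ← map_mul, ← map_mul]
    simp [mul_assoc])
  have ht := congrArg (LinearMap.trace ℂ V) hc
  have hz : ∑ g, f g * ρ.character g⁻¹ = 0 := by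
    have := h _ hirr
    rw [ip] at this
    simp_rw [← hirr.isCh.conj] at this
    simpa using this
  rw [map_sum] at ht
  simp only [map_smul, smul_eq_mul] at ht
  change ∑ g, f g * ρ.character g⁻¹ = _ at ht
  rw [hz, LinearMap.trace_id] at ht
  rcases mul_eq_zero.1 ht.symm with h0 | h0
  · rw [hc, h0, zero_smul]
  · have h00 : Module.finrank ℂ V = 0 := by exact_mod_cast h0
    rw [Module.finrank_zero_iff] at h00
    ext v; exact Subsingleton.elim _ _

lemma complete_aux2 {f : G → ℂ} (hf : IsCF f) (h : ∀ χ, IsIrrChar G χ → ip f χ = 0)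
    {M : Type} [AddCommGroup M] [Module ℂ[G] M] [Module ℂ M] [IsScalarTower ℂ ℂ[G] M]
    [IsSimpleModule ℂ[G] M] (m : M) :
    (∑ g, MonoidAlgebra.single g⁻¹ (f g) : ℂ[G]) • m = 0 := by
  have hal : (ofModule' (k := ℂ) (G := G) M).asAlgebraHom = Algebra.lsmul ℂ ℂ M := by
    simp [asAlgebraHom, ofModule']
  have hi : IsIrreducible (ofModule' (k := ℂ) (G := G) M) := by
    rw [irreducible_iff_isSimpleModule_asModule]
    let e : (ofModule' (k := ℂ) (G := G) M).asModule ≃ₗ[ℂ[G]] M :=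
      { (ofModule' (k := ℂ) (G := G) M).asModuleEquiv with
        map_smul' := fun r x => by
          have := asModuleEquiv_map_smul (ofModule' (k := ℂ) (G := G) M) r x
          rw [hal] at this
          exact this }
    exact IsSimpleModule.congr e
  have hfd : FiniteDimensional ℂ M := by
    have : Module.Finite ℂ ℂ[G] := inferInstance
    have : Module.Finite ℂ[G] M := inferInstance
    exact Module.Finite.trans ℂ[G] _
  have h1 := complete_aux hf h (ofModule' (k := ℂ) (G := G) M)
  have h2 : (ofModule' (k := ℂ) (G := G) M).asAlgebraHom
    (∑ g, MonoidAlgebra.single g⁻¹ (f g) : ℂ[G]) m =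
      (∑ g, MonoidAlgebra.single g⁻¹ (f g) : ℂ[G]) • m := by
    rw [hal]; rfl
  rw [map_sum] at h2
  simp only [asAlgebraHom_single] at h2
  rw [h1] at h2
  simpa using h2.symm

lemma complete {f : G → ℂ} (hf : IsCF f) (h : ∀ χ, IsIrrChar G χ → ip f χ = 0) : f = 0 := by
  classical
  let a : ℂ[G] := ∑ g, MonoidAlgebra.single g⁻¹ (f g)
  have h2 : ∀ S : Submodule ℂ[G] ℂ[G], IsSimpleModule ℂ[G] S → ∀ s ∈ S, a * s = 0 := by
    intro S hS s hs
    have := complete_aux2 hf h (⟨s, hs⟩ : S)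
    exact congrArg Subtype.val this
  have h5 : ∀ s : ℂ[G], a * s = 0 := by
    intro s
    have hs : s ∈ sSup {m : Submodule ℂ[G] ℂ[G] | IsSimpleModule ℂ[G] m} := by
      rw [IsSemisimpleModule.sSup_simples_eq_top]; trivial
    rw [sSup_eq_iSup] at hs
    induction hs using Submodule.iSup_induction' with
    | mem S x hx =>
      by_cases hS : IsSimpleModule ℂ[G] S
      · simp [hS] at hx; exact h2 S hS x hx
      · simp [hS] at hx; simp [hx]
    | zero => simp
    | add x y _ _ hx hy => rw [mul_add, hx, hy, add_zero]
  have h6 := h5 1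
  rw [mul_one] at h6
  ext x
  have := congrArg (fun u => u.coeff x⁻¹) h6
  simpa [a, Finsupp.finset_sum_apply, Finsupp.single_apply] using this
end conjs

end part3

section part4
set_option linter.all false
open scoped ComplexConjugate
open Finset

/-- type of irreducible characters -/
def Irr (G : Type) [Group G] : Type := {χ : G → ℂ // IsIrrChar G χ}

section irr
variable {G : Type} [Group G]

lemma Irr.isIrr (χ : Irr G) : IsIrrChar G χ.1 := χ.2
lemma Irr.isCh (χ : Irr G) : IsCh G χ.1 := χ.2.isCh

lemma IsCh.exists_deg {χ : G → ℂ} (h : IsCh G χ) : ∃ n : ℕ, χ 1 = n := h.one_nat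

/-- degree -/
noncomputable def Irr.deg (χ : Irr G) : ℕ := χ.isCh.one_nat.choose
lemma Irr.one_eq (χ : Irr G) : χ.1 1 = χ.deg := χ.isCh.one_nat.choose_spec

variable [Fintype G]

lemma ip_irr [DecidableEq (Irr G)] (χ ψ : Irr G) : ip χ.1 ψ.1 = if χ = ψ then 1 else 0 := by
  split_ifs with h
  · subst h; exact χ.2.ip_self
  · exact χ.2.ip_ne ψ.2 (fun h' => h (Subtype.ext h'))

lemma irr_linInd : LinearIndependent ℂ (fun χ : Irr G => χ.1) := by
  classical
  rw [linearIndependent_iff']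
  intro s c hc χ hχ
  have := congrArg (fun f => ip f χ.1) hc
  simp only [ip_sum_left, ip_smul_left, ip_irr] at this
  simpa [hχ, ip] using this

instance : Finite (Irr G) := irr_linInd.finite

noncomputable instance : Fintype (Irr G) := Fintype.ofFinite _
noncomputable instance : DecidableEq (Irr G) := Classical.decEq _

lemma IsCF.sub {f f' : G → ℂ} (h : IsCF f) (h' : IsCF f') : IsCF (f - f') := fun x y => by
  simp [h x y, h' x y]
lemma IsCF.add {f f' : G → ℂ} (h : IsCF f) (h' : IsCF f') : IsCF (f + f') := fun x y => by
  simp [h x y, h' x y]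
lemma IsCF.smul {f : G → ℂ} (c : ℂ) (h : IsCF f) : IsCF (c • f) := fun x y => by
  simp [h x y]
lemma IsCF.sum {ι : Type*} {s : Finset ι} {f : ι → G → ℂ} (h : ∀ i ∈ s, IsCF (f i)) :
    IsCF (∑ i ∈ s, f i) := fun x y => by
  simp only [Finset.sum_apply]
  exact sum_congr rfl fun i hi => h i hi x y

lemma IsCF.expand {f : G → ℂ} (h : IsCF f) : f = ∑ χ : Irr G, ip f χ.1 • χ.1 := by
  rw [← sub_eq_zero]
  apply complete (h.sub (IsCF.sum fun χ _ => (χ.isCh.isCF).smul _))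
  intro ψ hψ
  obtain ⟨ψ', rfl⟩ : ∃ ψ' : Irr G, ψ'.1 = ψ := ⟨⟨ψ, hψ⟩, rfl⟩
  rw [ip_sub_left, ip_sum_left]
  simp only [ip_smul_left, ip_irr]
  simp

lemma IsCF.expand_apply {f : G → ℂ} (h : IsCF f) (x : G) :
    f x = ∑ χ : Irr G, ip f χ.1 * χ.1 x := by
  conv_lhs => rw [h.expand]
  simp

lemma parseval {f f' : G → ℂ} (h : IsCF f) :
    ip f f' = ∑ χ : Irr G, ip f χ.1 * conj (ip f' χ.1) := by
  conv_lhs => rw [h.expand]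
  rw [ip_sum_left]
  simp only [ip_smul_left, ip_conj]

lemma col_orth [DecidableEq G] (x y : G) :
    ∑ χ : Irr G, χ.1 x * conj (χ.1 y) = #{h : G | h * x * h⁻¹ = y} := by
  let f : G → ℂ := fun g => #{h : G | h * g * h⁻¹ = y}
  have hf : IsCF f := by
    intro u g
    simp only [f]
    norm_cast
    apply card_bij (fun h _ => h * u)
    · intro h; simp [mul_assoc]
    · intro a _ b _; simp
    · intro b hb
      refine ⟨b * u⁻¹, ?_, by simp⟩
      simpa [mul_assoc] using hb
  have hip : ∀ χ : Irr G, ip f χ.1 = conj (χ.1 y) := by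
    intro χ
    simp only [ip, f]
    rw [inv_mul_eq_iff_eq_mul₀ cardG_ne]
    simp only [card_filter, Nat.cast_sum, sum_mul]
    rw [sum_comm]
    rw [← nsmul_eq_mul, ← Finset.card_univ, ← sum_const]
    refine sum_congr rfl fun h _ => ?_
    rw [sum_eq_single (h⁻¹ * y * h)]
    · have := χ.isCh.isCF h⁻¹ y
      simp [mul_assoc] at this
      simp [mul_assoc, this]
    · intro b _ hb
      rw [if_neg]; · simp
      rintro rfl; apply hb; simp [mul_assoc]
    · simp
  have := hf.expand_apply x
  simp only [hip] at this
  rw [show (#{h : G | h * x * h⁻¹ = y} : ℂ) = f x from rfl, this]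
  exact sum_congr rfl fun χ _ => mul_comm _ _

lemma Irr.deg_pos (χ : Irr G) : 0 < χ.deg := by
  by_contra h
  have h0 : χ.deg = 0 := by omega
  obtain ⟨V, _, _, _, ρ, hρ⟩ := χ.isCh
  have h1 : χ.1 1 = 0 := by rw [χ.one_eq, h0]; simp
  rw [hρ, Representation.char_one] at h1
  have h2 : Module.finrank ℂ V = 0 := by exact_mod_cast h1
  rw [Module.finrank_zero_iff] at h2
  have h3 : χ.1 = 0 := by
    rw [hρ]; ext g; simp only [Representation.character]
    rw [show ρ g = 0 from by ext v; exact Subsingleton.elim _ _]; simp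
  have := χ.2.ip_self
  rw [h3] at this
  simp [ip] at this

lemma sum_deg_sq : ∑ χ : Irr G, χ.deg ^ 2 = Fintype.card G := by
  classical
  have := col_orth (1 : G) 1
  simp only [Irr.one_eq, mul_one, mul_inv_cancel] at this
  have h : (∑ χ : Irr G, (χ.deg : ℂ) ^ 2) = Fintype.card G := by
    simpa [sq] using this
  exact_mod_cast h

/-- number of commuting pairs -/
def ncomm (G : Type) [Group G] [Fintype G] [DecidableEq G] : ℕ :=
  ∑ x : G, #{h : G | h * x * h⁻¹ = x}

lemma card_irr [DecidableEq G] : Fintype.card (Irr G) * Fintype.card G = ncomm G := by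
  have h1 : ∑ x : G, ∑ χ : Irr G, χ.1 x * conj (χ.1 x) = ncomm G := by
    simp only [col_orth, ncomm]; push_cast; rfl
  rw [sum_comm] at h1
  have h2 : ∀ χ : Irr G, ∑ x, χ.1 x * conj (χ.1 x) = Fintype.card G := by
    intro χ
    have := χ.2.ip_self
    rwa [ip, inv_mul_eq_iff_eq_mul₀ cardG_ne, mul_one] at this
  simp only [h2] at h1
  have : (Fintype.card (Irr G) * Fintype.card G : ℂ) = ncomm G := by simpa using h1
  exact_mod_cast this

lemma charDegSum_eq : charDegSum G = ∑ χ : Irr G, (χ.deg : ℝ) := by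
  have hfin : {χ : G → ℂ | IsIrrChar G χ}.Finite := inferInstanceAs (Finite (Irr G))
  rw [charDegSum, finsum_mem_eq_finite_toFinset_sum _ hfin]
  symm
  apply sum_bij (fun χ _ => χ.1)
  · intro χ _; simpa using χ.2
  · intro a _ b _ h; exact Subtype.ext h
  · intro b hb
    exact ⟨⟨b, by simpa using hb⟩, mem_univ _, rfl⟩
  · intro χ _; rw [χ.one_eq]; simp

lemma charDegSum_sq : (charDegSum G) ^ 2 ≤ Fintype.card (Irr G) * Fintype.card G := by
  rw [charDegSum_eq]
  have h := sum_mul_sq_le_sq_mul_sq (univ : Finset (Irr G)) (fun _ => (1:ℝ)) (fun χ => (χ.deg : ℝ))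
  simp only [one_mul, one_pow, sum_const, card_univ, nsmul_eq_mul, mul_one] at h
  have h2 : ∑ χ : Irr G, (χ.deg : ℝ) ^ 2 = Fintype.card G := by exact_mod_cast sum_deg_sq
  rwa [h2] at h

/-- multiplicities -/
noncomputable def mult (θ : G → ℂ) (χ : Irr G) : ℕ := ⌊(ip θ χ.1).re⌋₊

lemma IsCh.ip_mult {θ : G → ℂ} (h : IsCh G θ) (χ : Irr G) : ip θ χ.1 = mult θ χ := by
  obtain ⟨n, hn⟩ := h.ip_nat' χ.isCh
  rw [mult, hn]; simp

lemma IsCh.expand {θ : G → ℂ} (h : IsCh G θ) (x : G) :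
    θ x = ∑ χ : Irr G, (mult θ χ : ℂ) * χ.1 x := by
  rw [h.isCF.expand_apply x]
  simp only [h.ip_mult]

lemma IsCh.ip_eq {θ η : G → ℂ} (h : IsCh G θ) (h' : IsCh G η) :
    ip θ η = ((∑ χ : Irr G, mult θ χ * mult η χ : ℕ) : ℂ) := by
  rw [parseval h.isCF]
  simp only [h.ip_mult, h'.ip_mult]
  push_cast
  simp

lemma IsCh.deg_expand {θ : G → ℂ} (h : IsCh G θ) {n : ℕ} (hn : θ 1 = n) :
    n = ∑ χ : Irr G, mult θ χ * χ.deg := by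
  have := h.expand 1
  rw [hn] at this
  simp only [Irr.one_eq] at this
  exact_mod_cast this

end irr

end part4

section part5
set_option linter.all false
open scoped ComplexConjugate
open Finset

section scal
variable {G : Type} [Group G] [Fintype G]

lemma Irr.central_det (χ : Irr G) (z : G) (hz : ∀ g, z * g = g * z) :
    ∃ ω : ℂ, (∀ x, χ.1 (z * x) = ω * χ.1 x) ∧ (z ∈ commutator G → ω ^ χ.deg = 1) := by
  obtain ⟨V, _, _, _, ρ, hρ⟩ := χ.isCh
  have hn := χ.2.norm
  rw [hρ] at hn
  obtain ⟨ω, hω⟩ := schur_scalar ρ hn (ρ z) (by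
    intro g
    rw [← Module.End.mul_eq_comp, ← Module.End.mul_eq_comp, ← map_mul, ← map_mul, hz])
  refine ⟨ω, fun x => ?_, fun hc => ?_⟩
  · rw [hρ]
    simp only [Representation.character]
    rw [map_mul, hω, Module.End.mul_eq_comp, LinearMap.smul_comp, LinearMap.id_comp, map_smul]
    rfl
  · let d : G →* ℂ := (LinearMap.det : (V →ₗ[ℂ] V) →* ℂ).comp ρ
    have h1 : d z = 1 := by
      have hle : commutator G ≤ d.toHomUnits.ker := Abelianization.commutator_subset_ker _
      have := hle hc
      rw [MonoidHom.mem_ker] at this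
      have h2 := congrArg Units.val this
      simpa using h2
    have h2 : d z = ω ^ χ.deg := by
      change LinearMap.det (ρ z) = _
      rw [hω, LinearMap.det_smul, LinearMap.det_id, mul_one]
      congr 1
      have h3 := χ.one_eq
      rw [hρ, Representation.char_one] at h3
      exact_mod_cast h3
    rw [← h2, h1]

lemma Irr.central (χ : Irr G) (z : G) (hz : ∀ g, z * g = g * z) :
    ∃ ω : ℂ, ∀ x, χ.1 (z * x) = ω * χ.1 x :=
  let ⟨ω, h, _⟩ := χ.central_det z hz
  ⟨ω, h⟩

lemma Irr.one_ne (χ : Irr G) : χ.1 1 ≠ 0 := by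
  rw [χ.one_eq]; exact_mod_cast χ.deg_pos.ne'

lemma Irr.pow_scal (χ : Irr G) {z : G} {ω : ℂ} (h : ∀ x, χ.1 (z * x) = ω * χ.1 x) (n : ℕ) :
    ∀ x, χ.1 (z ^ n * x) = ω ^ n * χ.1 x := by
  induction n with
  | zero => simp
  | succ n ih => intro x; rw [pow_succ, mul_assoc, ih, h]; ring

lemma Irr.scal_pow_eq_one (χ : Irr G) {z : G} {ω : ℂ} (h : ∀ x, χ.1 (z * x) = ω * χ.1 x) {n : ℕ}
    (hn : z ^ n = 1) : ω ^ n = 1 := by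
  have := χ.pow_scal h n 1
  rw [hn, one_mul] at this
  exact (mul_right_cancel₀ χ.one_ne (by rw [← this, one_mul])).symm

/-- elements of a subgroup on which a character is constant act trivially -/
lemma IsCh.ker_of_const {χ : G → ℂ} (h : IsCh G χ) (H : Subgroup G) (hH : ∀ x ∈ H, χ x = χ 1) :
    ∀ z ∈ H, ∀ x, χ (z * x) = χ x := by
  classical
  obtain ⟨V, _, _, _, ρ, hρ⟩ := h
  have : Fintype H := Fintype.ofFinite _
  let σ : Representation ℂ H V := MonoidHom.comp ρ H.subtype
  have hc : (Nat.card H : ℂ) ≠ 0 := by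
    simp [Nat.card_eq_fintype_card]
  let _ := invertibleOfNonzero hc
  have h1 := Representation.card_inv_mul_sum_char_eq_finrank σ
  have h2 : ∀ x : H, σ.character x = Module.finrank ℂ V := by
    intro x
    have := hH x x.2
    rw [hρ, Representation.char_one] at this
    exact this
  simp only [h2] at h1
  rw [Finset.sum_const, card_univ, ← Nat.card_eq_fintype_card, nsmul_eq_mul,
    inv_mul_cancel_left₀ hc] at h1
  have h3 : Module.finrank ℂ (Representation.invariants σ) = Module.finrank ℂ V := by
    exact_mod_cast h1.symm
  have h4 := Submodule.eq_top_of_finrank_eq h3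
  intro z hz x
  have h5 : ρ z = 1 := by
    ext v
    have : v ∈ Representation.invariants σ := by rw [h4]; trivial
    exact this ⟨z, hz⟩
  rw [hρ]
  simp only [Representation.character, map_mul, h5, one_mul]

/-- The trivial character -/
def trivIrr : Irr G := ⟨fun _ => 1, isIrrChar_of_ip (by
    have := isCh_lin (1 : G →* ℂˣ)
    simpa using this) (by simp [ip])⟩

@[simp] lemma trivIrr_apply (x : G) : (trivIrr : Irr G).1 x = 1 := rfl

lemma trivIrr_deg : (trivIrr : Irr G).deg = 1 := by
  have := (trivIrr : Irr G).one_eq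
  rw [trivIrr_apply] at this
  exact_mod_cast this.symm

lemma Irr.eq_triv_of_const (χ : Irr G) (h : ∀ x, χ.1 x = χ.1 1) : χ = trivIrr := by
  have h1 := χ.2.ip_self
  rw [ip_self_eq] at h1
  simp only [h] at h1
  rw [χ.one_eq] at h1
  have h2 : (χ.deg : ℝ) ^ 2 = 1 := by
    have : ((Fintype.card G : ℝ)⁻¹ * ∑ g : G, ‖(χ.deg : ℂ)‖ ^ 2) = 1 := by exact_mod_cast h1
    simpa using this
  have h3 : χ.deg = 1 := by
    have : χ.deg ^ 2 = 1 := by exact_mod_cast h2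
    simpa using this
  apply Subtype.ext
  ext x
  rw [h, χ.one_eq, h3]; simp

/-- kernel of a character -/
def kerCh (χ : G → ℂ) (h : IsCF χ) : Subgroup G where
  carrier := {z | ∀ x, χ (z * x) = χ x}
  mul_mem' {a b} ha hb x := by rw [mul_assoc, ha, hb]
  one_mem' := by simp
  inv_mem' {a} ha x := by
    have := ha (a⁻¹ * x)
    rw [← this]; simp

lemma kerCh_normal (χ : G → ℂ) (h : IsCF χ) : (kerCh χ h).Normal := ⟨fun n hn g x => by
  have h1 := h g⁻¹ (g * n * g⁻¹ * x)
  have h2 := h g⁻¹ x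
  rw [← h1, ← h2, ← hn (g⁻¹ * x * g⁻¹⁻¹)]
  congr 1; group⟩

lemma faithful [IsSimpleGroup G] (χ : Irr G) (hχ : χ ≠ trivIrr) (H : Subgroup G)
    (hH : ∀ x ∈ H, χ.1 x = χ.1 1) : H = ⊥ := by
  have hle : H ≤ kerCh χ.1 χ.isCh.isCF := fun z hz => χ.isCh.ker_of_const H hH z hz
  rcases (kerCh_normal χ.1 χ.isCh.isCF).eq_bot_or_eq_top with h | h
  · rw [h] at hle; exact le_bot_iff.1 hle
  · exfalso
    apply hχ
    apply χ.eq_triv_of_const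
    intro x
    have : x ∈ kerCh χ.1 χ.isCh.isCF := by rw [h]; trivial
    have := this 1
    simpa using this

lemma faithful' [IsSimpleGroup G] (χ : Irr G) (hχ : χ ≠ trivIrr) (z : G)
    (hz : ∀ n : ℕ, χ.1 (z ^ n) = χ.1 1) : z = 1 := by
  have := faithful χ hχ (Subgroup.zpowers z) (by
    intro x hx
    rw [← mem_powers_iff_mem_zpowers] at hx
    obtain ⟨n, rfl⟩ := hx
    exact hz n)
  simpa using this

/-- degree of commutative irreducibles -/
lemma Irr.deg_one_of_comm (hc : ∀ x y : G, x * y = y * x) (χ : Irr G) : χ.deg = 1 := by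
  classical
  have h1 : ncomm G = Fintype.card G * Fintype.card G := by
    simp only [ncomm]
    have : ∀ x : G, #{h : G | h * x * h⁻¹ = x} = Fintype.card G := by
      intro x
      rw [filter_true_of_mem, card_univ]
      intro h _; rw [hc h x]; simp
    simp [this]
  have h2 := card_irr (G := G)
  rw [h1] at h2
  have h3 : Fintype.card (Irr G) = Fintype.card G := Nat.eq_of_mul_eq_mul_right Fintype.card_pos h2
  have h4 := sum_deg_sq (G := G)
  by_contra hne
  have : ∑ χ : Irr G, 1 < ∑ χ : Irr G, χ.deg ^ 2 := by
    apply sum_lt_sum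
    · intro ψ _; exact Nat.one_le_pow _ _ ψ.deg_pos
    · refine ⟨χ, mem_univ _, ?_⟩
      have := χ.deg_pos
      have : 2 ≤ χ.deg := by omega
      nlinarith
  rw [h4] at this
  simp [h3] at this

lemma card_irr_comm (hc : ∀ x y : G, x * y = y * x) : Fintype.card (Irr G) = Fintype.card G := by
  rw [← sum_deg_sq (G := G)]
  simp [Irr.deg_one_of_comm hc]

/-- linear characters are multiplicative -/
lemma Irr.mul_of_deg_one (χ : Irr G) (h : χ.deg = 1) (x y : G) : χ.1 (x * y) = χ.1 x * χ.1 y := by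
  obtain ⟨V, _, _, _, ρ, hρ⟩ := χ.isCh
  have h3 := χ.one_eq
  rw [hρ, Representation.char_one, h] at h3
  have hf : Module.finrank ℂ V = 1 := by exact_mod_cast h3
  have key : ∀ T : V →ₗ[ℂ] V, T = (LinearMap.trace ℂ V T) • LinearMap.id := by
    intro T
    have hn : Module.finrank ℂ (V →ₗ[ℂ] V) = 1 := by simp [hf, Module.finrank_linearMap]
    have : Nontrivial V := Module.nontrivial_of_finrank_pos (R := ℂ) (by omega)
    obtain ⟨c, hc⟩ := (finrank_eq_one_iff_of_nonzero' (LinearMap.id : V →ₗ[ℂ] V) (by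
      intro h0
      obtain ⟨v, hv⟩ := exists_ne (0 : V)
      exact hv (by simpa using congrArg (fun f => f v) h0))).mp hn T
    rw [← hc]; simp [hf]
  rw [hρ]
  simp only [Representation.character]
  rw [map_mul]
  conv_lhs => rw [key (ρ x)]
  rw [smul_mul_assoc, map_smul, smul_eq_mul]
  rfl

lemma Irr.ne_triv_deg [IsSimpleGroup G] (hnc : ¬ ∀ x y : G, x * y = y * x) (χ : Irr G)
    (h : χ ≠ trivIrr) : 2 ≤ χ.deg := by
  by_contra hlt
  have h1 : χ.deg = 1 := by have := χ.deg_pos; omega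
  apply hnc
  intro x y
  have hm := χ.mul_of_deg_one h1
  have hone : χ.1 1 = 1 := by rw [χ.one_eq, h1]; simp
  have hi : ∀ a, χ.1 a * χ.1 a⁻¹ = 1 := fun a => by rw [← hm, mul_inv_cancel, hone]
  have hz : χ.1 (x * y * x⁻¹ * y⁻¹) = 1 := by
    rw [hm, hm, hm]
    linear_combination (hi y) * (χ.1 x * χ.1 x⁻¹) + hi x
  have := faithful' χ h (x * y * x⁻¹ * y⁻¹) (by
    intro n
    induction n with
    | zero => simp
    | succ n ih => rw [pow_succ, hm, hz, ih, mul_one])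
  have h5 : x * y = (x * y * x⁻¹ * y⁻¹) * (y * x) := by group
  rw [h5, this, one_mul]

end scal

end part5

section part6
set_option linter.all false
open scoped ComplexConjugate
open Finset

noncomputable instance (priority := 2000) subFin {G : Type} [Group G] [Finite G] (B : Subgroup G) :
    Fintype B := Fintype.ofFinite B

section ti
variable {G : Type} [Group G]

/-- automorphisms act on irreducible characters -/
def Irr.comap {H : Type} [Group H] [Finite H] [Finite G] (χ : Irr G) (e : H ≃* G) : Irr H :=
  ⟨fun x => χ.1 (e x), by
    classical
    let _ := Fintype.ofFinite H
    let _ := Fintype.ofFinite G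
    apply isIrrChar_of_ip (χ.isCh.comp e.toMonoidHom)
    have := χ.2.ip_self
    rw [← this]
    simp only [ip]
    congr 1
    · simp [Fintype.card_congr e.toEquiv]
    · exact Equiv.sum_comp e.toEquiv (fun g => χ.1 g * conj (χ.1 g))⟩

noncomputable instance nact [Finite G] (B : Subgroup G) :
    MulAction (Subgroup.normalizer (B : Set G)) (Irr B) where
  smul h ψ := ψ.comap (MulDistribMulAction.toMulAut (Subgroup.normalizer (B : Set G)) B h⁻¹)
  one_smul ψ := by
    apply Subtype.ext; funext x
    change ψ.1 (((1 : Subgroup.normalizer (B : Set G))⁻¹) • x) = ψ.1 x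
    rw [inv_one, one_smul]
  mul_smul a b ψ := by
    apply Subtype.ext; funext x
    change ψ.1 ((a * b)⁻¹ • x) = ψ.1 (b⁻¹ • (a⁻¹ • x))
    rw [mul_inv_rev, mul_smul]

lemma nact_apply [Finite G] (B : Subgroup G) (h : Subgroup.normalizer (B : Set G)) (ψ : Irr B) (x : B) :
    (h • ψ).1 x = ψ.1 (h⁻¹ • x) := rfl

variable [Fintype G]

/-- restriction -/
def res (B : Subgroup G) (f : G → ℂ) : B → ℂ := fun x => f x

lemma IsCh.res {f : G → ℂ} (h : IsCh G f) (B : Subgroup G) : IsCh B (res B f) := h.comp B.subtype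

open Classical in
lemma ti_sum0 (B : Subgroup G) (f f' : B → ℂ) :
    ∑ χ : Irr G, ip f (res B χ.1) * conj (ip f' (res B χ.1)) =
      (Fintype.card B : ℂ)⁻¹ * (Fintype.card B : ℂ)⁻¹ *
        ∑ x : B, ∑ h : G, f x * (if hh : h * x * h⁻¹ ∈ B then conj (f' ⟨_, hh⟩) else 0) := by
  have h1 : ∀ χ : Irr G, ip f (res B χ.1) * conj (ip f' (res B χ.1)) =
     (Fintype.card B : ℂ)⁻¹ * (Fintype.card B : ℂ)⁻¹ *
        ∑ x : B, ∑ y : B, f x * conj (f' y) * (conj (χ.1 x) * χ.1 y) := by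
    intro χ
    simp only [ip, res, map_mul, map_sum, map_inv₀, map_natCast, Complex.conj_conj]
    rw [mul_mul_mul_comm, sum_mul_sum]
    congr 1
    exact sum_congr rfl fun _ _ => sum_congr rfl fun _ _ => by ring
  simp only [h1, ← mul_sum]
  congr 1
  rw [sum_comm]
  refine sum_congr rfl fun x _ => ?_
  rw [sum_comm]
  have h2 : ∀ y : B, ∑ χ : Irr G, f x * conj (f' y) * (conj (χ.1 x) * χ.1 y) =
      ∑ h : G, f x * (if h * x * h⁻¹ = y then conj (f' y) else 0) := by
    intro y
    rw [← mul_sum]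
    have := congrArg conj (col_orth (x : G) (y : G))
    simp only [map_sum, map_mul, Complex.conj_conj, map_natCast] at this
    rw [this, card_filter]
    push_cast
    rw [mul_sum]
    refine sum_congr rfl fun h _ => ?_
    split_ifs <;> simp
  rw [sum_congr rfl (fun y _ => h2 y), sum_comm]
  rw [mul_sum]
  refine sum_congr rfl fun h _ => ?_
  rw [← mul_sum]
  congr 1
  split_ifs with hh
  · rw [sum_eq_single ⟨_, hh⟩]
    · simp
    · intro b _ hb
      rw [if_neg]
      rintro h3; apply hb; ext; exact h3.symm
    · simp
  · apply sum_eq_zero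
    intro y _
    rw [if_neg]
    intro h3; apply hh; rw [h3]; exact y.2

lemma ti_sum (B : Subgroup G) (f f' : B → ℂ)
    (hTI : ∀ x : B, f x ≠ 0 → ∀ h : G, h * x * h⁻¹ ∈ B → h ∈ Subgroup.normalizer (B : Set G)) :
    ∑ χ : Irr G, ip f (res B χ.1) * conj (ip f' (res B χ.1)) =
      (Fintype.card B : ℂ)⁻¹ * ∑ h : Subgroup.normalizer (B : Set G),
        ip f (fun x => f' (h • x)) := by
  classical
  rw [ti_sum0, mul_assoc]
  congr 1
  simp only [ip]
  rw [← mul_sum]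
  congr 1
  rw [sum_comm (s := (univ : Finset (Subgroup.normalizer (B : Set G))))]
  refine sum_congr rfl fun x _ => ?_
  by_cases hx : f x = 0
  · simp [hx]
  rw [← mul_sum, ← mul_sum]
  congr 1
  have h0 : ∀ h : G, h ∉ Subgroup.normalizer (B : Set G) →
      (if hh : h * x * h⁻¹ ∈ B then conj (f' ⟨_, hh⟩) else 0) = 0 := by
    intro h hh
    rw [dif_neg]
    intro h3
    exact hh (hTI x hx h h3)
  rw [← sum_filter_add_sum_filter_not univ (fun h => h ∈ Subgroup.normalizer (B : Set G)),
    sum_eq_zero (s := filter _ _) (f := fun h : G => _) (fun h hh => h0 h (mem_filter.1 hh).2), add_zero,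
    ← Finset.sum_subtype_eq_sum_filter]
  have hu : (Finset.subtype (fun h => h ∈ Subgroup.normalizer (B : Set G)) univ) = univ := by
    ext; simp
  refine sum_bij' (fun a _ => a) (fun a _ => a) ?_ ?_ ?_ ?_ ?_ <;> try simp
  intro a ha
  have : a * x * a⁻¹ ∈ B := (Subgroup.mem_normalizer_iff.1 ha _).1 x.2
  rw [dif_pos this]
  rfl

lemma sum_ip_deg (B : Subgroup G) (f : B → ℂ) (hf : f 1 = 0) :
    ∑ χ : Irr G, ip f (res B χ.1) * χ.deg = 0 := by
  classical
  simp only [ip, res, ← Irr.one_eq, mul_assoc, ← mul_sum, sum_mul]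
  rw [sum_comm]
  have : ∀ x : B, ∑ χ : Irr G, f x * (conj (χ.1 x) * χ.1 1) = 0 := by
    intro x
    rw [← mul_sum]
    by_cases hx : x = 1
    · rw [hx, hf, zero_mul]
    · have := col_orth (1 : G) (x : G)
      simp only [mul_one, mul_inv_cancel] at this
      rw [filter_false_of_mem] at this
      · simp only [card_empty, Nat.cast_zero] at this
        simp only [mul_comm (conj _)]
        rw [this, mul_zero]
      · intro _ _ h; apply hx; ext; exact h.symm
  simp [this]


lemma nact_ip (B : Subgroup G) (h : Subgroup.normalizer (B : Set G)) (ψ φ : Irr B) :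
    ip ψ.1 (fun x => φ.1 (h • x)) = if h • ψ = φ then 1 else 0 := by
  have : (fun x => φ.1 (h • x)) = (h⁻¹ • φ).1 := by
    funext x; rw [nact_apply, inv_inv]
  rw [this, ip_irr]
  simp only [eq_inv_smul_iff]

/-- counting transporters -/
noncomputable def cnt (B : Subgroup G) (ψ φ : Irr B) : ℕ :=
  #{h : Subgroup.normalizer (B : Set G) | h • ψ = φ}

/-- difference multiplicity -/
noncomputable def bet (B : Subgroup G) (ψ ψ' : Irr B) (χ : Irr G) : ℤ :=
  (mult (res B χ.1) ψ : ℤ) - mult (res B χ.1) ψ'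

lemma ip_bet (B : Subgroup G) (ψ ψ' : Irr B) (χ : Irr G) :
    ip (ψ.1 - ψ'.1) (res B χ.1) = (bet B ψ ψ' χ : ℂ) := by
  rw [ip_sub_left, ← ip_conj, ← ip_conj _ ψ'.1, (χ.isCh.res B).ip_mult, (χ.isCh.res B).ip_mult]
  simp [bet]

lemma bet_ip (B : Subgroup G) (ψ ψ' φ φ' : Irr B)
    (hTI : ∀ x : B, ψ.1 x ≠ ψ'.1 x → ∀ h : G, h * x * h⁻¹ ∈ B →
      h ∈ Subgroup.normalizer (B : Set G)) :
    (Fintype.card B : ℤ) * ∑ χ : Irr G, bet B ψ ψ' χ * bet B φ φ' χ =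
      cnt B ψ φ - cnt B ψ φ' - cnt B ψ' φ + cnt B ψ' φ' := by
  have h := ti_sum B (ψ.1 - ψ'.1) (φ.1 - φ'.1) (fun x hx => hTI x (by
    intro h; apply hx; simp [h]))
  simp only [ip_bet] at h
  have h2 : ∀ h : Subgroup.normalizer (B : Set G), ip (ψ.1 - ψ'.1) (fun x => (φ.1 - φ'.1) (h • x)) =
     ((if h • ψ = φ then 1 else 0) - (if h • ψ = φ' then 1 else 0) - ((if h • ψ' = φ then 1 else 0) - (if h • ψ' = φ' then 1 else 0)) : ℂ) := by
    intro h
    rw [show (fun x => (φ.1 - φ'.1) (h • x)) = (fun x => φ.1 (h • x)) - (fun x => φ'.1 (h • x)) from rfl]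
    rw [ip_sub_left, ip_sub_right, ip_sub_right, nact_ip, nact_ip, nact_ip, nact_ip]
  simp only [h2, sum_sub_distrib] at h
  have h3 : (Fintype.card B : ℂ) * ∑ χ : Irr G, (bet B ψ ψ' χ : ℂ) * (bet B φ φ' χ : ℂ) =
      cnt B ψ φ - cnt B ψ φ' - cnt B ψ' φ + cnt B ψ' φ' := by
    simp only [map_intCast] at h
    rw [h, mul_inv_cancel_left₀ cardG_ne]
    simp only [cnt, card_filter]
    push_cast
    ring
  exact_mod_cast h3

lemma bet_deg (B : Subgroup G) (ψ ψ' : Irr B) (hd : ψ.deg = ψ'.deg) :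
    ∑ χ : Irr G, bet B ψ ψ' χ * χ.deg = 0 := by
  have := sum_ip_deg B (ψ.1 - ψ'.1) (by simp [Irr.one_eq, hd])
  simp only [ip_bet] at this
  exact_mod_cast this

end ti

end part6

section part7
set_option linter.all false
open scoped ComplexConjugate
open Finset

section pure
variable {I : Type} [Fintype I]

lemma two_sq (β : I → ℤ) (d : I → ℕ) (hd : ∀ i, 0 < d i) (h2 : ∑ i, β i ^ 2 = 2)
    (h0 : ∑ i, β i * d i = 0) (i : I) (hi : 0 < β i) :
    ∃ j, j ≠ i ∧ β i = 1 ∧ β j = -1 ∧ ∀ k, k ≠ i → k ≠ j → β k = 0 := by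
  classical
  have hj : ∃ j, β j < 0 := by
    by_contra hcon
    push Not at hcon
    have : 0 < ∑ i, β i * d i := by
      apply sum_pos' (fun k _ => mul_nonneg (hcon k) (by positivity))
      exact ⟨i, mem_univ _, mul_pos hi (by exact_mod_cast hd i)⟩
    omega
  obtain ⟨j, hj⟩ := hj
  have hij : j ≠ i := by rintro rfl; omega
  have h3 : ∑ k ∈ univ \ {i, j}, β k ^ 2 + (β i ^ 2 + β j ^ 2) = 2 := by
    rw [← h2, ← sum_sdiff (subset_univ ({i, j} : Finset I)), sum_pair hij.symm]
  have h4 : 0 ≤ ∑ k ∈ univ \ {i, j}, β k ^ 2 := sum_nonneg fun k _ => sq_nonneg _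
  have h5 : β i = 1 := by nlinarith
  have h6 : β j = -1 := by nlinarith
  refine ⟨j, hij, h5, h6, fun k hki hkj => ?_⟩
  have h7 : ∑ k ∈ univ \ {i, j}, β k ^ 2 = 0 := by rw [h5, h6] at h3; linarith
  rw [sum_eq_zero_iff_of_nonneg (fun k _ => sq_nonneg _)] at h7
  have := h7 k (by simp [hki, hkj])
  exact pow_eq_zero_iff (two_ne_zero) |>.1 this

lemma two_sq_orth (β γ : I → ℤ) (d : I → ℕ) (hd : ∀ i, 0 < d i) (h2 : ∑ i, β i ^ 2 = 2)
    (h0 : ∑ i, β i * d i = 0) (h2' : ∑ i, γ i ^ 2 = 2) (h0' : ∑ i, γ i * d i = 0)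
    (ho : ∑ i, β i * γ i = 0) (i : I) (hi : 0 < β i) (hi' : 0 < γ i) : False := by
  classical
  obtain ⟨j, hj, b1, b2, b3⟩ := two_sq β d hd h2 h0 i hi
  obtain ⟨j', hj', c1, c2, c3⟩ := two_sq γ d hd h2' h0' i hi'
  have : ∑ i, β i * γ i = β i * γ i + β j * γ j := by
    rw [← sum_pair (f := fun i => β i * γ i) hj.symm]
    symm
    apply sum_subset (subset_univ _)
    intro k _ hk
    simp only [mem_insert, mem_singleton, not_or] at hk
    rw [b3 k hk.1 hk.2, zero_mul]
  rw [ho, b1, c1, b2] at this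
  by_cases hjj : j = j'
  · rw [hjj, c2] at this; omega
  · rw [c3 j hj hjj] at this; omega

end pure

section fam
variable {G : Type} [Group G] [Fintype G]

lemma cnt_zero (B : Subgroup G) (ψ φ : Irr B)
    (h : ∀ n : Subgroup.normalizer (B : Set G), n • ψ ≠ φ) : cnt B ψ φ = 0 := by
  rw [cnt, card_eq_zero, filter_eq_empty_iff]
  intro n _; exact h n

/-- the pair has TI support -/
def Linked (B : Subgroup G) (ψ ψ' : Irr B) : Prop :=
  ψ.deg = ψ'.deg ∧ ∀ x : B, ψ.1 x ≠ ψ'.1 x → ∀ h : G, h * x * h⁻¹ ∈ B →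
      h ∈ Subgroup.normalizer (B : Set G)

/-- not conjugate -/
def NC (B : Subgroup G) (ψ φ : Irr B) : Prop := ∀ n : Subgroup.normalizer (B : Set G), n • ψ ≠ φ

lemma NC.symm {B : Subgroup G} {ψ φ : Irr B} (h : NC B ψ φ) : NC B φ ψ := by
  intro n hn
  apply h n⁻¹
  rw [← hn, inv_smul_smul]

lemma bet_norm (B : Subgroup G) (ψ ψ' : Irr B) (hL : Linked B ψ ψ') (hn : NC B ψ ψ') :
    (Fintype.card B : ℤ) * ∑ χ : Irr G, bet B ψ ψ' χ ^ 2 = cnt B ψ ψ + cnt B ψ' ψ' := by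
  have := bet_ip B ψ ψ' ψ ψ' hL.2
  rw [cnt_zero B ψ ψ' hn, cnt_zero B ψ' ψ hn.symm] at this
  simp only [pow_two]
  rw [this]; simp

lemma bet_norm2 (B : Subgroup G) (ψ ψ' : Irr B) (hL : Linked B ψ ψ') (hn : NC B ψ ψ')
    (h1 : cnt B ψ ψ = Fintype.card B) (h2 : cnt B ψ' ψ' = Fintype.card B) :
    ∑ χ : Irr G, bet B ψ ψ' χ ^ 2 = 2 := by
  have := bet_norm B ψ ψ' hL hn
  rw [h1, h2] at this
  have hp : (0 : ℤ) < Fintype.card B := by exact_mod_cast Fintype.card_pos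
  nlinarith

lemma bet_swap (B : Subgroup G) (ψ ψ' : Irr B) (χ : Irr G) : bet B ψ ψ' χ = - bet B ψ' ψ χ := by
  simp [bet]

lemma bet_le_one (B : Subgroup G) (ψ ψ' : Irr B) (hL : Linked B ψ ψ') (hn : NC B ψ ψ')
    (h1 : cnt B ψ ψ = Fintype.card B) (h2 : cnt B ψ' ψ' = Fintype.card B) (χ : Irr G) :
    bet B ψ ψ' χ ≤ 1 := by
  by_contra hc
  push Not at hc
  obtain ⟨j, _, h, _⟩ := two_sq _ Irr.deg Irr.deg_pos (bet_norm2 B ψ ψ' hL hn h1 h2)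
    (bet_deg B ψ ψ' hL.1) χ (by omega)
  omega

lemma bet_orth (B : Subgroup G) (ψ ψ' φ φ' : Irr B) (hL : Linked B ψ ψ') (hL' : Linked B φ φ')
    (hn : NC B ψ ψ') (hn' : NC B φ φ') (ha : NC B ψ φ) (hb : NC B ψ φ') (hc : NC B ψ' φ)
    (hd : NC B ψ' φ')
    (h1 : cnt B ψ ψ = Fintype.card B) (h2 : cnt B ψ' ψ' = Fintype.card B)
    (h3 : cnt B φ φ = Fintype.card B) (h4 : cnt B φ' φ' = Fintype.card B) (χ : Irr G)
    (hp : 0 < bet B ψ ψ' χ) (hp' : 0 < bet B φ φ' χ) : False := by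
  apply two_sq_orth _ _ Irr.deg Irr.deg_pos (bet_norm2 B ψ ψ' hL hn h1 h2)
    (bet_deg B ψ ψ' hL.1) (bet_norm2 B φ φ' hL' hn' h3 h4) (bet_deg B φ φ' hL'.1) ?_ χ hp hp'
  have := bet_ip B ψ ψ' φ φ' hL.2
  rw [cnt_zero _ _ _ ha, cnt_zero _ _ _ hb, cnt_zero _ _ _ hc, cnt_zero _ _ _ hd] at this
  have hp : (Fintype.card B : ℤ) ≠ 0 := by simp
  simpa using this

/-- twisting by a linear character -/
noncomputable def Irr.tw (ψ : Irr G) (l : G →* ℂˣ) : Irr G :=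
  ⟨fun x => ψ.1 x * l x, by
    apply isIrrChar_of_ip (ψ.isCh.mul (isCh_lin l))
    rw [← ψ.2.ip_self]
    simp only [ip]
    congr 1
    refine sum_congr rfl fun x _ => ?_
    have : (l x : ℂ) * conj (l x : ℂ) = 1 := by
      rw [← (isCh_lin l).conj, map_inv]; simp
    rw [map_mul, mul_mul_mul_comm, this, mul_one]⟩

lemma Irr.tw_apply (ψ : Irr G) (l : G →* ℂˣ) (x : G) : (ψ.tw l).1 x = ψ.1 x * l x := rfl

lemma Irr.tw_deg (ψ : Irr G) (l : G →* ℂˣ) : (ψ.tw l).deg = ψ.deg := by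
  have := (ψ.tw l).one_eq
  rw [tw_apply, map_one, ψ.one_eq] at this
  simpa using this.symm

lemma scal_of_res_irr {χ : G → ℂ} (h : IsCh G χ) (B : Subgroup G) (ψ : Irr B) (hψ : res B χ = ψ.1)
    (g : G) (hg : ∀ b ∈ B, g * b = b * g) : ∃ ω : ℂ, ∀ x, χ (g * x) = ω * χ x := by
  obtain ⟨V, _, _, _, ρ, hρ⟩ := h
  have hn := ψ.2.norm
  rw [← hψ] at hn
  let σ : Representation ℂ B V := MonoidHom.comp ρ B.subtype
  obtain ⟨ω, hω⟩ := schur_scalar σ (by rw [← hn, hρ]; rfl) (ρ g) (by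
    intro b
    change ρ g ∘ₗ ρ b = ρ b ∘ₗ ρ g
    rw [← Module.End.mul_eq_comp, ← Module.End.mul_eq_comp, ← map_mul, ← map_mul, hg _ b.2])
  refine ⟨ω, fun x => ?_⟩
  rw [hρ]
  simp only [Representation.character]
  rw [map_mul, hω, Module.End.mul_eq_comp, LinearMap.smul_comp, LinearMap.id_comp, map_smul]
  rfl

lemma mult_pos_of {θ : G → ℂ} (h : IsCh G θ) (h0 : θ 1 ≠ 0) : ∃ ψ : Irr G, 0 < mult θ ψ := by
  by_contra hc
  push Not at hc
  apply h0
  rw [h.expand 1]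
  apply sum_eq_zero
  intro χ _
  have := hc χ
  simp [Nat.le_zero.1 this]

/-- sum of a subfamily of constituents bounded by the degree -/
lemma deg_ge_sum (B : Subgroup G) (χ : Irr G) (T : Finset (Irr B)) :
    ∑ ψ ∈ T, mult (res B χ.1) ψ * ψ.deg ≤ χ.deg := by
  have := (χ.isCh.res B).deg_expand (n := χ.deg) χ.one_eq
  rw [this]
  exact sum_le_sum_of_subset (subset_univ _)

end fam

end part7

section part8
set_option linter.all false
open scoped ComplexConjugate
open Finset

section lemA
variable {H : Type} [Group H] [Fintype H]

lemma eq_one_of_coprime_pow {M : Type} [Monoid M] {c : M} {a b : ℕ} (ha : c ^ a = 1) (hb : c ^ b = 1)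
    (h : a.Coprime b) : c = 1 := by
  rw [← orderOf_eq_one_iff]
  exact Nat.eq_one_of_dvd_coprimes h (orderOf_dvd_of_pow_eq_one ha) (orderOf_dvd_of_pow_eq_one hb)

lemma pow_card_sub (K : Subgroup H) {c : H} (hc : c ∈ K) : c ^ Nat.card K = 1 := by
  have := pow_card_eq_one' (x := (⟨c, hc⟩ : K))
  exact congrArg Subtype.val this

lemma exists_lambda (K : Subgroup H) [K.Normal] (g : H) {p k : ℕ} (hp : p.Prime)
    (hg : orderOf g = p ^ (k + 1)) (hK : (Nat.card K).Coprime p)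
    (hgen : ∀ h : H, ∃ κ ∈ K, ∃ j : ℕ, h = κ * g ^ j) :
    ∃ l : H →* ℂˣ, (∀ κ ∈ K, l κ = 1) ∧ l g ≠ 1 ∧ (l g) ^ p = 1 := by
  have hcyc : IsCyclic (H ⧸ K) := by
    refine ⟨⟨(g : H ⧸ K), fun q => ?_⟩⟩
    induction q using QuotientGroup.induction_on with
    | H z =>
      obtain ⟨κ, hκ, j, rfl⟩ := hgen z
      refine ⟨j, ?_⟩
      simp only [zpow_natCast]
      rw [QuotientGroup.mk_mul, (QuotientGroup.eq_one_iff κ).2 hκ, one_mul, QuotientGroup.mk_pow]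
  let _ : CommGroup (H ⧸ K) := IsCyclic.commGroup
  have hne : ((g : H ⧸ K)) ^ p ^ k ≠ 1 := by
    rw [← QuotientGroup.mk_pow, Ne, QuotientGroup.eq_one_iff]
    intro hm
    have h1 : (g ^ p ^ k) ^ p = 1 := by rw [← pow_mul, ← pow_succ, ← hg, pow_orderOf_eq_one]
    have h2 := eq_one_of_coprime_pow (pow_card_sub K hm) h1 hK
    have h3 := orderOf_dvd_of_pow_eq_one h2
    rw [hg] at h3
    have := Nat.le_of_dvd (pow_pos hp.pos _) h3
    have := Nat.pow_lt_pow_right hp.one_lt (Nat.lt_add_one k)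
    omega
  obtain ⟨φ, hφ⟩ := CommGroup.exists_apply_ne_one_of_hasEnoughRootsOfUnity (H ⧸ K) ℂ hne
  refine ⟨(φ.comp (QuotientGroup.mk' K)) ^ (p ^ k), ?_, ?_, ?_⟩
  · intro κ hκ
    have : (QuotientGroup.mk' K) κ = 1 := (QuotientGroup.eq_one_iff κ).2 hκ
    simp only [MonoidHom.pow_apply, MonoidHom.comp_apply, this, map_one, one_pow]
  · simpa [MonoidHom.pow_apply, MonoidHom.comp_apply, ← map_pow] using hφ
  · simp only [MonoidHom.pow_apply, MonoidHom.comp_apply]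
    rw [← pow_mul, ← pow_succ, ← map_pow, ← map_pow, ← hg, pow_orderOf_eq_one, map_one, map_one]

lemma tw_injOn {B : Type} [Group B] [Fintype B] (ψ : Irr B) (l : B →* ℂˣ) (z : B)
    (hz : ∀ b, z * b = b * z) {p : ℕ} (hp : p.Prime) (h1 : l z ≠ 1) (h2 : (l z) ^ p = 1) :
    Set.InjOn (fun j : ℕ => ψ.tw (l ^ j)) (range p : Finset ℕ) := by
  intro i hi j hj hij
  simp only [coe_range, Set.mem_Iio] at hi hj
  have := congrFun (congrArg Subtype.val hij) z
  simp only [Irr.tw_apply] at this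
  obtain ⟨ω, hω⟩ := ψ.central z hz
  have hω0 : ω ≠ 0 := by
    intro h0
    have := ψ.scal_pow_eq_one hω (pow_card_eq_one' (x := z))
    rw [h0, zero_pow (by simp)] at this
    simp at this
  have h3 : ψ.1 z ≠ 0 := by
    have := hω 1
    rw [mul_one] at this
    rw [this]; exact mul_ne_zero hω0 ψ.one_ne
  have h4 := Units.ext (mul_left_cancel₀ h3 this)
  simp only [MonoidHom.pow_apply] at h4
  have h5 := orderOf_eq_prime h2 h1 (hp := ⟨hp⟩)
  rw [← h5] at hi hj
  exact pow_injOn_Iio_orderOf hi hj h4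

lemma lemA_abs (K : Subgroup H) [K.Normal] (g : H) {p k : ℕ} (hp : p.Prime)
    (hg : orderOf g = p ^ k) (hK : (Nat.card K).Coprime p)
    (hgen : ∀ h : H, ∃ κ ∈ K, ∃ j : ℕ, h = κ * g ^ j) (χ : Irr H) (hd : χ.deg < p - 1) :
    ∃ ω : ℂ, ∀ x, χ.1 (g * x) = ω * χ.1 x := by
  rcases k with _ | k
  · rw [pow_zero, orderOf_eq_one_iff] at hg
    exact ⟨1, by simp [hg]⟩
  obtain ⟨l, hl1, hl2, hl3⟩ := exists_lambda K g hp hg hK hgen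
  set C := Subgroup.centralizer ({g} : Set H) with hC
  have memC : ∀ x, x ∈ C ↔ x * g = g * x := fun x => Subgroup.mem_centralizer_singleton_iff
  have hgC : g ∈ C := (memC g).2 rfl
  have TI : ∀ y ∈ C, l y ≠ 1 → ∀ h, h * y * h⁻¹ ∈ C → h ∈ C := by
    intro y hy hly h hh
    obtain ⟨κ, hκ, j, rfl⟩ := hgen y
    have hj : ¬ p ∣ j := by
      rintro ⟨t, rfl⟩
      apply hly
      rw [map_mul, hl1 κ hκ, map_pow, pow_mul, hl3, one_pow, one_mul]
    have hκg : Commute κ (g ^ j) := by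
      have h1 : κ ∈ C := by
        have := C.mul_mem hy (C.inv_mem (C.pow_mem hgC j))
        rwa [mul_inv_cancel_right] at this
      exact Commute.pow_right ((memC κ).1 h1) j
    have hym : (κ * g ^ j) ^ Nat.card K = g ^ (j * Nat.card K) := by
      rw [hκg.mul_pow, pow_card_sub K hκ, one_mul, pow_mul]
    have hcop : (j * Nat.card K).Coprime (orderOf g) := by
      rw [hg]
      apply Nat.Coprime.pow_right
      exact Nat.Coprime.mul_left (Nat.Coprime.symm ((hp.coprime_iff_not_dvd).2 hj)) hK
    obtain ⟨t, ht⟩ := exists_pow_eq_self_of_coprime hcop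
    have h5 : h * g * h⁻¹ ∈ C := by
      rw [← hym, ← pow_mul] at ht
      rw [← ht, ← conj_pow]
      exact C.pow_mem hh _
    obtain ⟨κ', hκ', i, rfl⟩ := hgen h
    have h6 : κ' * g ^ i * g * (κ' * g ^ i)⁻¹ = κ' * (g * κ'⁻¹ * g⁻¹) * g := by group
    rw [h6] at h5
    set c := κ' * (g * κ'⁻¹ * g⁻¹) with hc
    have hcK : c ∈ K := K.mul_mem hκ' (Subgroup.Normal.conj_mem inferInstance _ (K.inv_mem hκ') g)
    have hcC : c ∈ C := by
      have := C.mul_mem h5 (C.inv_mem hgC)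
      rwa [mul_inv_cancel_right] at this
    have hcg : Commute c g := (memC c).1 hcC
    have h7 : c ^ p ^ (k + 1) = 1 := by
      have h8 : (c * g) ^ p ^ (k + 1) = 1 := by
        rw [← h6, conj_pow, ← hg, pow_orderOf_eq_one]; group
      rw [hcg.mul_pow, ← hg, pow_orderOf_eq_one, mul_one, hg] at h8
      exact h8
    have h9 := eq_one_of_coprime_pow (pow_card_sub K hcK) h7 (Nat.Coprime.pow_right _ hK)
    rw [h9, one_mul] at h6
    rw [memC]
    rw [mul_inv_eq_iff_eq_mul] at h6
    exact h6
  have hnC : Subgroup.normalizer (C : Set H) = C := by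
    apply le_antisymm _ Subgroup.le_normalizer
    intro h hh
    exact TI g hgC hl2 h ((Subgroup.mem_normalizer_iff.1 hh g).1 hgC)
  have hact : ∀ (n : Subgroup.normalizer (C : Set H)) (ψ : Irr C), n • ψ = ψ := by
    intro n ψ
    apply Subtype.ext; funext x
    rw [nact_apply]
    have hn : (n : H) ∈ C := hnC.le n.2
    have := ψ.isCh.conj_inv (⟨n, hn⟩⁻¹ : C) x
    rw [← this]
    congr 1
  have hNC : ∀ ψ φ : Irr C, ψ ≠ φ → NC C ψ φ := fun ψ φ h n => by rw [hact]; exact h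
  have hcnt : ∀ ψ : Irr C, cnt C ψ ψ = Fintype.card C := by
    intro ψ
    rw [cnt, filter_true_of_mem (fun n _ => hact n ψ), card_univ]
    rw [← Nat.card_eq_fintype_card, ← Nat.card_eq_fintype_card, hnC]
  let lC : C →* ℂˣ := l.comp C.subtype
  have hlink : ∀ (ψ : Irr C) (j : ℕ), Linked C ψ (ψ.tw (lC ^ j)) := by
    intro ψ j
    refine ⟨(ψ.tw_deg _).symm, fun x hx h hh => ?_⟩
    rw [hnC]
    apply TI x x.2 _ h hh
    intro h1
    apply hx
    rw [Irr.tw_apply, MonoidHom.pow_apply]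
    have : lC x = 1 := h1
    rw [this]; simp
  have zeros : ∀ ψ : Irr C, 0 < mult (res C χ.1) ψ → ∃ ψ1 ψ2, ψ1 ≠ ψ2 ∧ mult (res C χ.1) ψ1 = 0 ∧
      mult (res C χ.1) ψ2 = 0 ∧ Linked C ψ ψ1 ∧ Linked C ψ ψ2 := by
    intro ψ hψ
    have hinj := tw_injOn ψ lC ⟨g, hgC⟩ (fun b => by
      apply Subtype.ext
      exact ((memC b).1 b.2).symm) hp (by exact hl2) (by exact hl3)
    have h1 : 1 < #{j ∈ range p | mult (res C χ.1) (ψ.tw (lC ^ j)) = 0} := by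
      by_contra hcon
      push Not at hcon
      have h2 := deg_ge_sum C χ ((range p).image fun j => ψ.tw (lC ^ j))
      rw [sum_image hinj] at h2
      have h3 : #{j ∈ range p | ¬ mult (res C χ.1) (ψ.tw (lC ^ j)) = 0} ≤
          ∑ x ∈ range p, mult (res C χ.1) (ψ.tw (lC ^ x)) * (ψ.tw (lC ^ x)).deg := by
        rw [card_filter]
        apply sum_le_sum
        intro i _
        split_ifs with h
        · exact Nat.zero_le _
        · exact Nat.mul_pos (Nat.pos_of_ne_zero h) (ψ.tw (lC ^ i)).deg_pos
      have h4 := card_filter_add_card_filter_not (s := range p)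
        (fun j => mult (res C χ.1) (ψ.tw (lC ^ j)) = 0)
      rw [card_range] at h4
      omega
    obtain ⟨a, ha, b, hb, hab⟩ := one_lt_card.1 h1
    rw [mem_filter] at ha hb
    exact ⟨_, _, fun h => hab (hinj (by simpa using ha.1) (by simpa using hb.1) h), ha.2, hb.2,
      hlink _ _, hlink _ _⟩
  have uniq : ∀ ψ φ : Irr C, 0 < mult (res C χ.1) ψ → 0 < mult (res C χ.1) φ → ψ = φ := by
    intro ψ φ hψ hφ
    by_contra hne
    obtain ⟨ψ1, _, _, hz, _, hL, _⟩ := zeros ψ hψ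
    obtain ⟨φ1, hn1, hz1, hL1⟩ : ∃ φ1, φ1 ≠ ψ1 ∧ mult (res C χ.1) φ1 = 0 ∧ Linked C φ φ1 := by
      obtain ⟨φ1, φ2, h12, hz1, hz2, hL1, hL2⟩ := zeros φ hφ
      by_cases h : φ1 = ψ1
      · exact ⟨φ2, fun h' => h12 (h.trans h'.symm), hz2, hL2⟩
      · exact ⟨φ1, h, hz1, hL1⟩
    have neq : ∀ a b : Irr C, 0 < mult (res C χ.1) a → mult (res C χ.1) b = 0 → a ≠ b := by
      rintro a b ha hb rfl; omega
    exact bet_orth C ψ ψ1 φ φ1 hL hL1 (hNC _ _ (neq _ _ hψ hz)) (hNC _ _ (neq _ _ hφ hz1))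
      (hNC _ _ hne) (hNC _ _ (neq _ _ hψ hz1)) (hNC _ _ (neq _ _ hφ hz).symm) (hNC _ _ hn1.symm)
      (hcnt _) (hcnt _) (hcnt _) (hcnt _) χ (by simp only [bet]; omega) (by simp only [bet]; omega)
  obtain ⟨ψ, hψ⟩ := mult_pos_of (χ.isCh.res C) (by exact χ.one_ne)
  have hm1 : mult (res C χ.1) ψ = 1 := by
    obtain ⟨ψ1, _, _, hz, _, hL, _⟩ := zeros ψ hψ
    have := bet_le_one C ψ ψ1 hL (hNC _ _ (by rintro rfl; omega)) (hcnt _) (hcnt _) χ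
    simp only [bet, hz] at this
    omega
  apply scal_of_res_irr χ.isCh C ψ
  · funext x
    rw [(χ.isCh.res C).expand x, sum_eq_single ψ]
    · simp [hm1]
    · intro b _ hb
      have : mult (res C χ.1) b = 0 := by
        by_contra h
        exact hb (uniq _ _ (Nat.pos_of_ne_zero h) hψ)
      simp [this]
    · simp
  · intro b hb
    exact ((memC b).1 hb).symm

end lemA

end part8

section part9
set_option linter.all false
open scoped ComplexConjugate
open Finset
open scoped Pointwise commutatorElement

section step2
variable {S : Type} [Group S] [Fintype S]

lemma mult_deg_le (B : Subgroup S) (χ : Irr S) (ψ : Irr B) (h : 0 < mult (res B χ.1) ψ) :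
    ψ.deg ≤ χ.deg := by
  have := deg_ge_sum B χ {ψ}
  rw [sum_singleton] at this
  nlinarith [ψ.deg_pos]

lemma faithful_res [IsSimpleGroup S] (χ : Irr S) (hχ : χ ≠ trivIrr) (B : Subgroup S) (z : B)
    (hz : ∀ ψ : Irr B, 0 < mult (res B χ.1) ψ → ∀ x, ψ.1 (z * x) = ψ.1 x) : z = 1 := by
  have h1 : ∀ n : ℕ, χ.1 ((z : S) ^ n) = χ.1 1 := by
    intro n
    have e1 := (χ.isCh.res B).expand (z ^ n)
    have e2 := (χ.isCh.res B).expand 1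
    have e3 : res B χ.1 (z ^ n) = res B χ.1 1 := by
      rw [e1, e2]
      refine sum_congr rfl fun ψ _ => ?_
      rcases Nat.eq_zero_or_pos (mult (res B χ.1) ψ) with h | h
      · simp [h]
      · congr 1
        have h3 := ψ.pow_scal (z := z) (ω := 1) (by simpa using hz ψ h) n 1
        simpa using h3
    exact e3
  have := faithful' χ hχ (z : S) h1
  exact Subtype.ext this

lemma exists_comm_center {P : Type} [Group P] [Finite P] {p : ℕ} (hp : p.Prime) (hP : IsPGroup p P)
    (hn : ¬ ∀ x y : P, x * y = y * x) : ∃ z ∈ commutator P, z ∈ Subgroup.center P ∧ z ≠ 1 := by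
  have : Fact p.Prime := ⟨hp⟩
  have hQ : IsPGroup p (P ⧸ Subgroup.center P) := hP.to_quotient _
  have : Nontrivial (P ⧸ Subgroup.center P) := by
    rw [← not_subsingleton_iff_nontrivial]
    intro hs
    have h : Subgroup.center P = ⊤ := by
      rw [Subgroup.eq_top_iff']
      intro x
      rw [← QuotientGroup.eq_one_iff]
      exact Subsingleton.elim _ _
    apply hn
    intro x y
    have : y ∈ Subgroup.center P := by rw [h]; trivial
    exact Subgroup.mem_center_iff.1 this x
  obtain ⟨q', hq'⟩ := Subgroup.ne_bot_iff_exists_ne_one.1 hQ.bot_lt_center.ne'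
  obtain ⟨q, hq⟩ := q'
  have hq1 : q ≠ 1 := fun h => hq' (Subtype.ext h)
  obtain ⟨x, hx⟩ := QuotientGroup.mk_surjective q
  rw [← hx] at hq hq1
  rw [Ne, QuotientGroup.eq_one_iff, Subgroup.mem_center_iff] at hq1
  push Not at hq1
  obtain ⟨y, hy⟩ := hq1
  refine ⟨⁅y, x⁆, ?_, ?_, ?_⟩
  · rw [commutator_def]
    exact Subgroup.commutator_mem_commutator (Subgroup.mem_top _) (Subgroup.mem_top _)
  · rw [← QuotientGroup.eq_one_iff]
    rw [commutatorElement_def]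
    have := Subgroup.mem_center_iff.1 hq (y : P ⧸ Subgroup.center P)
    simp only [QuotientGroup.mk_mul, QuotientGroup.mk_inv]
    rw [this]; group
  · intro h
    rw [commutatorElement_eq_one_iff_mul_comm] at h
    exact hy h

lemma pgroup_abelian [IsSimpleGroup S] (χ : Irr S) (hχ : χ ≠ trivIrr) {p : ℕ} (hp : p.Prime)
    (hd : χ.deg < p) (P : Subgroup S) (hP : IsPGroup p P) : ∀ x ∈ P, ∀ y ∈ P, x * y = y * x := by
  by_contra hcon
  obtain ⟨z, hz, hzc, hz1⟩ := exists_comm_center hp hP (fun h => hcon (fun x hx y hy =>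
    congrArg Subtype.val (h ⟨x, hx⟩ ⟨y, hy⟩)))
  apply hz1
  apply faithful_res χ hχ P z
  intro ψ hψ
  obtain ⟨ω, h1, h2⟩ := ψ.central_det z (fun g => (Subgroup.mem_center_iff.1 hzc g).symm)
  have h3 := h2 hz
  obtain ⟨k, hk⟩ := hP z
  have h4 := ψ.scal_pow_eq_one h1 hk
  have h5 := mult_deg_le P χ ψ hψ
  have h6 : ω = 1 := by
    apply eq_one_of_coprime_pow h3 h4
    apply Nat.Coprime.pow_right
    rw [Nat.coprime_comm, hp.coprime_iff_not_dvd]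
    intro h
    have := Nat.le_of_dvd ψ.deg_pos h
    omega
  intro x
  rw [h1, h6, one_mul]

lemma lemA [IsSimpleGroup S] (χ : Irr S) (hχ : χ ≠ trivIrr) {p k : ℕ} (hp : p.Prime)
    (hd : χ.deg < p - 1) (K : Subgroup S) (hK : (Nat.card K).Coprime p) (g : S)
    (hg : g ^ p ^ k = 1) (hn : g ∈ Subgroup.normalizer (K : Set S)) : ∀ κ ∈ K, g * κ = κ * g := by
  intro κ hκ
  obtain ⟨k', _, hk'⟩ := (Nat.dvd_prime_pow hp).1 (orderOf_dvd_of_pow_eq_one hg)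
  set H := K ⊔ Subgroup.zpowers g with hH
  have hzn : Subgroup.zpowers g ≤ Subgroup.normalizer (K : Set S) := by
    rw [Subgroup.zpowers_le]; exact hn
  have hKH : K ≤ H := le_sup_left
  have hgH : g ∈ H := (le_sup_right : Subgroup.zpowers g ≤ H) (Subgroup.mem_zpowers g)
  have hHn : H ≤ Subgroup.normalizer (K : Set S) := sup_le Subgroup.le_normalizer hzn
  have hnorm : (K.subgroupOf H).Normal := (Subgroup.normal_subgroupOf_iff_le_normalizer hKH).2 hHn
  have hgen : ∀ h : H, ∃ κ ∈ K.subgroupOf H, ∃ j : ℕ, h = κ * ⟨g, hgH⟩ ^ j := by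
    intro h
    have h1 : (h : S) ∈ (K : Set S) * (Subgroup.zpowers g : Set S) := by
      rw [← Subgroup.coe_mul_of_right_le_normalizer_left _ _ hzn]
      exact h.2
    obtain ⟨a, ha, b, hb, hab⟩ := h1
    have hb' : b ∈ Subgroup.zpowers g := hb
    rw [← mem_powers_iff_mem_zpowers] at hb'
    obtain ⟨j, rfl⟩ := hb'
    exact ⟨⟨a, hKH ha⟩, ha, j, Subtype.ext hab.symm⟩
  have hcard : (Nat.card (K.subgroupOf H)).Coprime p := by
    rw [Nat.card_congr (Subgroup.subgroupOfEquivOfLe hKH).toEquiv]; exact hK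
  have ho : orderOf (⟨g, hgH⟩ : H) = p ^ k' := by rw [← hk', ← Subgroup.orderOf_coe]
  have key := faithful_res χ hχ H (⟨g, hgH⟩ * (⟨κ, hKH hκ⟩ * ⟨g, hgH⟩⁻¹ * ⟨κ, hKH hκ⟩⁻¹)) (by
    intro ψ hψ x
    obtain ⟨ω, hω⟩ := lemA_abs (K.subgroupOf H) ⟨g, hgH⟩ hp ho hcard hgen ψ
      (lt_of_le_of_lt (mult_deg_le H χ ψ hψ) hd)
    rw [mul_assoc, hω]
    set G : H := ⟨g, hgH⟩
    set k : H := ⟨κ, hKH hκ⟩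
    have e1 : ψ.1 (k * G⁻¹ * k⁻¹ * x) = ψ.1 (G⁻¹ * (k⁻¹ * x * k)) := by
      rw [← ψ.isCh.conj_inv k⁻¹ (k * G⁻¹ * k⁻¹ * x)]
      congr 1; group
    have e2 : ψ.1 x = ψ.1 (k⁻¹ * x * k) := by
      rw [← ψ.isCh.conj_inv k⁻¹ x, inv_inv]
    rw [e1, e2, ← hω, mul_inv_cancel_left])
  have k2 := congrArg Subtype.val key
  simp only [Subgroup.coe_mul, Subgroup.coe_inv, Subgroup.coe_one] at k2
  rw [← mul_assoc, ← mul_assoc, mul_inv_eq_one, mul_inv_eq_iff_eq_mul] at k2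
  exact k2

end step2

end part9

section part10
set_option linter.all false
open scoped ComplexConjugate
open Finset
open scoped Pointwise commutatorElement

/-- p-solvable subgroups, inductively -/
inductive PS (p : ℕ) {S : Type} [Group S] : Subgroup S → Prop
  | bot : PS p ⊥
  | step (K H : Subgroup S) (hKH : K ≤ H) (hn : H ≤ Subgroup.normalizer (K : Set S))
      (hq : (∃ m, K.relIndex H = p ^ m) ∨ (K.relIndex H).Coprime p) (hK : PS p K) : PS p H

/-- normal Sylow p-subgroup -/
structure NSyl (p : ℕ) {S : Type} [Group S] (O H : Subgroup S) : Prop where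
  le : O ≤ H
  pg : IsPGroup p O
  nm : H ≤ Subgroup.normalizer (O : Set S)
  cop : (O.relIndex H).Coprime p

section ito
variable {S : Type} [Group S] [Fintype S]

lemma NSyl.mem {p : ℕ} {O H : Subgroup S} (h : NSyl p O H) {x : S} (hx : x ∈ H) {k : ℕ}
    (hxk : x ^ p ^ k = 1) : x ∈ O := by
  have hnorm : (O.subgroupOf H).Normal := (Subgroup.normal_subgroupOf_iff_le_normalizer h.le).2 h.nm
  have h1 := Subgroup.pow_index_mem (O.subgroupOf H) ⟨x, hx⟩
  have h2 : x ^ (O.relIndex H) ∈ O := h1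
  have h3 : (x ^ (O.relIndex H)) ∈ Subgroup.zpowers x := Subgroup.pow_mem _ (Subgroup.mem_zpowers x) _
  have hc : (O.relIndex H).Coprime (orderOf x) := by
    apply Nat.Coprime.coprime_dvd_right (orderOf_dvd_of_pow_eq_one hxk)
    exact Nat.Coprime.pow_right _ h.cop
  obtain ⟨t, ht⟩ := exists_pow_eq_self_of_coprime hc
  rw [← ht]
  exact O.pow_mem h2 t

lemma IsPGroup.exists_pow' {p : ℕ} {P : Subgroup S} (h : IsPGroup p P) {x : S} (hx : x ∈ P) :
    ∃ k, x ^ p ^ k = 1 := by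
  obtain ⟨k, hk⟩ := h ⟨x, hx⟩
  exact ⟨k, congrArg Subtype.val hk⟩

lemma le_normalizer_of (O H : Subgroup S) (h : ∀ x ∈ H, ∀ o ∈ O, x * o * x⁻¹ ∈ O) :
    H ≤ Subgroup.normalizer (O : Set S) := Subgroup.le_normalizer_iff.2 h

lemma NSyl.conj_closed {p : ℕ} {O M : Subgroup S} (h : NSyl p O M) {x : S}
    (hx : x ∈ Subgroup.normalizer (M : Set S)) : ∀ o ∈ O, x * o * x⁻¹ ∈ O := by
  intro o ho
  obtain ⟨k, hk⟩ := h.pg.exists_pow' ho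
  apply h.mem ((Subgroup.mem_normalizer_iff.1 hx o).1 (h.le ho)) (k := k)
  rw [conj_pow, hk]; group

/-- central p-subgroup of coprime index has a characteristic complement -/
lemma central_compl {p : ℕ} (hp : p.Prime) (O Z : Subgroup S) (hO : NSyl p O Z)
    (hc : ∀ o ∈ O, ∀ z ∈ Z, o * z = z * o) :
    ∃ (K : Subgroup S) (u : ℕ), (∀ x, x ∈ K ↔ x ∈ Z ∧ x ^ u = 1) ∧ (Nat.card K).Coprime p ∧
      ∀ z ∈ Z, ∃ o ∈ O, ∃ κ ∈ K, z = o * κ := by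
  have : Fact p.Prime := ⟨hp⟩
  have hnorm : (O.subgroupOf Z).Normal :=
    (Subgroup.normal_subgroupOf_iff_le_normalizer hO.le).2 hO.nm
  set m := O.relIndex Z with hm
  set m' := (Subgroup.center Z).index with hm'
  have hle : O.subgroupOf Z ≤ Subgroup.center Z := by
    intro x hx
    rw [Subgroup.mem_center_iff]
    intro y
    exact Subtype.ext (hc x hx y y.2).symm
  have hdvd : m' ∣ m := Subgroup.index_dvd_of_le hle
  have hm'c : m'.Coprime p := Nat.Coprime.coprime_dvd_left hdvd hO.cop
  have huc : (m' * m).Coprime p := Nat.Coprime.mul_left hm'c hO.cop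
  let f : Z →* Subgroup.center Z :=
    { toFun := fun z => (MonoidHom.transferCenterPow Z z) ^ m
      map_one' := by simp
      map_mul' := fun a b => by
        have hcm : Commute (MonoidHom.transferCenterPow Z a) (MonoidHom.transferCenterPow Z b) :=
          Subtype.ext (Subgroup.mem_center_iff.1 (MonoidHom.transferCenterPow Z b).2 _)
        rw [map_mul, hcm.mul_pow] }
  have hf : ∀ z : Z, ((f z : Z) : S) = (z : S) ^ (m' * m) := by
    intro z
    change (((MonoidHom.transferCenterPow Z z) ^ m : Subgroup.center Z) : Z).1 = _
    rw [Subgroup.coe_pow, MonoidHom.transferCenterPow_apply, ← pow_mul]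
    rfl
  have hmem : ∀ x, x ∈ f.ker.map Z.subtype ↔ x ∈ Z ∧ x ^ (m' * m) = 1 := by
    intro x
    simp only [Subgroup.mem_map, MonoidHom.mem_ker]
    constructor
    · rintro ⟨z, hz, rfl⟩
      refine ⟨z.2, ?_⟩
      change (z : S) ^ _ = 1
      rw [← hf, hz]; rfl
    · rintro ⟨hx, hxu⟩
      refine ⟨⟨x, hx⟩, ?_, rfl⟩
      apply Subtype.ext; apply Subtype.ext
      rw [hf]; exact hxu
  refine ⟨f.ker.map Z.subtype, m' * m, hmem, ?_, ?_⟩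
  · rw [Nat.coprime_comm, hp.coprime_iff_not_dvd]
    intro hd
    obtain ⟨x, hx⟩ := exists_prime_orderOf_dvd_card' p hd
    have h1 := ((hmem x).1 x.2).2
    have h2 : (x : S) ^ p = 1 := by
      have := pow_orderOf_eq_one x
      rw [hx] at this
      exact congrArg Subtype.val this
    have h3 := eq_one_of_coprime_pow h1 h2 huc
    have : x = 1 := Subtype.ext h3
    rw [this, orderOf_one] at hx
    exact hp.one_lt.ne hx
  · intro z hz
    have h1 : z ^ (m' * m) ∈ O := by
      have : z ^ m ∈ O := Subgroup.pow_index_mem (O.subgroupOf Z) ⟨z, hz⟩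
      rw [mul_comm, pow_mul]
      exact O.pow_mem this _
    obtain ⟨n, hn⟩ := IsPGroup.iff_card.1 hO.pg
    have hcop : (Nat.card O).Coprime (m' * m) := by
      rw [hn]; exact Nat.Coprime.pow_left _ huc.symm
    obtain ⟨o, ho⟩ := (powCoprime hcop).surjective ⟨_, h1⟩
    have ho' : (o : S) ^ (m' * m) = z ^ (m' * m) := congrArg Subtype.val ho
    refine ⟨o, o.2, (o : S)⁻¹ * z, ?_, by group⟩
    rw [hmem]
    refine ⟨Z.mul_mem (Z.inv_mem (hO.le o.2)) hz, ?_⟩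
    have hcm : Commute (o : S)⁻¹ z := Commute.inv_left (hc o o.2 z hz)
    rw [hcm.mul_pow, inv_pow, ho']; group

lemma ito [IsSimpleGroup S] (χ : Irr S) (hχ : χ ≠ trivIrr) {p : ℕ} (hp : p.Prime)
    (hd : χ.deg < p - 1) (H : Subgroup S) (hH : PS p H) : ∃ O, NSyl p O H := by
  have hfact : Fact p.Prime := ⟨hp⟩
  have ab := pgroup_abelian χ hχ hp (by omega)
  induction hH with
  | bot =>
    exact ⟨⊥, le_rfl, IsPGroup.of_bot, Subgroup.le_normalizer, by simp⟩
  | step M H hMH hn hq _ ih =>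
    obtain ⟨O, hO⟩ := ih
    have hOH : O ≤ H := hO.le.trans hMH
    have hHO : ∀ x ∈ H, ∀ o ∈ O, x * o * x⁻¹ ∈ O := fun x hx => hO.conj_closed (hn hx)
    rcases hq with ⟨m, hm⟩ | hq
    · -- p-group quotient
      obtain ⟨Q, hQ⟩ := IsPGroup.exists_le_sylow (p := p) (P := O.subgroupOf H)
        (hO.pg.comap_of_injective H.subtype H.subtype_injective)
      set P : Subgroup S := (Q : Subgroup H).map H.subtype with hP
      have hPH : P ≤ H := Subgroup.map_subtype_le _
      have hPp : IsPGroup p P := Q.2.map H.subtype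
      have hOP : O ≤ P := by
        intro o ho
        exact ⟨⟨o, hOH ho⟩, hQ ho, rfl⟩
      have hsub : P.subgroupOf H = Q := by
        ext x
        simp [hP, Subgroup.mem_subgroupOf]
      have hPi : (P.relIndex H).Coprime p := by
        rw [Subgroup.relIndex, hsub, Nat.coprime_comm, hp.coprime_iff_not_dvd]
        exact Q.not_dvd_index
      have hPab := ab P hPp
      -- Y
      set Y := H ⊓ Subgroup.centralizer (O : Set S) with hY
      have memY : ∀ y, y ∈ Y ↔ y ∈ H ∧ ∀ o ∈ O, o * y = y * o := by
        intro y
        rw [hY, Subgroup.mem_inf, Subgroup.mem_centralizer_iff]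
        rfl
      have hPY : P ≤ Y := fun x hx => (memY x).2 ⟨hPH hx, fun o ho => hPab o (hOP ho) x hx⟩
      set Z := M ⊓ Y with hZ
      have hOZ : O ≤ Z := le_inf hO.le (hOP.trans hPY)
      have hOZs : NSyl p O Z := by
        refine ⟨hOZ, hO.pg, le_trans inf_le_left hO.nm, ?_⟩
        apply Nat.Coprime.coprime_dvd_left _ hO.cop
        rw [← Subgroup.relIndex_mul_relIndex O Z M hOZ inf_le_left]
        exact Dvd.intro _ rfl
      have hYconj : ∀ h ∈ H, ∀ y ∈ Y, h * y * h⁻¹ ∈ Y := by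
        intro h hh y hy
        rw [memY] at hy ⊢
        refine ⟨H.mul_mem (H.mul_mem hh hy.1) (H.inv_mem hh), fun o ho => ?_⟩
        have := hy.2 (h⁻¹ * o * h⁻¹⁻¹) (hHO _ (H.inv_mem hh) o ho)
        have h2 := congrArg (fun t => h * t * h⁻¹) this
        calc o * (h * y * h⁻¹) = h * (h⁻¹ * o * h⁻¹⁻¹ * y) * h⁻¹ := by group
          _ = _ := h2
          _ = _ := by group
      have hZconj : ∀ h ∈ H, ∀ y ∈ Z, h * y * h⁻¹ ∈ Z := by
        intro h hh y hy
        exact ⟨(Subgroup.mem_normalizer_iff.1 (hn hh) y).1 hy.1, hYconj h hh y hy.2⟩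
      obtain ⟨K, u, hK1, hK2, hK3⟩ := central_compl hp O Z hOZs (fun o ho z hz =>
        ((memY z).1 hz.2).2 o ho)
      have hKn : H ≤ Subgroup.normalizer (K : Set S) := by
        apply le_normalizer_of
        intro x hx κ hκ
        rw [hK1] at hκ ⊢
        refine ⟨hZconj x hx κ hκ.1, ?_⟩
        rw [conj_pow, hκ.2]; group
      have hPK : ∀ x ∈ P, ∀ κ ∈ K, x * κ = κ * x := by
        intro x hx
        obtain ⟨k, hk⟩ := hPp.exists_pow' hx
        exact lemA χ hχ hp hd K hK2 x hk (hKn (hPH hx))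
      have hMP : H ≤ M ⊔ P := by
        have h1 : (M ⊔ P).relIndex H ∣ p ^ m := by
          rw [← hm, ← Subgroup.relIndex_mul_relIndex M (M ⊔ P) H le_sup_left (sup_le hMH hPH)]
          exact Dvd.intro_left _ rfl
        have h2 : (M ⊔ P).relIndex H ∣ P.relIndex H := by
          rw [← Subgroup.relIndex_mul_relIndex P (M ⊔ P) H le_sup_right (sup_le hMH hPH)]
          exact Dvd.intro_left _ rfl
        have h3 : (M ⊔ P).relIndex H = 1 :=
          Nat.eq_one_of_dvd_coprimes (Nat.Coprime.pow_right m hPi) h2 h1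
        exact Subgroup.relIndex_eq_one.1 h3
      have hcen : ∀ y ∈ Y, ∀ x ∈ P, x * y = y * x := by
        intro y hy x hx
        have h1 : y ∈ (M : Set S) * (P : Set S) := by
          rw [← Subgroup.coe_mul_of_right_le_normalizer_left _ _ (hPH.trans hn)]
          exact hMP ((memY y).1 hy).1
        obtain ⟨a, ha, b, hb, rfl⟩ := h1
        have haY : a ∈ Y := by
          have := Y.mul_mem hy (Y.inv_mem (hPY hb))
          simpa using this
        obtain ⟨o, ho, κ, hκ, rfl⟩ := hK3 a ⟨ha, haY⟩
        have c1 : Commute x o := hPab x hx o (hOP ho)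
        have c2 : Commute x κ := hPK x hx κ hκ
        have c3 : Commute x b := hPab x hx b hb
        exact (c1.mul_right c2).mul_right c3
      have hPYs : NSyl p P Y := by
        refine ⟨hPY, hPp, ?_, ?_⟩
        · apply le_normalizer_of
          intro y hy x hx
          rw [← hcen y hy x hx, mul_inv_cancel_right]; exact hx
        · apply Nat.Coprime.coprime_dvd_left _ hPi
          rw [← Subgroup.relIndex_mul_relIndex P Y H hPY inf_le_left]
          exact Dvd.intro _ rfl
      refine ⟨P, hPH, hPp, ?_, hPi⟩
      apply le_normalizer_of
      intro h hh x hx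
      obtain ⟨k, hk⟩ := hPp.exists_pow' hx
      apply hPYs.mem (hYconj h hh x (hPY hx)) (k := k)
      rw [conj_pow, hk]; group
    · refine ⟨O, hOH, hO.pg, le_normalizer_of _ _ hHO, ?_⟩
      rw [← Subgroup.relIndex_mul_relIndex O M H hO.le hMH]
      exact Nat.Coprime.mul_left hO.cop hq

end ito

end part10

section part11
set_option linter.all false
open scoped ComplexConjugate
open Finset
open scoped Pointwise

section cnt
variable {S : Type} [Group S] [Fintype S]

lemma count_irr (m : ℕ) (F : Finset (Irr S)) (h : ∀ χ, χ ∉ F → m ≤ χ.deg) :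
    m ^ 2 * Fintype.card (Irr S) + ∑ χ ∈ F, χ.deg ^ 2 ≤ Fintype.card S + m ^ 2 * #F := by
  have h1 : ∑ χ ∈ univ \ F, χ.deg ^ 2 + ∑ χ ∈ F, χ.deg ^ 2 = Fintype.card S := by
    rw [sum_sdiff (subset_univ F), sum_deg_sq]
  have h2 : #(univ \ F) * m ^ 2 ≤ ∑ χ ∈ univ \ F, χ.deg ^ 2 := by
    rw [← smul_eq_mul]
    apply card_nsmul_le_sum
    intro χ hχ
    exact Nat.pow_le_pow_left (h χ (by simpa using hχ)) 2
  have h3 : #(univ \ F) + #F = Fintype.card (Irr S) := card_sdiff_add_card_eq_card (subset_univ F)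
  rw [← h3]
  nlinarith

lemma comm_zpowers (g : S) : ∀ x y : Subgroup.zpowers g, x * y = y * x := by
  rintro ⟨_, a, rfl⟩ ⟨_, b, rfl⟩
  apply Subtype.ext
  exact ((Commute.refl g).zpow_zpow a b).eq

lemma res_norm (B : Subgroup S) (θ : S → ℂ) (hθ : IsCh S θ) :
    ∑ x : B, ‖θ x‖ ^ 2 = Fintype.card B * (∑ ψ : Irr B, mult (res B θ) ψ ^ 2 : ℕ) := by
  have h1 := ip_self_eq (res B θ)
  rw [(hθ.res B).ip_eq (hθ.res B)] at h1
  have h2 : ((∑ ψ : Irr B, mult (res B θ) ψ * mult (res B θ) ψ : ℕ) : ℝ) =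
    (Fintype.card B : ℝ)⁻¹ * ∑ x : B, ‖res B θ x‖ ^ 2 := by exact_mod_cast h1
  simp only [pow_two (mult _ _)]
  rw [h2, mul_inv_cancel_left₀ (by simp)]
  rfl

lemma conj_sub_card (x : S) [DecidablePred fun h : S => h * x * h⁻¹ = x] : #{h : S | h * x * h⁻¹ = x} = Nat.card (Subgroup.centralizer ({x} : Set S)) := by
  rw [← Fintype.card_subtype, ← Nat.card_eq_fintype_card]
  apply Nat.card_congr
  apply Equiv.subtypeEquivRight
  intro h
  rw [Subgroup.mem_centralizer_singleton_iff, mul_inv_eq_iff_eq_mul]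

lemma cent_eq_of_prime (g : S) {p : ℕ} (hp : p.Prime) (hg : orderOf g = p) (x : S)
    (hx : x ∈ Subgroup.zpowers g) (hx1 : x ≠ 1) :
    Subgroup.centralizer ({x} : Set S) = Subgroup.centralizer ({g} : Set S) := by
  have h1 : Subgroup.zpowers x = Subgroup.zpowers g := by
    have hle : Subgroup.zpowers x ≤ Subgroup.zpowers g := by rwa [Subgroup.zpowers_le]
    apply Subgroup.eq_of_le_of_card_ge hle
    rw [Nat.card_zpowers, Nat.card_zpowers]
    have h2 : orderOf x ∣ p := by
      rw [← hg]; exact orderOf_dvd_of_mem_zpowers hx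
    rcases (Nat.dvd_prime hp).1 h2 with h | h
    · exact absurd (orderOf_eq_one_iff.1 h) hx1
    · rw [h, hg]
  rw [← Subgroup.centralizer_closure ({x} : Set S), ← Subgroup.centralizer_closure ({g} : Set S),
    ← Subgroup.zpowers_eq_closure, ← Subgroup.zpowers_eq_closure, h1]

lemma small_count (g : S) {p : ℕ} (hp : p.Prime) (hg : orderOf g = p) :
    #{χ : Irr S | χ.deg < p} ≤ Nat.card (Subgroup.centralizer ({g} : Set S)) := by
  classical
  set B := Subgroup.zpowers g with hB
  have hcB : Fintype.card B = p := by
    rw [← Nat.card_eq_fintype_card, Nat.card_zpowers, hg]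
  have h1 : ∀ χ : Irr S, χ.deg < p → ((p : ℝ) - 1) ≤ ∑ x ∈ (univ : Finset B).erase 1, ‖χ.1 x‖ ^ 2 := by
    intro χ hχ
    have h2 := res_norm B χ.1 χ.isCh
    rw [← add_sum_erase _ _ (mem_univ (1 : B)), hcB] at h2
    have h3 : χ.deg ≤ ∑ ψ : Irr B, mult (res B χ.1) ψ ^ 2 := by
      rw [(χ.isCh.res B).deg_expand (n := χ.deg) χ.one_eq]
      apply sum_le_sum
      intro ψ _
      rw [ψ.deg_one_of_comm (comm_zpowers g), mul_one]
      exact Nat.le_self_pow two_ne_zero _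
    have h4 : ‖χ.1 ((1 : B) : S)‖ = χ.deg := by
      rw [Subgroup.coe_one, χ.one_eq]; simp
    rw [h4] at h2
    have h5 : (χ.deg : ℝ) ≤ ((∑ ψ : Irr B, mult (res B χ.1) ψ ^ 2 : ℕ) : ℝ) := by exact_mod_cast h3
    have h6 : (1 : ℝ) ≤ χ.deg := by exact_mod_cast χ.deg_pos
    have h7 : (χ.deg : ℝ) + 1 ≤ p := by exact_mod_cast hχ
    have h8 : (p : ℝ) * χ.deg ≤ p * ((∑ ψ : Irr B, mult (res B χ.1) ψ ^ 2 : ℕ) : ℝ) := by gcongr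
    nlinarith
  have h2 : ∀ x ∈ (univ : Finset B).erase 1, ∑ χ : Irr S, ‖χ.1 x‖ ^ 2 =
      (Nat.card (Subgroup.centralizer ({g} : Set S)) : ℝ) := by
    intro x hx
    have := col_orth (x : S) (x : S)
    rw [conj_sub_card, cent_eq_of_prime g hp hg x x.2 (by
      intro h; rw [mem_erase] at hx; exact hx.1 (Subtype.ext h))] at this
    have h3 : ∀ χ : Irr S, χ.1 x * conj (χ.1 x) = ((‖χ.1 x‖ ^ 2 : ℝ) : ℂ) := by
      intro χ; rw [Complex.mul_conj, Complex.normSq_eq_norm_sq]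
    simp only [h3] at this
    exact_mod_cast this
  have h3 : ((p : ℝ) - 1) * #{χ : Irr S | χ.deg < p} ≤
      ((p : ℝ) - 1) * Nat.card (Subgroup.centralizer ({g} : Set S)) := by
    calc ((p : ℝ) - 1) * #{χ : Irr S | χ.deg < p}
        = ∑ χ : Irr S with χ.deg < p, ((p : ℝ) - 1) := by rw [sum_const, nsmul_eq_mul, mul_comm]
      _ ≤ ∑ χ : Irr S with χ.deg < p, ∑ x ∈ (univ : Finset B).erase 1, ‖χ.1 x‖ ^ 2 := by
          apply sum_le_sum
          intro χ hχ
          exact h1 χ (mem_filter.1 hχ).2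
      _ ≤ ∑ χ : Irr S, ∑ x ∈ (univ : Finset B).erase 1, ‖χ.1 x‖ ^ 2 := by
          apply sum_le_sum_of_subset_of_nonneg (subset_univ _)
          intro χ _ _
          exact sum_nonneg fun _ _ => by positivity
      _ = ∑ x ∈ (univ : Finset B).erase 1, ∑ χ : Irr S, ‖χ.1 x‖ ^ 2 := sum_comm
      _ = _ := by
          rw [sum_congr rfl h2, sum_const, card_erase_of_mem (mem_univ _), card_univ, hcB,
            nsmul_eq_mul, Nat.cast_sub hp.one_lt.le, Nat.cast_one]
  have h4 : (0 : ℝ) < p - 1 := by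
    have : (1 : ℝ) < p := by exact_mod_cast hp.one_lt
    linarith
  exact_mod_cast le_of_mul_le_mul_left h3 h4

lemma sylow_not_normal [IsSimpleGroup S] (hnc : ¬ ∀ x y : S, x * y = y * x) {p : ℕ} (hp : p.Prime)
    (hd : p ∣ Fintype.card S) (P : Sylow p S) : ¬ (P : Subgroup S).Normal := by
  have hfact : Fact p.Prime := ⟨hp⟩
  intro hn
  rcases hn.eq_bot_or_eq_top with h | h
  · have h1 := P.not_dvd_index
    rw [h, Subgroup.index_bot, Nat.card_eq_fintype_card] at h1
    exact h1 hd
  · have hpg : IsPGroup p S := by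
      have := P.2
      rw [h] at this
      exact this.of_equiv Subgroup.topEquiv
    rcases (inferInstance : (Subgroup.center S).Normal).eq_bot_or_eq_top with h' | h'
    · have : Nontrivial S := inferInstance
      exact absurd h' hpg.bot_lt_center.ne'
    · apply hnc
      intro x y
      have : y ∈ Subgroup.center S := by rw [h']; trivial
      exact Subgroup.mem_center_iff.1 this x

lemma normalizer_ne_top [IsSimpleGroup S] (hnc : ¬ ∀ x y : S, x * y = y * x) {p : ℕ} (hp : p.Prime)
    (hd : p ∣ Fintype.card S) (P : Sylow p S) :
    p + 1 ≤ (Subgroup.normalizer ((P : Subgroup S) : Set S)).index := by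
  have hfact : Fact p.Prime := ⟨hp⟩
  have h1 := card_sylow_modEq_one p S
  have h2 := P.card_eq_index_normalizer
  have h3 : (Subgroup.normalizer ((P : Subgroup S) : Set S)).index ≠ 1 := by
    intro h
    rw [Subgroup.index_eq_one] at h
    exact sylow_not_normal hnc hp hd P (Subgroup.normalizer_eq_top_iff.1 h)
  have h4 : 0 < Nat.card (Sylow p S) := Nat.card_pos
  have h2' : Nat.card (Sylow p S) = (Subgroup.normalizer ((P : Subgroup S) : Set S)).index := h2
  rw [h2'] at h1 h4
  have h5 := (Nat.modEq_iff_dvd' h4).1 h1.symm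
  have := Nat.le_of_dvd (by omega) h5
  omega

lemma card_ge [IsSimpleGroup S] (hnc : ¬ ∀ x y : S, x * y = y * x) {p : ℕ} (hp : p.Prime)
    (hd : p ∣ Fintype.card S) : p * (p + 1) ≤ Fintype.card S := by
  have hfact : Fact p.Prime := ⟨hp⟩
  obtain ⟨P⟩ : Nonempty (Sylow p S) := inferInstance
  have h1 := normalizer_ne_top hnc hp hd P
  have h2 := (Subgroup.normalizer ((P : Subgroup S) : Set S)).card_mul_index
  have h3 : p ∣ Nat.card (Subgroup.normalizer ((P : Subgroup S) : Set S)) := by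
    have h4 : p ∣ Nat.card P := by
      apply P.dvd_card_of_dvd_card
      rwa [Nat.card_eq_fintype_card]
    exact h4.trans (Subgroup.card_dvd_of_le Subgroup.le_normalizer)
  have h4 := Nat.le_of_dvd Nat.card_pos h3
  rw [← Nat.card_eq_fintype_card, ← h2]
  exact Nat.mul_le_mul h4 h1

/-- Step 1 -/
lemma step1 [IsSimpleGroup S] (hnc : ¬ ∀ x y : S, x * y = y * x) {p : ℕ} (hp : p.Prime)
    (hd : p ∣ Fintype.card S) (hk : 3 * Fintype.card S ≤ p ^ 2 * Fintype.card (Irr S)) :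
    ∃ χ : Irr S, χ ≠ trivIrr ∧ χ.deg < p - 1 := by
  by_contra hcon
  push Not at hcon
  have hge := card_ge hnc hp hd
  have c1 := count_irr (p - 1) {trivIrr} (fun χ hχ => hcon χ (by simpa using hχ))
  have c2 := count_irr 2 {trivIrr} (fun χ hχ => χ.ne_triv_deg hnc (by simpa using hχ))
  simp only [sum_singleton, trivIrr_deg, card_singleton] at c1 c2
  set n := Fintype.card S
  set k := Fintype.card (Irr S)
  rcases Nat.lt_or_ge p 4 with h | h
  · have h2 := hp.two_le
    interval_cases p <;> omega
  · obtain ⟨q, rfl⟩ : ∃ q, p = q + 1 := ⟨p - 1, by omega⟩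
    simp only [Nat.add_sub_cancel] at c1
    have hq : 3 ≤ q := by omega
    -- q² k ≤ n + q² - 1 ; (q+1)² k ≥ 3 n
    have e1 : q ^ 2 * (3 * n) ≤ (q + 1) ^ 2 * (n + q ^ 2) := by nlinarith
    have e2 : 3 * q ^ 2 ≥ (q + 1) ^ 2 + q ^ 2 := by nlinarith
    have e3 : (q ^ 2) * n ≤ (q + 1) ^ 2 * q ^ 2 := by nlinarith
    have e4 : n ≤ (q + 1) ^ 2 := by
      apply Nat.le_of_mul_le_mul_left (c := q ^ 2) _ (by positivity)
      linarith
    nlinarith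

end cnt

end part11

section part12
set_option linter.all false
open scoped ComplexConjugate
open Finset
open scoped Pointwise

section step2
variable {S : Type} [Group S] [Fintype S]

/-- p-elements of centralizers of nontrivial elements of P are in P -/
lemma cent_p [IsSimpleGroup S] (hnc : ¬ ∀ x y : S, x * y = y * x) {p : ℕ} (hp : p.Prime)
    (χ : Irr S) (hχ : χ ≠ trivIrr) (hdeg : χ.deg < p - 1)
    (hPS : ∀ H : Subgroup S, H ≠ ⊤ → PS p H) (P : Sylow p S) (h : S) (hh : h ∈ P) (h1 : h ≠ 1) :
    ∀ x, x * h = h * x → ∀ k, x ^ p ^ k = 1 → x ∈ P := by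
  have hfact : Fact p.Prime := ⟨hp⟩
  have hab := pgroup_abelian χ hχ hp (by omega)
  have hC : Subgroup.centralizer ({h} : Set S) ≠ ⊤ := by
    intro ht
    rcases (inferInstance : (Subgroup.center S).Normal).eq_bot_or_eq_top with h' | h'
    · apply h1
      rw [← Subgroup.mem_bot, ← h', Subgroup.mem_center_iff]
      intro g
      have : g ∈ Subgroup.centralizer ({h} : Set S) := by rw [ht]; trivial
      exact (Subgroup.mem_centralizer_singleton_iff.1 this)
    · apply hnc
      intro x y
      have : y ∈ Subgroup.center S := by rw [h']; trivial
      exact Subgroup.mem_center_iff.1 this x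
  obtain ⟨O, hO⟩ := ito χ hχ hp hdeg _ (hPS _ hC)
  have hPO : (P : Subgroup S) ≤ O := by
    intro y hy
    obtain ⟨k, hk⟩ := IsPGroup.exists_pow' P.2 hy
    apply hO.mem (Subgroup.mem_centralizer_singleton_iff.2 (hab P P.2 y hy h hh)) hk
  have hOP := P.is_maximal' hO.pg hPO
  intro x hx k hk
  have : x ∈ O := hO.mem (Subgroup.mem_centralizer_singleton_iff.2 hx) hk
  rw [hOP] at this
  exact this

lemma sylow_ti [IsSimpleGroup S] (hnc : ¬ ∀ x y : S, x * y = y * x) {p : ℕ} (hp : p.Prime)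
    (χ : Irr S) (hχ : χ ≠ trivIrr) (hdeg : χ.deg < p - 1)
    (hPS : ∀ H : Subgroup S, H ≠ ⊤ → PS p H) (P Q : Sylow p S) (h : S) (hh : h ∈ P) (hq : h ∈ Q)
    (h1 : h ≠ 1) : P = Q := by
  have hfact : Fact p.Prime := ⟨hp⟩
  have hab := pgroup_abelian χ hχ hp (by omega)
  have hc := cent_p hnc hp χ hχ hdeg hPS P h hh h1
  apply Sylow.ext
  refine Q.is_maximal' P.2 ?_
  intro y hy
  obtain ⟨k, hk⟩ := IsPGroup.exists_pow' Q.2 hy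
  exact hc y (hab Q Q.2 y hy h hq) k hk

lemma step2 [IsSimpleGroup S] (hnc : ¬ ∀ x y : S, x * y = y * x) {p : ℕ} (hp : p.Prime)
    (hd : p ∣ Fintype.card S) (hk : 3 * Fintype.card S ≤ p ^ 2 * Fintype.card (Irr S))
    (hPS : ∀ H : Subgroup S, H ≠ ⊤ → PS p H) (P : Sylow p S) : Nat.card P = p := by
  classical
  have hfact : Fact p.Prime := ⟨hp⟩
  obtain ⟨χ, hχ, hdeg⟩ := step1 hnc hp hd hk
  by_contra hcon
  have h1 := normalizer_ne_top hnc hp hd P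
  have h2 := P.card_eq_index_normalizer
  obtain ⟨a, ha⟩ := IsPGroup.iff_card.1 P.2
  have hdP : p ∣ Nat.card P := by
    apply P.dvd_card_of_dvd_card
    rwa [Nat.card_eq_fintype_card]
  have ha2 : 2 ≤ a := by
    rcases a with _ | _ | a
    · have : Nat.card P = 1 := by rw [ha, pow_zero]
      rw [this] at hdP
      exact absurd (Nat.dvd_one.1 hdP) hp.one_lt.ne'
    · exact absurd (by rw [ha, zero_add, pow_one]) hcon
    · omega
  have hP2 : p ^ 2 ≤ Nat.card P := by rw [ha]; exact Nat.pow_le_pow_right hp.pos ha2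
  obtain ⟨Q, hQ⟩ : ∃ Q : Sylow p S, Q ≠ P := by
    by_contra hall
    push Not at hall
    have : Nat.card (Sylow p S) ≤ 1 := by
      have : Subsingleton (Sylow p S) := ⟨fun a b => (hall a).trans (hall b).symm⟩
      exact Finite.card_le_one_iff_subsingleton.2 this
    have h2' : Nat.card (Sylow p S) = (Subgroup.normalizer ((P : Subgroup S) : Set S)).index := h2
    have := hp.pos
    omega
  have hinj : Function.Injective (fun o : Option P => o.elim P (fun x => (x : S) • Q)) := by
    have hne : ∀ x : P, P ≠ (x : S) • Q := by
      intro x hx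
      apply hQ
      have : (x : S)⁻¹ • P = P := by
        rw [Sylow.smul_eq_iff_mem_normalizer]
        exact Subgroup.le_normalizer (P.inv_mem x.2)
      have h3 : (x : S)⁻¹ • P = Q := inv_smul_eq_iff.2 hx
      exact h3.symm.trans this
    rintro (_ | x) (_ | y) hxy
    · rfl
    · exact absurd hxy (hne y)
    · exact absurd hxy.symm (hne x)
    · have hxy' : (x : S) • Q = (y : S) • Q := hxy
      have h3 : ((y : S)⁻¹ * x) • Q = Q := by rw [mul_smul, hxy', inv_smul_smul]
      rw [Sylow.smul_eq_iff_mem_normalizer] at h3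
      have h4 : (y : S)⁻¹ * x ∈ P := P.mul_mem (P.inv_mem y.2) x.2
      have h5 : (y : S)⁻¹ * x ∈ (P : Subgroup S) ⊓ Q := by
        rw [← IsPGroup.inf_normalizer_sylow P.2 Q]; exact ⟨h4, h3⟩
      by_contra hne'
      apply hQ
      refine (sylow_ti hnc hp χ hχ hdeg hPS P Q _ h4 h5.2 ?_).symm
      intro h6
      apply hne'
      rw [inv_mul_eq_one] at h6
      rw [Subtype.ext h6]
  have hcard := Nat.card_le_card_of_injective _ hinj
  rw [Finite.card_option] at hcard
  obtain ⟨g, hg⟩ := exists_prime_orderOf_dvd_card' p hdP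
  have hg' : orderOf (g : S) = p := (Subgroup.orderOf_coe g).trans hg
  have hg1 : (g : S) ≠ 1 := by intro h; rw [h, orderOf_one] at hg'; exact hp.one_lt.ne hg'
  -- C(g) ≤ N(P)
  have hCN : Subgroup.centralizer ({(g : S)} : Set S) ≤ Subgroup.normalizer ((P : Subgroup S) : Set S) := by
    intro x hx
    refine Sylow.smul_eq_iff_mem_normalizer.1 ?_
    apply sylow_ti hnc hp χ hχ hdeg hPS _ _ (g : S) _ g.2 hg1
    have : (g : S) ∈ MulAut.conj x • (P : Subgroup S) := by
      refine ⟨g, g.2, ?_⟩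
      simp only [MulDistribMulAction.toMonoidEnd_apply, MulDistribMulAction.toMonoidHom_apply, MulAut.smul_def, MulAut.conj_apply]
      rw [Subgroup.mem_centralizer_singleton_iff] at hx
      simp [hx]
    exact this
  have hle := Nat.le_of_dvd Nat.card_pos (Subgroup.card_dvd_of_le hCN)
  have hS := (Subgroup.normalizer ((P : Subgroup S) : Set S)).card_mul_index
  have h2' : Nat.card (Sylow p S) = (Subgroup.normalizer ((P : Subgroup S) : Set S)).index := h2
  rw [Nat.card_eq_fintype_card (α := S), ← h2'] at hS
  have hsc := small_count (g : S) hp hg'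
  have hct := count_irr p {χ : Irr S | χ.deg < p} (by simp)
  have hCpos : 0 < Nat.card (Subgroup.centralizer ({(g : S)} : Set S)) := Nat.card_pos
  have e1 : Nat.card (Subgroup.centralizer ({(g : S)} : Set S)) * (p ^ 2 + 1) ≤ Fintype.card S := by
    rw [← hS]; exact Nat.mul_le_mul hle (by omega)
  have e2 : p ^ 2 * #{χ : Irr S | χ.deg < p} ≤ p ^ 2 * Nat.card (Subgroup.centralizer ({(g : S)} : Set S)) :=
    Nat.mul_le_mul_left _ hsc
  have e3 := Nat.zero_le (∑ χ : Irr S with χ.deg < p, χ.deg ^ 2)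
  generalize Nat.card (Subgroup.centralizer ({(g : S)} : Set S)) = c at *
  generalize #{χ : Irr S | χ.deg < p} = c' at *
  rw [mul_add, mul_comm c] at e1
  omega
end step2

end part12

section part13
set_option linter.all false
open scoped ComplexConjugate
open Finset
open scoped Pointwise

section om
variable {B : Type} [Group B] [Fintype B]

/-- central scalar -/
noncomputable def om (z : B) (ψ : Irr B) : ℂ := ψ.1 z / ψ.1 1

lemma om_mul {z : B} (hz : ∀ b, z * b = b * z) (ψ : Irr B) (x : B) : ψ.1 (z * x) = om z ψ * ψ.1 x := by
  obtain ⟨ω, hω⟩ := ψ.central z hz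
  have := hω 1
  rw [mul_one] at this
  rw [hω, om, this, mul_div_cancel_right₀ _ ψ.one_ne]

lemma om_pow_mul {z : B} (hz : ∀ b, z * b = b * z) (ψ : Irr B) (j : ℕ) (x : B) :
    ψ.1 (z ^ j * x) = om z ψ ^ j * ψ.1 x := ψ.pow_scal (om_mul hz ψ) j x

lemma om_pow_one {z : B} (hz : ∀ b, z * b = b * z) (ψ : Irr B) (j : ℕ) :
    ψ.1 (z ^ j) = om z ψ ^ j * ψ.deg := by
  have := om_pow_mul hz ψ j 1
  rwa [mul_one, ψ.one_eq] at this

lemma om_pow {z : B} (hz : ∀ b, z * b = b * z) (ψ : Irr B) {p : ℕ} (hp : z ^ p = 1) :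
    om z ψ ^ p = 1 := ψ.scal_pow_eq_one (om_mul hz ψ) hp

lemma om_tw {z : B} (ψ : Irr B) (l : B →* ℂˣ) (j : ℕ) :
    om z (ψ.tw (l ^ j)) = om z ψ * (l z : ℂ) ^ j := by
  simp only [om, Irr.tw_apply, map_one, MonoidHom.pow_apply]
  simp
  ring

lemma om_sum_zero {z : B} (hz : ∀ b, z * b = b * z) (ψ : Irr B) {p : ℕ} (hp : z ^ p = 1)
    (h1 : om z ψ ≠ 1) : ∑ j ∈ range p, ψ.1 (z ^ j) = 0 := by
  simp only [om_pow_one hz]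
  rw [← sum_mul, geom_sum_eq h1, om_pow hz ψ hp]
  simp

end om

section stab
variable {S : Type} [Group S] [Fintype S]

lemma stab_gen (B : Subgroup S) (z : B) (hz : ∀ b, z * b = b * z) {p : ℕ} (hp : p.Prime) (hzp : z ^ p = 1)
    (ψ : Irr B) (h1 : om z ψ ≠ 1) (n : Subgroup.normalizer (B : Set S)) (j : ℕ)
    (hj : n⁻¹ • z = z ^ j) (hn : n • ψ = ψ) : n⁻¹ • z = z := by
  have h2 : ψ.1 z = ψ.1 (z ^ j) := by
    rw [← hj, ← nact_apply, hn]
  have h3 := om_pow_one hz ψ j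
  have h4 := om_pow_one hz ψ 1
  rw [pow_one, h2, h3, pow_one] at h4
  have h5 : om z ψ ^ j = om z ψ ^ 1 := by
    rw [pow_one]
    exact mul_right_cancel₀ (by exact_mod_cast ψ.deg_pos.ne') h4
  have h6 := orderOf_eq_prime (om_pow hz ψ hzp) h1 (hp := ⟨hp⟩)
  have h7 : j ≡ 1 [MOD p] := by
    have h0 : om z ψ ≠ 0 := by
      intro h0
      have := om_pow hz ψ hzp
      rw [h0, zero_pow hp.ne_zero] at this
      exact zero_ne_one this
    have h8 : (Units.mk0 _ h0) ^ j = (Units.mk0 _ h0) ^ 1 := by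
      apply Units.ext
      simpa using h5
    rw [pow_eq_pow_iff_modEq, ← orderOf_units, Units.val_mk0, h6] at h8
    exact h8
  rw [hj]
  conv_rhs => rw [← pow_one z]
  rw [pow_eq_pow_iff_modEq]
  exact h7.of_dvd (orderOf_dvd_of_pow_eq_one hzp)

end stab

section ctx
variable {S : Type} [Group S] [Fintype S]

/-- centralizer of g -/
abbrev Cg (g : S) : Subgroup S := Subgroup.centralizer ({g} : Set S)

lemma mem_Cg {g x : S} : x ∈ Cg g ↔ x * g = g * x := Subgroup.mem_centralizer_singleton_iff

/-- g as element of its centralizer -/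
def gC (g : S) : Cg g := ⟨g, mem_Cg.2 rfl⟩

lemma gC_comm (g : S) : ∀ b, gC g * b = b * gC g := fun b => Subtype.ext (mem_Cg.1 b.2).symm

/-- the normalizer of the centralizer -/
abbrev Ng (g : S) : Subgroup S := Subgroup.normalizer (Cg g : Set S)

structure Ctx (p e : ℕ) (g : S) (K : Subgroup S) (l : Cg g →* ℂˣ) : Prop where
  hp : p.Prime
  hg : orderOf g = p
  Kle : K ≤ Cg g
  cop : (Nat.card K).Coprime p
  gen : ∀ c ∈ Cg g, ∃ κ ∈ K, ∃ j : ℕ, c = κ * g ^ j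
  l1 : ∀ c : Cg g, (c : S) ∈ K → l c = 1
  l2 : l (gC g) ≠ 1
  l3 : (l (gC g)) ^ p = 1
  hN : Nat.card (Ng g) = e * Nat.card (Cg g)

variable {p e : ℕ} {g : S} {K : Subgroup S} {l : Cg g →* ℂˣ}

lemma Ctx.gp (X : Ctx p e g K l) : g ^ p = 1 := by rw [← X.hg, pow_orderOf_eq_one]

lemma Ctx.gCp (X : Ctx p e g K l) : (gC g) ^ p = 1 := Subtype.ext X.gp

lemma Ctx.g1 (X : Ctx p e g K l) : g ≠ 1 := by
  intro h
  have := X.hg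
  rw [h, orderOf_one] at this
  exact X.hp.one_lt.ne this

lemma Ctx.pel (X : Ctx p e g K l) (x : S) (hx : x ∈ Cg g) (hxp : x ^ p = 1) : ∃ j : ℕ, x = g ^ j := by
  obtain ⟨κ, hκ, j, rfl⟩ := X.gen x hx
  have hc : Commute κ (g ^ j) := Commute.pow_right (mem_Cg.1 (X.Kle hκ)) j
  rw [hc.mul_pow, ← pow_mul, mul_comm j, pow_mul, X.gp, one_pow, mul_one] at hxp
  have := eq_one_of_coprime_pow (pow_card_sub K hκ) hxp X.cop
  exact ⟨j, by rw [this, one_mul]⟩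

lemma Ctx.conj_pow_of (X : Ctx p e g K l) (h : S) (hh : h * g * h⁻¹ ∈ Cg g) : ∃ j : ℕ, h * g * h⁻¹ = g ^ j := by
  apply X.pel _ hh
  rw [conj_pow, X.gp]; group

lemma Ctx.mem_N_of (X : Ctx p e g K l) (h : S) (hh : h * g * h⁻¹ ∈ Cg g) : h ∈ Ng g := by
  obtain ⟨j, hj⟩ := X.conj_pow_of h hh
  have hz : Subgroup.zpowers (h * g * h⁻¹) = Subgroup.zpowers g := by
    apply Subgroup.eq_of_le_of_card_ge
    · rw [Subgroup.zpowers_le, hj]; exact Subgroup.npow_mem_zpowers g j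
    · rw [Nat.card_zpowers, Nat.card_zpowers]
      have : orderOf (h * g * h⁻¹) = orderOf g := by
        have := orderOf_injective (MulAut.conj h).toMonoidHom (MulAut.conj h).injective g
        simpa using this
      rw [this]
  rw [Subgroup.mem_normalizer_iff]
  intro c
  have key : ∀ x : S, x ∈ Cg g ↔ x ∈ Cg (h * g * h⁻¹) := by
    intro x
    simp only [Cg]
    rw [← Subgroup.centralizer_closure ({g} : Set S), ← Subgroup.centralizer_closure ({h * g * h⁻¹} : Set S),
      ← Subgroup.zpowers_eq_closure, ← Subgroup.zpowers_eq_closure, hz]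
  have : h * c * h⁻¹ ∈ Cg g ↔ c ∈ Cg g := by
    rw [key (h * c * h⁻¹), mem_Cg, mem_Cg]
    have e1 : h * c * h⁻¹ * (h * g * h⁻¹) = h * (c * g) * h⁻¹ := by group
    have e2 : h * g * h⁻¹ * (h * c * h⁻¹) = h * (g * c) * h⁻¹ := by group
    rw [e1, e2, mul_left_inj, mul_right_inj]
  exact this.symm

lemma Ctx.conj_of_N (X : Ctx p e g K l) (h : S) (hh : h ∈ Ng g) : ∃ j : ℕ, h * g * h⁻¹ = g ^ j :=
  X.conj_pow_of h ((Subgroup.mem_normalizer_iff.1 hh g).1 (gC g).2)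

lemma Ctx.notK (X : Ctx p e g K l) (y : Cg g) (h : l y ≠ 1) : (y : S) ∉ K := fun hk => h (X.l1 y hk)

lemma Ctx.TI (X : Ctx p e g K l) (y : S) (hy : y ∈ Cg g) (hyK : y ∉ K) (h : S) (hh : h * y * h⁻¹ ∈ Cg g) :
    h ∈ Ng g := by
  apply X.mem_N_of
  obtain ⟨κ, hκ, j, rfl⟩ := X.gen y hy
  have hj : ¬ p ∣ j := by
    rintro ⟨t, rfl⟩
    apply hyK
    rw [pow_mul, X.gp, one_pow, mul_one]
    exact hκ
  have hκg : Commute κ (g ^ j) := Commute.pow_right (mem_Cg.1 (X.Kle hκ)) j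
  have hym : (κ * g ^ j) ^ Nat.card K = g ^ (j * Nat.card K) := by
    rw [hκg.mul_pow, pow_card_sub K hκ, one_mul, pow_mul]
  have hcop : (j * Nat.card K).Coprime (orderOf g) := by
    rw [X.hg]
    exact Nat.Coprime.mul_left (Nat.Coprime.symm ((X.hp.coprime_iff_not_dvd).2 hj)) X.cop
  obtain ⟨t, ht⟩ := exists_pow_eq_self_of_coprime hcop
  rw [← hym, ← pow_mul] at ht
  have h3 : h * g * h⁻¹ = (h * (κ * g ^ j) * h⁻¹) ^ (Nat.card K * t) := by rw [conj_pow, ht]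
  rw [h3]
  exact (Cg g).pow_mem hh _

lemma Ctx.link (X : Ctx p e g K l) (ψ : Irr (Cg g)) (j : ℕ) : Linked (Cg g) ψ (ψ.tw (l ^ j)) := by
  refine ⟨(ψ.tw_deg _).symm, fun x hx h hh => ?_⟩
  apply X.TI x x.2 _ h hh
  intro h1
  apply hx
  rw [Irr.tw_apply, MonoidHom.pow_apply, X.l1 x h1]
  simp

lemma coe_nact (B : Subgroup S) (n : Subgroup.normalizer (B : Set S)) (x : B) :
    ((n • x : B) : S) = n * x * (n : S)⁻¹ := rfl

lemma C_act (n : Ng g) (hn : (n : S) ∈ Cg g) (ψ : Irr (Cg g)) : n • ψ = ψ := by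
  apply Subtype.ext; funext x
  rw [nact_apply]
  have := ψ.isCh.conj_inv (⟨n, hn⟩⁻¹ : Cg g) x
  rw [← this]
  congr 1

lemma Ctx.stab (X : Ctx p e g K l) (ψ : Irr (Cg g)) (h1 : om (gC g) ψ ≠ 1) (n : Ng g) :
    n • ψ = ψ ↔ (n : S) ∈ Cg g := by
  constructor
  · intro h
    obtain ⟨j, hj⟩ := X.conj_of_N (n : S)⁻¹ ((Ng g).inv_mem n.2)
    have := stab_gen (Cg g) (gC g) (gC_comm g) X.hp X.gCp ψ h1 n j (Subtype.ext hj) h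
    have h3 : n • (gC g) = gC g := (inv_smul_eq_iff.1 this).symm
    have h4 := congrArg Subtype.val h3
    rw [coe_nact] at h4
    exact mem_Cg.2 (mul_inv_eq_iff_eq_mul.1 h4)
  · intro h; exact C_act n h ψ

lemma card_N_mem (n0 : Subgroup S) (g : S) (h : Cg g ≤ n0) [DecidablePred fun n : n0 => (n : S) ∈ Cg g] :
    #{n : n0 | (n : S) ∈ Cg g} = Fintype.card (Cg g) := by
  rw [← Fintype.card_subtype]
  exact Fintype.card_congr (Subgroup.subgroupOfEquivOfLe h).toEquiv

lemma Ctx.cnt (X : Ctx p e g K l) (ψ : Irr (Cg g)) (h1 : om (gC g) ψ ≠ 1) :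
    cnt (Cg g) ψ ψ = Fintype.card (Cg g) := by
  classical
  rw [_root_.cnt, ← card_N_mem (Ng g) g Subgroup.le_normalizer]
  congr 1
  ext n
  simp [X.stab ψ h1 n]

lemma nact_deg (B : Subgroup S) (n : Subgroup.normalizer (B : Set S)) (ψ : Irr B) : (n • ψ).deg = ψ.deg := by
  have h1 := (n • ψ).one_eq
  rw [nact_apply, smul_one, ψ.one_eq] at h1
  exact_mod_cast h1.symm

lemma nact_mult (B : Subgroup S) (n : Subgroup.normalizer (B : Set S)) (ψ : Irr B) (χ : Irr S) :
    mult (res B χ.1) (n • ψ) = mult (res B χ.1) ψ := by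
  have h1 := (χ.isCh.res B).ip_mult (n • ψ)
  have h2 := (χ.isCh.res B).ip_mult ψ
  have : ip (res B χ.1) (n • ψ).1 = ip (res B χ.1) ψ.1 := by
    simp only [ip]
    congr 1
    refine Fintype.sum_equiv (MulDistribMulAction.toMulAut (Subgroup.normalizer (B : Set S)) B n⁻¹).toEquiv _ _ ?_
    intro x
    rw [nact_apply]
    congr 1
    have := χ.isCh.conj_inv (n : S)⁻¹ x
    change χ.1 x = χ.1 ((n⁻¹ • x : B) : S)
    rw [← this]; rfl
  rw [this, h2] at h1
  exact_mod_cast h1.symm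

end ctx

end part13

section part14
set_option linter.all false
open scoped ComplexConjugate
open Finset
open scoped Pointwise

section orb
variable {S : Type} [Group S] [Fintype S]

/-- orbit of ψ under the normalizer -/
noncomputable def orb (B : Subgroup S) (ψ : Irr B) : Finset (Irr B) :=
  univ.image fun n : Subgroup.normalizer (B : Set S) => n • ψ

lemma mem_orb {B : Subgroup S} {ψ φ : Irr B} :
    φ ∈ orb B ψ ↔ ∃ n : Subgroup.normalizer (B : Set S), n • ψ = φ := by simp [orb]

lemma not_mem_orb {B : Subgroup S} {ψ φ : Irr B} : φ ∉ orb B ψ ↔ NC B ψ φ := by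
  rw [mem_orb]; push Not; rfl

lemma orb_card_mul (B : Subgroup S) (ψ : Irr B) :
    #(orb B ψ) * cnt B ψ ψ = Nat.card (Subgroup.normalizer (B : Set S)) := by
  classical
  have h1 := MulAction.card_orbit_mul_card_stabilizer_eq_card_group (Subgroup.normalizer (B : Set S)) ψ
  rw [Nat.card_eq_fintype_card, ← h1]
  congr 1
  · rw [← Nat.card_eq_fintype_card, Nat.card_coe_set_eq, ← Set.ncard_coe_finset]
    congr 1
    ext φ
    simp [orb, MulAction.mem_orbit_iff]
  · rw [cnt, ← Fintype.card_subtype]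
    apply Fintype.card_congr
    exact Equiv.subtypeEquivRight fun n => by simp

end orb

section typ
variable {S : Type} [Group S] [Fintype S] {p e : ℕ} {g : S} {K : Subgroup S} {l : Cg g →* ℂˣ}

lemma Ctx.orb_card (X : Ctx p e g K l) (ψ : Irr (Cg g)) (h1 : om (gC g) ψ ≠ 1) : #(orb (Cg g) ψ) = e := by
  have := orb_card_mul (Cg g) ψ
  rw [X.cnt ψ h1, X.hN, ← Nat.card_eq_fintype_card] at this
  exact Nat.eq_of_mul_eq_mul_right Nat.card_pos this

lemma Ctx.om_orb (X : Ctx p e g K l) (ψ : Irr (Cg g)) (h1 : om (gC g) ψ ≠ 1) (n : Ng g) :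
    om (gC g) (n • ψ) ≠ 1 := by
  intro h
  apply h1
  obtain ⟨i, hi⟩ := X.conj_of_N (n : S) n.2
  have h2 := om_pow_one (gC_comm g) (n • ψ) i
  rw [h, one_pow, one_mul, nact_deg, nact_apply] at h2
  have h3 : n⁻¹ • (gC g) ^ i = gC g := by
    rw [inv_smul_eq_iff]
    exact Subtype.ext hi.symm
  rw [h3] at h2
  rw [om, h2, ψ.one_eq, div_self]
  exact_mod_cast ψ.deg_pos.ne'

/-- exponents for nontrivial twists -/
noncomputable def Jset (p : ℕ) (l : Cg g →* ℂˣ) (ψ : Irr (Cg g)) : Finset ℕ := by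
  classical
  exact (range p).filter fun j => om (gC g) (ψ.tw (l ^ j)) ≠ 1

lemma Ctx.J_inj (X : Ctx p e g K l) (ψ : Irr (Cg g)) :
    Set.InjOn (fun j : ℕ => ψ.tw (l ^ j)) (Jset p l ψ) := by
  apply (tw_injOn ψ l (gC g) (gC_comm g) X.hp X.l2 X.l3).mono
  intro j hj
  simp only [Jset, mem_coe, mem_filter] at hj
  exact hj.1

lemma Ctx.J_card (X : Ctx p e g K l) (ψ : Irr (Cg g)) : p - 1 ≤ #(Jset p l ψ) := by
  classical
  have h4 := card_filter_add_card_filter_not (s := range p)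
        (fun j => om (gC g) (ψ.tw (l ^ j)) = 1)
  rw [card_range] at h4
  have h5 : #{j ∈ range p | om (gC g) (ψ.tw (l ^ j)) = 1} ≤ 1 := by
    rw [card_le_one]
    intro a ha b hb
    rw [mem_filter, mem_range] at ha hb
    have ha2 := ha.2
    have hb2 := hb.2
    rw [om_tw] at ha2 hb2
    have h0 : om (gC g) ψ ≠ 0 := by
      intro h; rw [h, zero_mul] at ha2; exact zero_ne_one ha2
    have h6 : (l (gC g)) ^ a = (l (gC g)) ^ b := by
      apply Units.ext
      push_cast
      exact mul_left_cancel₀ h0 (ha2.trans hb2.symm)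
    have h7 := orderOf_eq_prime X.l3 X.l2 (hp := ⟨X.hp⟩)
    rw [← h7] at ha hb
    exact pow_injOn_Iio_orderOf ha.1 hb.1 h6
  have h6 : #(Jset p l ψ) = #{j ∈ range p | ¬ om (gC g) (ψ.tw (l ^ j)) = 1} := by
    simp [Jset]
  omega

lemma Ctx.zeros (X : Ctx p e g K l) (χ : Irr S) (hd : χ.deg + e < p - 1) (ψ : Irr (Cg g)) :
    ∃ ψ1 ψ2, NC (Cg g) ψ1 ψ2 ∧ (om (gC g) ψ1 ≠ 1 ∧ mult (res (Cg g) χ.1) ψ1 = 0 ∧ Linked (Cg g) ψ ψ1) ∧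
     (om (gC g) ψ2 ≠ 1 ∧ mult (res (Cg g) χ.1) ψ2 = 0 ∧ Linked (Cg g) ψ ψ2) := by
  classical
  set m := fun ψ => mult (res (Cg g) χ.1) ψ with hm
  have hinj := X.J_inj ψ
  have hJ := X.J_card ψ
  set Z := (Jset p l ψ).filter fun j => m (ψ.tw (l ^ j)) = 0 with hZ
  have h1 : e < #Z := by
    have h2 := deg_ge_sum (Cg g) χ ((Jset p l ψ).image fun j => ψ.tw (l ^ j))
    rw [sum_image hinj] at h2
    have h3 : #{j ∈ Jset p l ψ | ¬ m (ψ.tw (l ^ j)) = 0} ≤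
          ∑ x ∈ Jset p l ψ, mult (res (Cg g) χ.1) (ψ.tw (l ^ x)) * (ψ.tw (l ^ x)).deg := by
      rw [card_filter]
      apply sum_le_sum
      intro i _
      split_ifs with h
      · exact Nat.zero_le _
      · exact Nat.mul_pos (Nat.pos_of_ne_zero h) (ψ.tw (l ^ i)).deg_pos
    have h4 := card_filter_add_card_filter_not (s := Jset p l ψ) (fun j => m (ψ.tw (l ^ j)) = 0)
    have hZc : #Z = #{j ∈ Jset p l ψ | m (ψ.tw (l ^ j)) = 0} := by rw [hZ]
    have h5 := h3.trans h2
    rw [← hZc] at h4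
    omega
  have hZp : ∀ j ∈ Z, om (gC g) (ψ.tw (l ^ j)) ≠ 1 ∧ m (ψ.tw (l ^ j)) = 0 ∧ Linked (Cg g) ψ (ψ.tw (l ^ j)) := by
    intro j hj
    rw [hZ, mem_filter] at hj
    refine ⟨?_, hj.2, X.link ψ j⟩
    have := hj.1
    simp only [Jset, mem_filter] at this
    exact this.2
  obtain ⟨a, ha⟩ : Z.Nonempty := card_pos.1 (by omega)
  obtain ⟨b, hb, hab⟩ : ∃ b ∈ Z, ψ.tw (l ^ b) ∉ orb (Cg g) (ψ.tw (l ^ a)) := by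
    by_contra hcon
    push Not at hcon
    have h2 : Z.image (fun j => ψ.tw (l ^ j)) ⊆ orb (Cg g) (ψ.tw (l ^ a)) := by
      intro φ hφ
      obtain ⟨b, hb, rfl⟩ := mem_image.1 hφ
      exact hcon b hb
    have h3 := card_le_card h2
    rw [X.orb_card _ (hZp a ha).1, card_image_of_injOn (hinj.mono (by
      intro j hj; simp only [hZ, mem_coe, mem_filter] at hj ⊢; exact hj.1))] at h3
    omega
  exact ⟨_, _, not_mem_orb.1 hab, hZp a ha, hZp b hb⟩

lemma Ctx.uniq (X : Ctx p e g K l) (χ : Irr S) (hd : χ.deg + e < p - 1) (ψ φ : Irr (Cg g))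
    (hψ : om (gC g) ψ ≠ 1) (hφ : om (gC g) φ ≠ 1) (mψ : 0 < mult (res (Cg g) χ.1) ψ)
    (mφ : 0 < mult (res (Cg g) χ.1) φ) : ∃ n : Ng g, n • ψ = φ := by
  by_contra hne
  push Not at hne
  obtain ⟨ψ1, _, _, ⟨o1, z1, L1⟩, _⟩ := X.zeros χ hd ψ
  obtain ⟨φ1, hn1, o2, z2, L2⟩ : ∃ φ1, NC (Cg g) ψ1 φ1 ∧ om (gC g) φ1 ≠ 1 ∧
      mult (res (Cg g) χ.1) φ1 = 0 ∧ Linked (Cg g) φ φ1 := by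
    obtain ⟨φ1, φ2, h12, a1, a2⟩ := X.zeros χ hd φ
    by_cases h : NC (Cg g) ψ1 φ1
    · exact ⟨φ1, h, a1⟩
    · refine ⟨φ2, ?_, a2⟩
      intro n hn
      unfold NC at h
      push Not at h
      obtain ⟨n', hn'⟩ := h
      apply h12 (n * n'⁻¹)
      rw [← hn', mul_smul, inv_smul_smul, hn]
  have neq : ∀ a b : Irr (Cg g), 0 < mult (res (Cg g) χ.1) a → mult (res (Cg g) χ.1) b = 0 → NC (Cg g) a b := by
    intro a b ha hb n hn
    rw [← hn, nact_mult] at hb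
    omega
  exact bet_orth (Cg g) ψ ψ1 φ φ1 L1 L2 (neq _ _ mψ z1) (neq _ _ mφ z2) hne (neq _ _ mψ z2)
    (neq _ _ mφ z1).symm hn1 (X.cnt _ hψ) (X.cnt _ o1) (X.cnt _ hφ) (X.cnt _ o2) χ
    (by simp only [bet]; omega) (by simp only [bet]; omega)

lemma Ctx.mult_one (X : Ctx p e g K l) (χ : Irr S) (hd : χ.deg + e < p - 1) (ψ : Irr (Cg g))
    (hψ : om (gC g) ψ ≠ 1) (mψ : 0 < mult (res (Cg g) χ.1) ψ) : mult (res (Cg g) χ.1) ψ = 1 := by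
  obtain ⟨ψ1, _, _, ⟨o1, z1, L1⟩, _⟩ := X.zeros χ hd ψ
  have := bet_le_one (Cg g) ψ ψ1 L1 (by
    intro n hn
    rw [← hn, nact_mult] at z1
    omega) (X.cnt _ hψ) (X.cnt _ o1) χ
  simp only [bet, z1] at this
  omega

lemma Ctx.exists_om [IsSimpleGroup S] (X : Ctx p e g K l) (χ : Irr S) (hχ : χ ≠ trivIrr) :
    ∃ ψ : Irr (Cg g), om (gC g) ψ ≠ 1 ∧ 0 < mult (res (Cg g) χ.1) ψ := by
  by_contra hcon
  push Not at hcon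
  have := faithful_res χ hχ (Cg g) (gC g) (by
    intro ψ hψ x
    rw [om_mul (gC_comm g)]
    by_cases h : om (gC g) ψ = 1
    · rw [h, one_mul]
    · have := hcon ψ h; omega)
  exact X.g1 (congrArg Subtype.val this)

/-- distinct small characters have disjoint P-nontrivial parts -/
lemma Ctx.disj (X : Ctx p e g K l) (χ χ' : Irr S) (hd : χ.deg + e < p - 1) (hd' : χ'.deg + e < p - 1)
    (ψ : Irr (Cg g)) (hψ : om (gC g) ψ ≠ 1) (m1 : 0 < mult (res (Cg g) χ.1) ψ)
    (m2 : 0 < mult (res (Cg g) χ'.1) ψ) : χ = χ' := by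
  obtain ⟨ψ1, _, _, ⟨o1, z1, L1⟩, _⟩ := X.zeros χ hd ψ
  have hNC : NC (Cg g) ψ ψ1 := by
    intro n hn
    rw [← hn, nact_mult] at z1
    omega
  have z2 : mult (res (Cg g) χ'.1) ψ1 = 0 := by
    by_contra h
    obtain ⟨n, hn⟩ := X.uniq χ' hd' ψ ψ1 hψ o1 m2 (Nat.pos_of_ne_zero h)
    exact hNC n hn
  by_contra hne
  obtain ⟨j, hj, b1, b2, b3⟩ := two_sq _ Irr.deg Irr.deg_pos (bet_norm2 (Cg g) ψ ψ1 L1 hNC (X.cnt _ hψ) (X.cnt _ o1))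
    (bet_deg (Cg g) ψ ψ1 L1.1) χ (by simp only [bet]; omega)
  by_cases h : χ' = j
  · rw [← h] at b2
    simp only [bet] at b2
    omega
  · have := b3 χ' (Ne.symm hne) h
    simp only [bet] at this
    omega

end typ

end part14

section part15
set_option linter.all false
open scoped ComplexConjugate
open Finset
open scoped Pointwise

section sbound
variable {S : Type} [Group S] [Fintype S] {p e : ℕ} {g : S} {K : Subgroup S} {l : Cg g →* ℂˣ}

lemma Ctx.zN (X : Ctx p e g K l) : Subgroup.normalizer (Subgroup.zpowers g : Set S) = Ng g := by
  apply le_antisymm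
  · intro h hh
    apply X.mem_N_of
    have := (Subgroup.mem_normalizer_iff.1 hh g).1 (Subgroup.mem_zpowers g)
    obtain ⟨j, hj⟩ := this
    change g ^ j = _ at hj
    rw [← hj]
    exact (Cg g).zpow_mem (gC g).2 j
  · apply le_normalizer_of
    rintro x hx o ⟨i, rfl⟩
    obtain ⟨j, hj⟩ := X.conj_of_N x hx
    change x * g ^ i * x⁻¹ ∈ _
    rw [← conj_zpow, hj]
    exact Subgroup.zpow_mem _ (Subgroup.npow_mem_zpowers g j) i

/-- g as an element of its cyclic group -/
def gB (g : S) : Subgroup.zpowers g := ⟨g, Subgroup.mem_zpowers g⟩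

lemma gB_comm (g : S) : ∀ b, gB g * b = b * gB g := fun b => comm_zpowers g _ _

lemma Ctx.gBp (X : Ctx p e g K l) : (gB g) ^ p = 1 := Subtype.ext X.gp

lemma Ctx.zpow_nat (X : Ctx p e g K l) (x : S) (hx : x ∈ Subgroup.zpowers g) : ∃ j : ℕ, x = g ^ j := by
  obtain ⟨j, hj⟩ := mem_powers_iff_mem_zpowers.2 hx
  exact ⟨j, hj.symm⟩

lemma Ctx.om_ne (X : Ctx p e g K l) (μ : Irr (Subgroup.zpowers g)) (h : μ ≠ trivIrr) : om (gB g) μ ≠ 1 := by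
  intro h1
  apply h
  apply μ.eq_triv_of_const
  intro x
  obtain ⟨j, hj⟩ := X.zpow_nat x x.2
  have : x = (gB g) ^ j := Subtype.ext hj
  rw [this, om_pow_one (gB_comm g), h1, one_pow, one_mul, μ.one_eq]

lemma Ctx.zTI (X : Ctx p e g K l) (x : S) (hx : x ∈ Subgroup.zpowers g) (h1 : x ≠ 1) (h : S)
    (hh : h * x * h⁻¹ ∈ Subgroup.zpowers g) : h ∈ Ng g := by
  have hle : Subgroup.zpowers g ≤ Cg g := by rw [Subgroup.zpowers_le]; exact (gC g).2
  apply X.TI x (hle hx) _ h (hle hh)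
  intro hK
  apply h1
  apply eq_one_of_coprime_pow (pow_card_sub K hK) _ X.cop
  obtain ⟨j, rfl⟩ := X.zpow_nat x hx
  rw [← pow_mul, mul_comm, pow_mul, X.gp, one_pow]

lemma Ctx.zdeg (X : Ctx p e g K l) (μ : Irr (Subgroup.zpowers g)) : μ.deg = 1 :=
  Irr.deg_one_of_comm (comm_zpowers g) μ

lemma Ctx.zlink (X : Ctx p e g K l) (μ μ' : Irr (Subgroup.zpowers g)) : Linked (Subgroup.zpowers g) μ μ' := by
  refine ⟨by rw [X.zdeg, X.zdeg], fun x hx h hh => ?_⟩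
  rw [X.zN]
  apply X.zTI x x.2 _ h hh
  intro h1
  have : x = 1 := Subtype.ext h1
  apply hx
  rw [this, μ.one_eq, μ'.one_eq, X.zdeg, X.zdeg]

lemma Ctx.zcnt (X : Ctx p e g K l) (μ : Irr (Subgroup.zpowers g)) (h1 : μ ≠ trivIrr) :
    _root_.cnt (Subgroup.zpowers g) μ μ = Fintype.card (Cg g) := by
  classical
  have hle : Cg g ≤ Subgroup.normalizer (Subgroup.zpowers g : Set S) := by
    rw [X.zN]; exact Subgroup.le_normalizer
  rw [_root_.cnt, ← card_N_mem _ g hle]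
  congr 1
  ext n
  simp only [mem_filter, mem_univ, true_and]
  constructor
  · intro h
    obtain ⟨j, hj⟩ := X.conj_of_N (n : S)⁻¹ ((Ng g).inv_mem (X.zN ▸ n.2))
    have := stab_gen (Subgroup.zpowers g) (gB g) (gB_comm g) X.hp X.gBp μ (X.om_ne μ h1) n j (Subtype.ext hj) h
    have h3 : n • (gB g) = gB g := (inv_smul_eq_iff.1 this).symm
    have h4 := congrArg Subtype.val h3
    rw [coe_nact] at h4
    exact mem_Cg.2 (mul_inv_eq_iff_eq_mul.1 h4)
  · intro h
    apply Subtype.ext; funext x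
    rw [nact_apply]
    refine congrArg μ.1 ?_
    rw [inv_smul_eq_iff]
    apply Subtype.ext
    rw [coe_nact]
    obtain ⟨j, hj⟩ := X.zpow_nat x x.2
    rw [hj]
    rw [eq_mul_inv_iff_mul_eq]
    exact (Commute.pow_right (mem_Cg.1 h : Commute (n : S) g) j).eq.symm

lemma Ctx.zorb (X : Ctx p e g K l) (μ : Irr (Subgroup.zpowers g)) (h1 : μ ≠ trivIrr) :
    #(orb (Subgroup.zpowers g) μ) = e := by
  have := orb_card_mul (Subgroup.zpowers g) μ
  rw [X.zcnt μ h1, X.zN, X.hN, ← Nat.card_eq_fintype_card] at this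
  exact Nat.eq_of_mul_eq_mul_right Nat.card_pos this

lemma ntriv_orb (B : Subgroup S) (n : Subgroup.normalizer (B : Set S)) (μ : Irr B) (h : μ ≠ trivIrr) :
    n • μ ≠ trivIrr := by
  intro hn
  apply h
  have : μ = n⁻¹ • (trivIrr : Irr B) := by rw [← hn, inv_smul_smul]
  rw [this]
  apply Subtype.ext; funext x
  rw [nact_apply]; rfl

lemma Ctx.zcard (X : Ctx p e g K l) : Fintype.card (Subgroup.zpowers g) = p := by
  rw [← Nat.card_eq_fintype_card, Nat.card_zpowers, X.hg]

lemma Ctx.zM (X : Ctx p e g K l) : #((univ : Finset (Irr (Subgroup.zpowers g))).erase trivIrr) = p - 1 := by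
  rw [card_erase_of_mem (mem_univ _), card_univ, card_irr_comm (comm_zpowers g), X.zcard]

/-- zero and nonzero parts -/
lemma Ctx.zZW [IsSimpleGroup S] (X : Ctx p e g K l) (χ : Irr S) (hχ : χ ≠ trivIrr) (hd : χ.deg < p - 1) :
    ∃ Z W : Finset (Irr (Subgroup.zpowers g)), #Z + #W = p - 1 ∧ e ≤ #Z ∧ e ≤ #W ∧
     (∀ μ ∈ Z, μ ≠ trivIrr ∧ mult (res _ χ.1) μ = 0) ∧ (∀ μ ∈ W, μ ≠ trivIrr ∧ mult (res _ χ.1) μ ≠ 0) := by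
  classical
  set M := (univ : Finset (Irr (Subgroup.zpowers g))).erase trivIrr with hM
  refine ⟨M.filter fun μ => mult (res _ χ.1) μ = 0, M.filter fun μ => ¬ mult (res _ χ.1) μ = 0, ?_, ?_, ?_, ?_, ?_⟩
  · rw [card_filter_add_card_filter_not, X.zM]
  · obtain ⟨μ, hμ, h0⟩ : ∃ μ ∈ M, mult (res _ χ.1) μ = 0 := by
      by_contra hcon
      push Not at hcon
      have h2 := deg_ge_sum (Subgroup.zpowers g) χ M
      have h3 : #M • 1 ≤ ∑ ψ ∈ M, mult (res _ χ.1) ψ * ψ.deg := by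
        apply card_nsmul_le_sum
        intro μ hμ
        exact Nat.mul_pos (Nat.pos_of_ne_zero (hcon μ hμ)) μ.deg_pos
      rw [X.zM, smul_eq_mul, mul_one] at h3
      omega
    have hμ1 : μ ≠ trivIrr := (mem_erase.1 hμ).1
    rw [← X.zorb μ hμ1]
    apply card_le_card
    intro φ hφ
    obtain ⟨n, rfl⟩ := mem_orb.1 hφ
    rw [mem_filter, nact_mult]
    exact ⟨mem_erase.2 ⟨ntriv_orb _ n μ hμ1, mem_univ _⟩, h0⟩
  · obtain ⟨μ, hμ, h0⟩ : ∃ μ ∈ M, mult (res _ χ.1) μ ≠ 0 := by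
      by_contra hcon
      push Not at hcon
      have := faithful_res χ hχ (Subgroup.zpowers g) (gB g) (by
        intro ψ hψ x
        by_cases h : ψ = trivIrr
        · rw [h]; rfl
        · have := hcon ψ (mem_erase.2 ⟨h, mem_univ _⟩); omega)
      exact X.g1 (congrArg Subtype.val this)
    have hμ1 : μ ≠ trivIrr := (mem_erase.1 hμ).1
    rw [← X.zorb μ hμ1]
    apply card_le_card
    intro φ hφ
    obtain ⟨n, rfl⟩ := mem_orb.1 hφ
    rw [mem_filter, nact_mult]
    exact ⟨mem_erase.2 ⟨ntriv_orb _ n μ hμ1, mem_univ _⟩, h0⟩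
  · intro μ hμ
    rw [mem_filter] at hμ
    exact ⟨(mem_erase.1 hμ.1).1, hμ.2⟩
  · intro μ hμ
    rw [mem_filter] at hμ
    exact ⟨(mem_erase.1 hμ.1).1, hμ.2⟩

lemma Ctx.sbound [IsSimpleGroup S] (X : Ctx p e g K l) (T : Finset (Irr S))
    (hT : ∀ χ ∈ T, χ ≠ trivIrr ∧ χ.deg < p - 1) (hT0 : T.Nonempty) :
    2 * e ≤ p - 1 ∧ #T * e * p ≤ (p - 1) * Nat.card (Cg g) := by
  classical
  have h2e : 2 * e ≤ p - 1 := by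
    obtain ⟨χ, hχ⟩ := hT0
    obtain ⟨Z, W, h1, h2, h3, _⟩ := X.zZW χ (hT χ hχ).1 (hT χ hχ).2
    omega
  refine ⟨h2e, ?_⟩
  set B := Subgroup.zpowers g with hB
  set M := (univ : Finset (Irr B)).erase trivIrr with hM
  set Q := (M ×ˢ M).filter fun q => NC B q.1 q.2 with hQ
  have hMt : ∀ μ, μ ∈ M ↔ μ ≠ trivIrr := by intro μ; simp [hM]
  -- upper bound on Q
  have hQc : #Q ≤ (p - 1) * (p - 1 - e) := by
    have h1 : ∀ μ ∈ M, #(Q.filter fun q => q.1 = μ) ≤ p - 1 - e := by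
      intro μ hμ
      have hsub : (Q.filter fun q => q.1 = μ) ⊆ (M \ orb B μ).image fun φ => (μ, φ) := by
        rintro ⟨a, b⟩ hq
        rw [mem_filter, hQ, mem_filter, mem_product] at hq
        obtain ⟨⟨⟨_, hb⟩, hnc⟩, rfl⟩ := hq
        exact mem_image.2 ⟨b, mem_sdiff.2 ⟨hb, not_mem_orb.2 hnc⟩, rfl⟩
      refine (card_le_card hsub).trans (card_image_le.trans ?_)
      rw [card_sdiff_of_subset, X.zM, X.zorb μ ((hMt μ).1 hμ)]
      intro φ hφ
      obtain ⟨n, rfl⟩ := mem_orb.1 hφ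
      exact (hMt _).2 (ntriv_orb _ n μ ((hMt μ).1 hμ))
    have h2 := card_le_mul_card_image_of_maps_to (s := Q) (t := M) (f := fun q => q.1) (by
      intro q hq
      rw [hQ, mem_filter, mem_product] at hq
      exact hq.1.1) (p - 1 - e) h1
    rw [X.zM] at h2
    rw [mul_comm]; exact h2
  have hup : (p : ℤ) * ∑ q ∈ Q, ∑ χ : Irr S, bet B q.1 q.2 χ ^ 2 = #Q * (2 * Nat.card (Cg g)) := by
    rw [mul_sum, ← nsmul_eq_mul, ← sum_const]
    apply sum_congr rfl
    intro q hq
    rw [hQ, mem_filter, mem_product, hMt, hMt] at hq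
    have := bet_norm B q.1 q.2 (X.zlink _ _) hq.2
    rw [X.zcard, X.zcnt _ hq.1.1, X.zcnt _ hq.1.2] at this
    rw [this, Nat.card_eq_fintype_card]; ring
  have hlow : ∀ χ ∈ T, (2 * (e * (p - 1 - e) : ℕ) : ℤ) ≤ ∑ q ∈ Q, bet B q.1 q.2 χ ^ 2 := by
    intro χ hχ
    obtain ⟨Z, W, h1, h2, h3, h4, h5⟩ := X.zZW χ (hT χ hχ).1 (hT χ hχ).2
    have hnc : ∀ z ∈ Z, ∀ w ∈ W, NC B z w := by
      intro z hz w hw n hn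
      apply (h5 w hw).2
      rw [← hn, nact_mult]; exact (h4 z hz).2
    have hdis : Disjoint (Z ×ˢ W) (W ×ˢ Z) := by
      rw [disjoint_left]
      rintro ⟨a, b⟩ ha hb
      rw [mem_product] at ha hb
      exact (h5 a hb.1).2 (h4 a ha.1).2
    have hsub : (Z ×ˢ W) ∪ (W ×ˢ Z) ⊆ Q := by
      rintro ⟨a, b⟩ hab
      rw [mem_union, mem_product, mem_product] at hab
      rw [hQ, mem_filter, mem_product, hMt, hMt]
      rcases hab with ⟨ha, hb⟩ | ⟨ha, hb⟩
      · exact ⟨⟨(h4 a ha).1, (h5 b hb).1⟩, hnc a ha b hb⟩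
      · exact ⟨⟨(h5 a ha).1, (h4 b hb).1⟩, (hnc b hb a ha).symm⟩
    have h6 : ∀ q ∈ (Z ×ˢ W) ∪ (W ×ˢ Z), (1 : ℤ) ≤ bet B q.1 q.2 χ ^ 2 := by
      rintro ⟨a, b⟩ hab
      rw [mem_union, mem_product, mem_product] at hab
      have : bet B a b χ ≠ 0 := by
        rcases hab with ⟨ha, hb⟩ | ⟨ha, hb⟩
        · have i1 : mult (res B χ.1) a = 0 := (h4 a ha).2
          have i2 : mult (res B χ.1) b ≠ 0 := (h5 b hb).2
          simp only [bet]; omega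
        · have i1 : mult (res B χ.1) a ≠ 0 := (h5 a ha).2
          have i2 : mult (res B χ.1) b = 0 := (h4 b hb).2
          simp only [bet]; omega
      have : 0 < bet B a b χ ^ 2 := by positivity
      exact this
    have h7 := card_nsmul_le_sum _ _ _ h6
    have h8 := sum_le_sum_of_subset_of_nonneg hsub (f := fun q => bet B q.1 q.2 χ ^ 2)
      (fun _ _ _ => sq_nonneg _)
    refine le_trans ?_ (h7.trans h8)
    rw [card_union_of_disjoint hdis, card_product, card_product, nsmul_eq_mul, mul_one]
    obtain ⟨z', hz⟩ := Nat.exists_eq_add_of_le h2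
    obtain ⟨w', hw⟩ := Nat.exists_eq_add_of_le h3
    have h9 : p - 1 - e = e + z' + w' := by omega
    rw [h9, hz, hw]
    push_cast
    have : (0 : ℤ) ≤ z' * w' := by positivity
    nlinarith
  have h10 := card_nsmul_le_sum T (fun χ => ∑ q ∈ Q, bet B q.1 q.2 χ ^ 2) _ hlow
  have h11 : ∑ χ ∈ T, ∑ q ∈ Q, bet B q.1 q.2 χ ^ 2 ≤ ∑ q ∈ Q, ∑ χ : Irr S, bet B q.1 q.2 χ ^ 2 := by
    rw [sum_comm]
    apply sum_le_sum
    intro q _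
    exact sum_le_sum_of_subset_of_nonneg (subset_univ _) (fun _ _ _ => sq_nonneg _)
  have h12 : #T * (2 * (e * (p - 1 - e))) * p ≤ #Q * (2 * Nat.card (Cg g)) := by
    have : ((#T * (2 * (e * (p - 1 - e))) * p : ℕ) : ℤ) ≤ ((#Q * (2 * Nat.card (Cg g)) : ℕ) : ℤ) := by
      rw [Nat.cast_mul (#Q), Nat.cast_mul 2 (Nat.card _), Nat.cast_two, ← hup]
      rw [nsmul_eq_mul] at h10
      have hp0 : (0 : ℤ) ≤ p := by positivity
      have := mul_le_mul_of_nonneg_left (h10.trans h11) hp0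
      refine le_trans (le_of_eq ?_) this
      push_cast
      ring
    exact_mod_cast this
  have h13 : #Q * (2 * Nat.card (Cg g)) ≤ (p - 1) * (p - 1 - e) * (2 * Nat.card (Cg g)) :=
    Nat.mul_le_mul_right _ hQc
  have hpos : 0 < 2 * (p - 1 - e) := by
    have := X.hp.two_le
    omega
  refine le_of_mul_le_mul_left ?_ hpos
  calc _ = #T * (2 * (e * (p - 1 - e))) * p := by ring
    _ ≤ _ := h12.trans h13
    _ = _ := by ring

end sbound

end part15

section part16
set_option linter.all false
open scoped ComplexConjugate
open Finset
open scoped Pointwise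

section norms
variable {B : Type} [Group B] [Fintype B]

lemma norm_sum (m : Irr B → ℕ) (T : Finset (Irr B)) :
    ∑ x : B, ‖∑ φ ∈ T, (m φ : ℂ) * φ.1 x‖ ^ 2 = Fintype.card B * ∑ φ ∈ T, (m φ : ℝ) ^ 2 := by
  classical
  have h1 := ip_self_eq (∑ φ ∈ T, (m φ : ℂ) • φ.1)
  rw [ip_sum_left] at h1
  simp only [ip_sum_right, ip_smul_left, ip_smul_right, ip_irr] at h1
  have h2 : ∑ i ∈ T, ∑ i_1 ∈ T, conj (m i_1 : ℂ) * ((m i : ℂ) * if i = i_1 then 1 else 0) =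
      ((∑ φ ∈ T, (m φ : ℝ) ^ 2 : ℝ) : ℂ) := by
    push_cast
    apply sum_congr rfl
    intro i hi
    rw [sum_eq_single i]
    · simp; ring
    · intro b _ hb; simp [hb.symm]
    · intro h; exact absurd hi h
  rw [h2] at h1
  have h3 := Complex.ofReal_injective h1
  have h4 : (Fintype.card B : ℝ) ≠ 0 := by simp
  rw [h3, ← mul_assoc, mul_inv_cancel₀ h4, one_mul]
  apply sum_congr rfl
  intro x _
  rw [Finset.sum_apply]
  rfl

lemma norm_irr (ψ : Irr B) : ∑ x : B, ‖ψ.1 x‖ ^ 2 = Fintype.card B := by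
  have := norm_sum (fun _ => 1) {ψ}
  simpa using this

lemma cs_bound {ι : Type*} (s : Finset ι) (a : ι → ℂ) (t : ℂ) (hs : s.Nonempty) :
    ‖∑ i ∈ s, a i + t‖ ^ 2 ≤ (#s + 1) * (∑ i ∈ s, ‖a i‖ ^ 2 + ‖t‖ ^ 2) := by
  have h1 : ‖∑ i ∈ s, a i + t‖ ≤ ∑ i ∈ s, ‖a i‖ + ‖t‖ := (norm_add_le _ _).trans (by gcongr; exact norm_sum_le _ _)
  have h2 := sq_sum_le_card_mul_sum_sq (s := s) (f := fun i => ‖a i‖)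
  set u := ∑ i ∈ s, ‖a i‖
  set A := ∑ i ∈ s, ‖a i‖ ^ 2
  have hc : (0 : ℝ) < #s := by exact_mod_cast hs.card_pos
  have h3 : ‖∑ i ∈ s, a i + t‖ ^ 2 ≤ (u + ‖t‖) ^ 2 := by gcongr
  refine h3.trans ?_
  have h4 : (#s : ℝ) * (u + ‖t‖) ^ 2 ≤ #s * ((#s + 1) * (A + ‖t‖ ^ 2)) := by
    nlinarith [sq_nonneg (u - #s * ‖t‖)]
  exact le_of_mul_le_mul_left h4 hc

end norms

section xi
variable {S : Type} [Group S] [Fintype S] {p e : ℕ} {g : S} {K : Subgroup S} {l : Cg g →* ℂˣ}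

open Classical in
lemma Ctx.normA (X : Ctx p e g K l) (χ : Irr S) :
    ∑ y ∈ (univ : Finset (Cg g)).filter fun y : Cg g => (y : S) ∉ K, ‖χ.1 y‖ ^ 2 < e * Nat.card (Cg g) := by
  set A : Finset (Cg g) := univ.filter fun y : Cg g => (y : S) ∉ K with hA
  set Q : Finset (S × Cg g) := univ ×ˢ A with hQ
  set N := Nat.card (Ng g) with hNdef
  have h1 : ∑ q ∈ Q, ‖χ.1 (q.1 * q.2 * q.1⁻¹)‖ ^ 2 = Fintype.card S * ∑ y ∈ A, ‖χ.1 y‖ ^ 2 := by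
    rw [hQ, sum_product]
    simp only [χ.isCh.conj_inv]
    rw [sum_const, card_univ, nsmul_eq_mul]
  have h2 := sum_fiberwise Q (fun q => q.1 * (q.2 : S) * q.1⁻¹) (fun q => ‖χ.1 (q.1 * q.2 * q.1⁻¹)‖ ^ 2)
  have h3 : ∀ z : S, ∑ q ∈ Q with q.1 * (q.2 : S) * q.1⁻¹ = z, ‖χ.1 (q.1 * q.2 * q.1⁻¹)‖ ^ 2 ≤
      if z = 1 then 0 else (N : ℝ) * ‖χ.1 z‖ ^ 2 := by
    intro z
    have e1 : ∑ q ∈ Q with q.1 * (q.2 : S) * q.1⁻¹ = z, ‖χ.1 (q.1 * q.2 * q.1⁻¹)‖ ^ 2 =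
        #{q ∈ Q | q.1 * (q.2 : S) * q.1⁻¹ = z} * ‖χ.1 z‖ ^ 2 := by
      rw [← nsmul_eq_mul, ← sum_const]
      apply sum_congr rfl
      intro q hq
      rw [(mem_filter.1 hq).2]
    rw [e1]
    split_ifs with hz
    · have : #{q ∈ Q | q.1 * (q.2 : S) * q.1⁻¹ = z} = 0 := by
        rw [card_eq_zero, filter_eq_empty_iff]
        rintro ⟨h, y⟩ hq hy
        rw [hz] at hy
        rw [hQ, mem_product, hA, mem_filter] at hq
        apply hq.2.2
        have : (y : S) = 1 := by simpa using hy
        change (y : S) ∈ K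
        rw [this]; exact K.one_mem
      rw [this]; simp
    · gcongr
      norm_cast
      by_cases hne : ({q ∈ Q | q.1 * (q.2 : S) * q.1⁻¹ = z} : Finset _).Nonempty
      · obtain ⟨⟨h0, y0⟩, hq0⟩ := hne
        rw [mem_filter, hQ, mem_product, hA, mem_filter] at hq0
        have hy0 : (y0 : S) ∉ K := hq0.1.2.2
        have hz0 : h0 * (y0 : S) * h0⁻¹ = z := hq0.2
        have hN : N = #((univ : Finset S).filter fun x => x ∈ Ng g) := by
          rw [hNdef, Nat.card_eq_fintype_card, Fintype.card_subtype]
        rw [hN]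
        apply card_le_card_of_injOn (fun q => q.1⁻¹ * h0)
        · rintro ⟨h, y⟩ hq
          rw [mem_coe, mem_filter] at hq
          rw [mem_coe, mem_filter]
          refine ⟨mem_univ _, ?_⟩
          apply X.TI y0 y0.2 hy0
          have : h⁻¹ * h0 * (y0 : S) * (h⁻¹ * h0)⁻¹ = y := by
            have hh : h * (y : S) * h⁻¹ = z := hq.2
            have : h⁻¹ * h0 * (y0 : S) * (h⁻¹ * h0)⁻¹ = h⁻¹ * (h0 * y0 * h0⁻¹) * h := by group
            rw [this, hz0, ← hh]; group
          rw [this]; exact y.2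
        · rintro ⟨h, y⟩ hq ⟨h', y'⟩ hq' heq
          rw [mem_coe, mem_filter] at hq hq'
          have e2 : h = h' := by simpa using heq
          subst e2
          have e3 : h * (y : S) * h⁻¹ = h * (y' : S) * h⁻¹ := hq.2.trans hq'.2.symm
          have e4 : y = y' := Subtype.ext (by simpa using e3)
          rw [e4]
      · rw [not_nonempty_iff_eq_empty.1 hne]; simp
  have h4 : Fintype.card S * ∑ y ∈ A, ‖χ.1 y‖ ^ 2 ≤ ∑ z : S, if z = 1 then 0 else (N : ℝ) * ‖χ.1 z‖ ^ 2 := by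
    rw [← h1, ← h2]
    exact sum_le_sum fun z _ => h3 z
  have h5 : (∑ z : S, if z = 1 then 0 else (N : ℝ) * ‖χ.1 z‖ ^ 2) < ∑ z : S, (N : ℝ) * ‖χ.1 z‖ ^ 2 := by
    have hNpos : 0 < (N : ℝ) := by exact_mod_cast Nat.card_pos
    apply sum_lt_sum
    · intro z _
      split_ifs
      · positivity
      · rfl
    · refine ⟨1, mem_univ _, ?_⟩
      rw [if_pos rfl, χ.one_eq]
      have : (0 : ℝ) < χ.deg := by exact_mod_cast χ.deg_pos
      simp only [Complex.norm_natCast]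
      positivity
  rw [← mul_sum, norm_irr χ] at h5
  have h6 : (N : ℝ) = e * Nat.card (Cg g) := by rw [hNdef, X.hN]; push_cast; rfl
  rw [h6] at h4 h5
  have hS : (0 : ℝ) < Fintype.card S := by exact_mod_cast Fintype.card_pos
  have h7 := h4.trans_lt h5
  rw [mul_comm] at h7
  exact lt_of_mul_lt_mul_right h7 hS.le

open Classical in
/-- sums over K of functions invariant under g -/
lemma Ctx.sumK (X : Ctx p e g K l) (R : Cg g → ℝ) (h0 : ∀ y, 0 ≤ R y) (hR : ∀ y, R (gC g * y) = R y) :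
    p * ∑ y ∈ (univ : Finset (Cg g)).filter fun y : Cg g => (y : S) ∈ K, R y ≤ ∑ y : Cg g, R y := by
  have hRj : ∀ j : ℕ, ∀ y, R ((gC g) ^ j * y) = R y := by
    intro j
    induction j with
    | zero => intro y; simp
    | succ j ih => intro y; rw [pow_succ, mul_assoc, ih, hR]
  set F : Finset (Cg g) := univ.filter fun y : Cg g => (y : S) ∈ K with hF
  have h1 : p * ∑ y ∈ F, R y = ∑ q ∈ range p ×ˢ F, R ((gC g) ^ q.1 * q.2) := by
    rw [sum_product]
    simp only [hRj]
    simp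
  have hinj : Set.InjOn (fun q : ℕ × Cg g => (gC g) ^ q.1 * q.2) (range p ×ˢ F : Finset (ℕ × Cg g)) := by
    rintro ⟨i, y⟩ hq ⟨j, y'⟩ hq' heq
    rw [mem_coe, mem_product, hF, mem_filter, mem_range] at hq hq'
    have heq' : (gC g) ^ i * y = (gC g) ^ j * y' := heq
    have h2 : g ^ i * (y : S) = g ^ j * (y' : S) := congrArg Subtype.val heq'
    have h4 : g ^ (-(j : ℤ) + i) = (y' : S) * (y : S)⁻¹ := by
      rw [zpow_add, zpow_neg, zpow_natCast, zpow_natCast, eq_mul_inv_iff_mul_eq, mul_assoc, h2]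
      group
    have h5 : (y' : S) * (y : S)⁻¹ = 1 := by
      have hm : (y' : S) * (y : S)⁻¹ ∈ K := K.mul_mem hq'.2.2 (K.inv_mem hq.2.2)
      refine eq_one_of_coprime_pow (pow_card_sub K hm) ?_ X.cop
      rw [← h4, ← zpow_natCast, ← zpow_mul, mul_comm, zpow_mul, zpow_natCast, X.gp, one_zpow]
    have h6 : y' = y := Subtype.ext (mul_inv_eq_one.1 h5)
    have h7 : g ^ i = g ^ j := by rw [h6] at h2; exact mul_right_cancel h2
    have h8 : i = j := by
      have a1 := hq.1; have a2 := hq'.1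
      simp only at a1 a2
      rw [← X.hg] at a1 a2
      exact pow_injOn_Iio_orderOf a1 a2 h7
    rw [h6, h8]
  rw [h1, ← sum_image (f := R) hinj]
  exact sum_le_sum_of_subset_of_nonneg (subset_univ _) (fun y _ _ => h0 y)

open Classical in
lemma Ctx.xi_zero [IsSimpleGroup S] (X : Ctx p e g K l) (χ : Irr S) (hχ : χ ≠ trivIrr)
    (hd : χ.deg + e < p - 1) (hpe : (e + 1) ^ 2 ≤ p) (φ : Irr (Cg g)) (hφ : om (gC g) φ = 1) :
    mult (res (Cg g) χ.1) φ = 0 := by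
  by_contra hcon
  obtain ⟨ψ, hψ, mψ⟩ := X.exists_om χ hχ
  set m := mult (res (Cg g) χ.1) with hm
  set O := orb (Cg g) ψ with hO
  set Φ : Finset (Irr (Cg g)) := univ.filter fun φ => om (gC g) φ = 1 with hΦ
  have hOc : #O = e := X.orb_card ψ hψ
  have hOne : O.Nonempty := ⟨ψ, mem_orb.2 ⟨1, one_smul _ _⟩⟩
  have hepos : 0 < e := by rw [← hOc]; exact hOne.card_pos
  have hOm : ∀ θ ∈ O, m θ = 1 := by
    intro θ hθ
    obtain ⟨n, rfl⟩ := mem_orb.1 hθ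
    rw [hm, nact_mult]
    exact X.mult_one χ hd ψ hψ mψ
  have hdis : Disjoint O Φ := by
    rw [disjoint_left]
    intro θ hθ hθ'
    obtain ⟨n, rfl⟩ := mem_orb.1 hθ
    exact X.om_orb ψ hψ n (mem_filter.1 hθ').2
  have hrest : ∀ θ, θ ∉ O ∪ Φ → m θ = 0 := by
    intro θ hθ
    rw [mem_union, not_or] at hθ
    by_contra h
    apply hθ.1
    apply mem_orb.2
    exact X.uniq χ hd ψ θ hψ (by intro h1; exact hθ.2 (mem_filter.2 ⟨mem_univ _, h1⟩)) mψ (Nat.pos_of_ne_zero h)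
  set ξ : Cg g → ℂ := fun y => ∑ φ ∈ Φ, (m φ : ℂ) * φ.1 y with hξ
  have hsplit : ∀ y : Cg g, χ.1 y = ∑ θ ∈ O, θ.1 y + ξ y := by
    intro y
    have := (χ.isCh.res (Cg g)).expand y
    change χ.1 y = _ at this
    rw [this, ← sum_subset (subset_univ (O ∪ Φ)), sum_union hdis]
    · congr 1
      apply sum_congr rfl
      intro θ hθ
      have := hOm θ hθ
      rw [hm] at this
      rw [this]; simp
    · intro θ _ hθ
      have := hrest θ hθ
      rw [hm] at this
      rw [this]; simp
  set x2 := ∑ φ ∈ Φ, m φ ^ 2 with hx2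
  have hx2pos : 1 ≤ x2 := by
    have h1 : φ ∈ Φ := mem_filter.2 ⟨mem_univ _, hφ⟩
    have h2 := single_le_sum (f := fun φ => m φ ^ 2) (fun _ _ => Nat.zero_le _) h1
    have h3 : 0 < m φ ^ 2 := by have := Nat.pos_of_ne_zero hcon; positivity
    exact le_trans h3 h2
  set R : Cg g → ℝ := fun y => ∑ θ ∈ O, ‖θ.1 y‖ ^ 2 + ‖ξ y‖ ^ 2 with hRdef
  have hRsum : ∑ y, R y = Nat.card (Cg g) * (e + x2) := by
    simp only [hRdef]
    rw [sum_add_distrib, sum_comm]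
    simp only [norm_irr]
    rw [hξ, norm_sum, sum_const, hOc, Nat.card_eq_fintype_card, hx2]
    push_cast
    simp
    ring
  have hnorm1 : ∀ θ : Irr (Cg g), ‖om (gC g) θ‖ = 1 := fun θ =>
    Complex.norm_eq_one_of_pow_eq_one (om_pow (gC_comm g) θ X.gCp) X.hp.ne_zero
  have hRinv : ∀ y, R (gC g * y) = R y := by
    intro y
    simp only [hRdef]
    congr 1
    · apply sum_congr rfl
      intro θ _
      rw [om_mul (gC_comm g), norm_mul, hnorm1, one_mul]
    · congr 2
      simp only [hξ]
      apply sum_congr rfl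
      intro θ hθ
      rw [om_mul (gC_comm g), (mem_filter.1 hθ).2, one_mul]
  have hK := X.sumK R (fun y => by positivity) hRinv
  have hA := X.normA χ
  have htot := res_norm (Cg g) χ.1 χ.isCh
  have hm2 : (∑ ψ : Irr (Cg g), mult (res (Cg g) χ.1) ψ ^ 2 : ℕ) = e + x2 := by
    rw [← sum_subset (subset_univ (O ∪ Φ)), sum_union hdis]
    · congr 1
      rw [← hOc, card_eq_sum_ones]
      apply sum_congr rfl
      intro θ hθ
      have := hOm θ hθ
      rw [hm] at this
      rw [this]; rfl
    · intro θ _ hθ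
      have := hrest θ hθ
      rw [hm] at this
      rw [this]; rfl
  rw [hm2, ← Nat.card_eq_fintype_card] at htot
  have hsp := sum_filter_add_sum_filter_not (univ : Finset (Cg g)) (fun y => (y : S) ∈ K) (fun y => ‖χ.1 y‖ ^ 2)
  have hKχ : ∑ y ∈ (univ : Finset (Cg g)).filter fun y : Cg g => (y : S) ∈ K, ‖χ.1 y‖ ^ 2 ≤ (e + 1) * ∑ y ∈ (univ : Finset (Cg g)).filter fun y : Cg g => (y : S) ∈ K, R y := by
    rw [mul_sum]
    apply sum_le_sum
    intro y _
    rw [hsplit y, ← hOc]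
    exact cs_bound O (fun θ => θ.1 y) (ξ y) hOne
  rw [hRsum] at hK
  set c := (Nat.card (Cg g) : ℝ) with hc
  have hcpos : 0 < c := by rw [hc]; exact_mod_cast Nat.card_pos
  set a := ∑ y ∈ (univ : Finset (Cg g)).filter fun y : Cg g => (y : S) ∈ K, ‖χ.1 y‖ ^ 2
  set r := ∑ y ∈ (univ : Finset (Cg g)).filter fun y : Cg g => (y : S) ∈ K, R y
  rw [htot] at hsp
  have hp0 : (0 : ℝ) < p := by exact_mod_cast X.hp.pos
  have f1 : (p : ℝ) * a ≤ (e + 1) * (c * (e + x2)) := by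
    calc (p : ℝ) * a ≤ p * ((e + 1) * r) := by gcongr
      _ = (e + 1) * (p * r) := by ring
      _ ≤ _ := by gcongr
  have f2 : c * x2 < a := by push_cast at hsp; linarith
  have f3 : (p : ℝ) * (c * x2) < (e + 1) * (c * (e + x2)) := lt_of_lt_of_le (by gcongr) f1
  have f4 : (p : ℝ) * x2 < (e + 1) * (e + x2) := by
    have : c * ((p : ℝ) * x2) < c * ((e + 1) * (e + x2)) := by linarith
    exact lt_of_mul_lt_mul_left this hcpos.le
  have f5 : p * x2 < (e + 1) * (e + x2) := by exact_mod_cast f4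
  nlinarith [Nat.mul_le_mul_right x2 hpe, Nat.mul_le_mul_left (e * (e + 1)) hx2pos]

end xi

end part16

section part17
set_option linter.all false

section numeric

lemma num1_poly (p e : ℤ) (he : 2 ≤ e) (h2e : 2 * e ≤ p - 1) (hp8 : p ≠ 8) (hpe : p ≤ e ^ 2 + 2 * e) :
    e * p ^ 2 * (p - 2) + p * (p - 1) * (p - 3) * (p + 1) < e ^ 2 * (p + 1) * (2 * p ^ 2 - 6 * p + 3) := by
  by_cases h4 : 4 ≤ e
  · have h1 : p * ((p - 1) * (p - 3) * (p + 1)) ≤ (e ^ 2 + 2 * e) * ((p - 1) * (p - 3) * (p + 1)) := by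
      apply mul_le_mul_of_nonneg_right hpe
      have a : 0 ≤ p - 1 := by linarith
      have b : 0 ≤ p - 3 := by linarith
      have c : 0 ≤ p + 1 := by linarith
      positivity
    have h2 : p ^ 2 * (p - 2) < (p + 1) * (e * (2 * p ^ 2 - 6 * p + 3) - (e + 2) * (p ^ 2 - 4 * p + 3)) := by
      obtain ⟨y, rfl⟩ : ∃ y, e = 4 + y := ⟨e - 4, by ring⟩
      obtain ⟨x, rfl⟩ : ∃ x, p = 9 + x := ⟨p - 9, by ring⟩
      have hy : 0 ≤ y := by linarith
      have hx : 0 ≤ x := by linarith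
      rw [← sub_pos]
      ring_nf
      positivity
    have h3 : 0 < e * ((p + 1) * (e * (2 * p ^ 2 - 6 * p + 3) - (e + 2) * (p ^ 2 - 4 * p + 3)) - p ^ 2 * (p - 2)) := by
      apply mul_pos <;> linarith
    nlinarith
  · have : e ≤ 3 := by linarith
    interval_cases e
    · have h5 : 5 ≤ p := by linarith
      have h6 : p ≤ 8 := by linarith
      interval_cases p <;> first | (exact absurd rfl hp8) | norm_num
    · have h5 : 7 ≤ p := by linarith
      have h6 : p ≤ 15 := by linarith
      interval_cases p <;> norm_num

lemma num1 (p e κ s k N : ℤ) (he : 2 ≤ e) (h2e : 2 * e ≤ p - 1) (hp8 : p ≠ 8) (hκ : 1 ≤ κ)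
    (hs0 : 0 ≤ s) (hs : s * e ≤ (p - 1) * κ) (hN : (p + 1) * e * p * κ ≤ N) (hk : 3 * N ≤ p ^ 2 * k)
    (hc : (p - 1) ^ 2 * k + 1 + 4 * s ≤ N + (p - 1) ^ 2 * (1 + s)) : (e + 1) ^ 2 ≤ p := by
  by_contra hcon
  have hpe : p ≤ e ^ 2 + 2 * e := by nlinarith
  have hpoly := num1_poly p e he h2e hp8 hpe
  have hp : 5 ≤ p := by linarith
  have hA : 0 ≤ 2 * p ^ 2 - 6 * p + 3 := by nlinarith
  have hB : 0 ≤ p ^ 2 * ((p - 1) ^ 2 - 4) := by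
    apply mul_nonneg (sq_nonneg _); nlinarith
  have hC : 0 ≤ p ^ 2 * ((p - 1) ^ 2 - 1) := by
    apply mul_nonneg (sq_nonneg _); nlinarith
  have h1 : N * (2 * p ^ 2 - 6 * p + 3) ≤ p ^ 2 * ((p - 1) ^ 2 - 1) + s * (p ^ 2 * ((p - 1) ^ 2 - 4)) := by
    have a1 := mul_le_mul_of_nonneg_left hk (sq_nonneg (p - 1))
    have a2 := mul_le_mul_of_nonneg_left hc (sq_nonneg p)
    linarith
  have h2 : e * (N * (2 * p ^ 2 - 6 * p + 3)) ≤ e * (p ^ 2 * ((p - 1) ^ 2 - 1)) +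
      (p - 1) * κ * (p ^ 2 * ((p - 1) ^ 2 - 4)) := by
    have a1 := mul_le_mul_of_nonneg_left h1 (by linarith : (0 : ℤ) ≤ e)
    have a2 := mul_le_mul_of_nonneg_right hs hB
    linarith
  have h3 : e * ((p + 1) * e * p * κ * (2 * p ^ 2 - 6 * p + 3)) ≤ e * (N * (2 * p ^ 2 - 6 * p + 3)) := by
    apply mul_le_mul_of_nonneg_left _ (by linarith)
    exact mul_le_mul_of_nonneg_right hN hA
  have h4 : e * (p ^ 2 * ((p - 1) ^ 2 - 1)) ≤ κ * (e * (p ^ 2 * ((p - 1) ^ 2 - 1))) := by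
    have : 0 ≤ e * (p ^ 2 * ((p - 1) ^ 2 - 1)) := mul_nonneg (by linarith) hC
    nlinarith
  have h5 : (κ * p) * (e ^ 2 * (p + 1) * (2 * p ^ 2 - 6 * p + 3)) ≤
      (κ * p) * (e * p ^ 2 * (p - 2) + p * (p - 1) * (p - 3) * (p + 1)) := by
    linarith
  have h6 : 0 < κ * p := by apply mul_pos <;> linarith
  have := le_of_mul_le_mul_left h5 h6
  linarith

lemma num2 (p e κ t k N D2 q : ℤ) (hp : 0 < p) (he : 0 < e) (hκ : 1 ≤ κ) (b : ℤ) (ht : 0 ≤ t)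
    (hq : 0 < q) (hqD : q ≤ D2) (hqb : q ≤ b ^ 2)
    (hD : t * D2 ≤ e * p * κ) (hN : (p + 1) * e * p * κ ≤ N) (hk : 3 * N ≤ p ^ 2 * k)
    (hb : p ^ 2 ≤ 3 * b ^ 2)
    (hc : b ^ 2 * k + 1 + t * D2 ≤ N + b ^ 2 * (1 + t)) :
    (p + 1) * (3 * b ^ 2 - p ^ 2) * (e * q) ≤ p * b ^ 2 * q + p ^ 2 * e * (b ^ 2 - q) := by
  have h1 : N * (3 * b ^ 2 - p ^ 2) ≤ p ^ 2 * b ^ 2 + p ^ 2 * (t * b ^ 2 - t * D2) := by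
    have a1 := mul_le_mul_of_nonneg_left hk (sq_nonneg b)
    have a2 := mul_le_mul_of_nonneg_left hc (sq_nonneg p)
    nlinarith [sq_nonneg p]
  have htq : t * q ≤ e * p * κ := le_trans (mul_le_mul_of_nonneg_left hqD ht) hD
  have h2 : q * (t * b ^ 2 - t * D2) ≤ e * p * κ * (b ^ 2 - q) := by
    have a1 := mul_le_mul_of_nonneg_right htq (by linarith : 0 ≤ b ^ 2 - q)
    have a2 : t * q ≤ t * D2 := mul_le_mul_of_nonneg_left hqD ht
    nlinarith
  have h3 : (p + 1) * e * p * κ * (3 * b ^ 2 - p ^ 2) * q ≤ N * (3 * b ^ 2 - p ^ 2) * q := by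
    apply mul_le_mul_of_nonneg_right _ hq.le
    exact mul_le_mul_of_nonneg_right hN (by linarith)
  have h4 : N * (3 * b ^ 2 - p ^ 2) * q ≤ p ^ 2 * b ^ 2 * q + p ^ 2 * (e * p * κ * (b ^ 2 - q)) := by
    have a1 := mul_le_mul_of_nonneg_right h1 hq.le
    have a2 := mul_le_mul_of_nonneg_left h2 (sq_nonneg p)
    linarith
  have h5 : p ^ 2 * b ^ 2 * q ≤ κ * (p ^ 2 * b ^ 2 * q) := by
    have : 0 ≤ p ^ 2 * b ^ 2 * q := by positivity
    nlinarith
  have h6 : (κ * p) * ((p + 1) * (3 * b ^ 2 - p ^ 2) * (e * q)) ≤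
      (κ * p) * (p * b ^ 2 * q + p ^ 2 * e * (b ^ 2 - q)) := by linarith
  exact le_of_mul_le_mul_left h6 (by apply mul_pos <;> linarith)

lemma num2_poly (p e b : ℤ) (he : 2 ≤ e) (hpe : (e + 1) ^ 2 ≤ p) (hb : b = p - 1 - e)
    (h2 : e = 2 → 16 ≤ p) (h3 : e = 3 → 19 ≤ p) :
    p * b ^ 2 * (b + 1) + p ^ 2 * e * (b ^ 2 - (b + 1)) < (p + 1) * (3 * b ^ 2 - p ^ 2) * (e * (b + 1)) := by
  subst hb
  rw [← sub_pos]
  by_cases h4 : 4 ≤ e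
  · obtain ⟨y, rfl⟩ : ∃ y, e = 4 + y := ⟨e - 4, by ring⟩
    obtain ⟨x, rfl⟩ : ∃ x, p = (4 + y + 1) ^ 2 + x := ⟨p - (4 + y + 1) ^ 2, by ring⟩
    have hy : 0 ≤ y := by linarith
    have hx : 0 ≤ x := by linarith
    ring_nf
    positivity
  · have : e ≤ 3 := by linarith
    interval_cases e
    · obtain ⟨x, rfl⟩ : ∃ x, p = 16 + x := ⟨p - 16, by ring⟩
      have hx : 0 ≤ x := by linarith [h2 rfl]
      ring_nf
      positivity
    · obtain ⟨x, rfl⟩ : ∃ x, p = 19 + x := ⟨p - 19, by ring⟩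
      have hx : 0 ≤ x := by linarith [h3 rfl]
      ring_nf
      positivity

/-- the smallest degree D = e f satisfies D² ≤ b -/
lemma num3 (p e κ t k N f : ℤ) (he : 2 ≤ e) (hpe : (e + 1) ^ 2 ≤ p) (hp9 : 11 ≤ p) (hκ : 1 ≤ κ) (b : ℤ)
    (hb : b = p - 1 - e) (ht : 0 ≤ t) (hf : 1 ≤ f) (hfb : e * f ≤ b)
    (hD : t * (e * f) ^ 2 ≤ e * p * κ) (hN : (p + 1) * e * p * κ ≤ N) (hk : 3 * N ≤ p ^ 2 * k)
    (hc : b ^ 2 * k + 1 + t * (e * f) ^ 2 ≤ N + b ^ 2 * (1 + t)) : (e * f) ^ 2 ≤ b := by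
  by_contra hcon
  push Not at hcon
  have h3e : 3 * (e + 1) ≤ p := by nlinarith
  have hb3 : 2 * p ≤ 3 * b := by linarith
  have hbp : p ^ 2 ≤ 3 * b ^ 2 := by nlinarith
  have hle : (e * f) ^ 2 ≤ b ^ 2 := by
    have : 0 ≤ e * f := by positivity
    nlinarith
  have key := fun q hq hqD => num2 p e κ t k N ((e * f) ^ 2) q (by linarith) (by linarith) hκ b ht hq hqD
    (le_trans hqD hle) hD hN hk hbp hc
  by_cases h2 : e = 2 ∧ p < 16
  · obtain ⟨rfl, hp⟩ := h2
    have h5 : 2 ≤ f := by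
      by_contra hf2
      have : f = 1 := by linarith
      rw [this] at hcon; linarith
    have h6 := key 16 (by norm_num) (by nlinarith)
    rw [hb] at h6
    clear key
    interval_cases p <;> norm_num at h6
  by_cases h3 : e = 3 ∧ p < 19
  · obtain ⟨rfl, hp⟩ := h3
    have h5 : 2 ≤ f := by
      by_contra hf2
      have : f = 1 := by linarith
      rw [this] at hcon; linarith
    have h6 := key 36 (by norm_num) (by nlinarith)
    rw [hb] at h6
    clear key
    have : 16 ≤ p := by linarith
    interval_cases p <;> norm_num at h6
  have h4 := num2_poly p e b he hpe hb (by
    intro h; by_contra h'; exact h2 ⟨h, by linarith⟩) (by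
    intro h; by_contra h'; exact h3 ⟨h, by linarith⟩)
  have h5 := key (b + 1) (by linarith) (by linarith)
  linarith

lemma num4 (p e κ k N b : ℤ) (he : 2 ≤ e) (hpe : (e + 1) ^ 2 ≤ p) (hb : b = p - 1 - e) (hκ : 1 ≤ κ)
    (hN : (p + 1) * e * p * κ ≤ N) (hk : 3 * N ≤ p ^ 2 * k) (hc : b ^ 2 * k + 1 ≤ N + b ^ 2) : False := by
  have h3e : 3 * (e + 1) ≤ p := by nlinarith
  have hb3 : 2 * p ≤ 3 * b := by linarith
  have hp : 9 ≤ p := by linarith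
  have hbp : 4 * p ^ 2 ≤ 9 * b ^ 2 := by nlinarith
  have h1 : N * (3 * b ^ 2 - p ^ 2) < p ^ 2 * b ^ 2 := by
    have a1 := mul_le_mul_of_nonneg_left hk (sq_nonneg b)
    have a2 := mul_le_mul_of_nonneg_left hc (sq_nonneg p)
    nlinarith
  have h2 : 2 * p ^ 2 ≤ N := by
    refine le_trans ?_ hN
    have i1 : p * 2 ≤ (p + 1) * e := by nlinarith
    have i2 : p * 2 * p ≤ (p + 1) * e * p := by nlinarith
    nlinarith
  have h3 : 2 * p ^ 2 * (3 * b ^ 2 - p ^ 2) ≤ N * (3 * b ^ 2 - p ^ 2) := by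
    apply mul_le_mul_of_nonneg_right h2
    nlinarith
  have h4 : p ^ 2 * (2 * (3 * b ^ 2 - p ^ 2)) < p ^ 2 * b ^ 2 := by linarith
  have h5 := lt_of_mul_lt_mul_left h4 (sq_nonneg p)
  nlinarith

end numeric

end part17

section part18
set_option linter.all false
open scoped ComplexConjugate
open Finset
open scoped Pointwise

section setup
variable {S : Type} [Group S] [Fintype S]

lemma cent_ne_top [IsSimpleGroup S] (hnc : ¬ ∀ x y : S, x * y = y * x) (h : S) (h1 : h ≠ 1) :
    Subgroup.centralizer ({h} : Set S) ≠ ⊤ := by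
  intro ht
  rcases (inferInstance : (Subgroup.center S).Normal).eq_bot_or_eq_top with h' | h'
  · apply h1
    rw [← Subgroup.mem_bot, ← h', Subgroup.mem_center_iff]
    intro g
    have : g ∈ Subgroup.centralizer ({h} : Set S) := by rw [ht]; trivial
    exact (Subgroup.mem_centralizer_singleton_iff.1 this)
  · apply hnc
    intro x y
    have : y ∈ Subgroup.center S := by rw [h']; trivial
    exact Subgroup.mem_center_iff.1 this x

/-- Burnside transfer for simple groups -/
lemma burnside [IsSimpleGroup S] (hnc : ¬ ∀ x y : S, x * y = y * x) {p : ℕ} (hp : p.Prime)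
    (hd : p ∣ Fintype.card S) (P : Sylow p S)
    (hP : Subgroup.normalizer ((P : Subgroup S) : Set S) ≤ Subgroup.centralizer ((P : Subgroup S) : Set S)) : False := by
  have hfact : Fact p.Prime := ⟨hp⟩
  have h1 := MonoidHom.ker_transferSylow_isComplement' P hP
  have hn : (MonoidHom.transferSylow P hP).ker.Normal := inferInstance
  rcases hn.eq_bot_or_eq_top with h | h
  · rw [h] at h1
    have h2 : (P : Subgroup S) = ⊤ := by
      have := h1.sup_eq_top
      rwa [bot_sup_eq] at this
    apply sylow_not_normal hnc hp hd P
    rw [h2]; infer_instance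
  · rw [h] at h1
    have h2 : (P : Subgroup S) = ⊥ := by
      have := h1.disjoint
      rwa [top_disjoint] at this
    apply sylow_not_normal hnc hp hd P
    rw [h2]; infer_instance

lemma setup [IsSimpleGroup S] (hnc : ¬ ∀ x y : S, x * y = y * x) {p : ℕ} (hp : p.Prime)
    (hd : p ∣ Fintype.card S) (hk : 3 * Fintype.card S ≤ p ^ 2 * Fintype.card (Irr S))
    (hPS : ∀ H : Subgroup S, H ≠ ⊤ → PS p H) :
    ∃ (e κ : ℕ) (g : S) (K : Subgroup S) (l : Cg g →* ℂˣ), Ctx p e g K l ∧ 2 ≤ e ∧ 1 ≤ κ ∧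
      Nat.card (Cg g) = p * κ ∧ (p + 1) * e * p * κ ≤ Fintype.card S := by
  classical
  have hfact : Fact p.Prime := ⟨hp⟩
  obtain ⟨χ, hχ, hdeg⟩ := step1 hnc hp hd hk
  obtain ⟨P⟩ : Nonempty (Sylow p S) := inferInstance
  have hPc := step2 hnc hp hd hk hPS P
  obtain ⟨g', hg'⟩ : ∃ g : P, g ≠ 1 := by
    have : Nontrivial P := by
      rw [← Finite.one_lt_card_iff_nontrivial, hPc]; exact hp.one_lt
    exact exists_ne 1
  obtain ⟨g, hgP⟩ := g'
  have hg1 : g ≠ 1 := fun h => hg' (Subtype.ext h)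
  have hgo : orderOf g = p := by
    apply orderOf_eq_prime _ hg1
    have this : (⟨g, hgP⟩ : (P : Subgroup S)) ^ Nat.card (P : Subgroup S) = 1 := pow_card_eq_one'
    have hPc' : Nat.card (P : Subgroup S) = p := hPc
    rw [hPc'] at this
    exact congrArg Subtype.val this
  have hPz : (P : Subgroup S) = Subgroup.zpowers g := by
    symm
    apply Subgroup.eq_of_le_of_card_ge
    · rw [Subgroup.zpowers_le]; exact hgP
    · rw [Nat.card_zpowers, hgo]; exact hPc.le
  have hCt := cent_ne_top hnc g hg1
  obtain ⟨O, hO⟩ := ito χ hχ hp hdeg (Cg g) (hPS _ hCt)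
  have hOz : O = Subgroup.zpowers g := by
    rw [← hPz]
    apply P.is_maximal' hO.pg
    change (P : Subgroup S) ≤ O
    rw [hPz, Subgroup.zpowers_le]
    apply hO.mem (gC g).2 (k := 1)
    rw [pow_one, ← hgo]; exact pow_orderOf_eq_one g
  obtain ⟨K, u, hK1, hK2, hK3⟩ := central_compl hp O (Cg g) hO (by
    intro o ho z hz
    rw [hOz] at ho
    obtain ⟨j, rfl⟩ := ho
    exact ((Commute.zpow_right (mem_Cg.1 hz : Commute z g) j).eq).symm)
  have hKle : K ≤ Cg g := fun x hx => ((hK1 x).1 hx).1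
  have hgen : ∀ c ∈ Cg g, ∃ κ ∈ K, ∃ j : ℕ, c = κ * g ^ j := by
    intro c hc
    obtain ⟨o, ho, κ, hκ, rfl⟩ := hK3 c hc
    rw [hOz] at ho
    obtain ⟨j, hj⟩ := mem_powers_iff_mem_zpowers.2 ho
    refine ⟨κ, hκ, j, ?_⟩
    change g ^ j = o at hj
    rw [← hj]
    exact (Commute.pow_right (mem_Cg.1 (hKle hκ) : Commute κ g) j).eq.symm
  have hKn : (K.subgroupOf (Cg g)).Normal := by
    constructor
    intro n hn c
    rw [Subgroup.mem_subgroupOf, hK1] at hn ⊢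
    refine ⟨(c * n * c⁻¹).2, ?_⟩
    push_cast
    rw [conj_pow, hn.2]; group
  obtain ⟨l, l1, l2, l3⟩ := exists_lambda (K.subgroupOf (Cg g)) (gC g) (k := 0) hp (by
    rw [zero_add, pow_one, ← hgo]
    exact (Subgroup.orderOf_coe (gC g)).symm) (by
    rw [Nat.card_congr (Subgroup.subgroupOfEquivOfLe hKle).toEquiv]; exact hK2) (by
    intro h
    obtain ⟨κ, hκ, j, hj⟩ := hgen h h.2
    exact ⟨⟨κ, hKle hκ⟩, hκ, j, Subtype.ext hj⟩)
  obtain ⟨e, he⟩ : Nat.card (Cg g) ∣ Nat.card (Ng g) := Subgroup.card_dvd_of_le Subgroup.le_normalizer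
  have X : Ctx p e g K l := ⟨hp, hgo, hKle, hK2, hgen, fun c hc => l1 c hc, l2, l3, by rw [he, mul_comm]⟩
  obtain ⟨κ, hκ⟩ : p ∣ Nat.card (Cg g) := by
    rw [← hgo, ← Subgroup.orderOf_mk g (gC g).2]
    exact orderOf_dvd_natCard _
  have hCpos : 0 < Nat.card (Cg g) := Nat.card_pos
  have hNpos : 0 < Nat.card (Ng g) := Nat.card_pos
  have hκ1 : 1 ≤ κ := by
    rcases Nat.eq_zero_or_pos κ with h | h
    · rw [h] at hκ; omega
    · exact h
  refine ⟨e, κ, g, K, l, X, ?_, hκ1, hκ, ?_⟩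
  · by_contra hcon
    have he1 : e = 1 := by
      have : e ≠ 0 := by rintro rfl; omega
      omega
    have hNC : Ng g = Cg g := by
      symm
      apply Subgroup.eq_of_le_of_card_ge Subgroup.le_normalizer
      change Nat.card (Ng g) ≤ _
      rw [he, he1, mul_one]
    apply burnside hnc hp hd P
    rw [hPz, X.zN, hNC]
    intro x hx
    rw [Subgroup.mem_centralizer_iff]
    rintro h ⟨j, rfl⟩
    exact ((Commute.zpow_right (mem_Cg.1 hx : Commute x g) j).eq).symm
  · have h1 := normalizer_ne_top hnc hp hd P
    rw [hPz, X.zN] at h1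
    have h2 := (Ng g).card_mul_index
    rw [← Nat.card_eq_fintype_card, ← h2, he, hκ]
    calc (p + 1) * e * p * κ = p * κ * e * (p + 1) := by ring
      _ ≤ _ := Nat.mul_le_mul_left _ h1

end setup

end part18

section part19
set_option linter.all false
open scoped ComplexConjugate
open Finset
open scoped Pointwise

section fin
variable {S : Type} [Group S] [Fintype S] {p e : ℕ} {g : S} {K : Subgroup S} {l : Cg g →* ℂˣ}

lemma Ctx.typeI [IsSimpleGroup S] (X : Ctx p e g K l) (hpe : (e + 1) ^ 2 ≤ p) (χ : Irr S) :
    ∃ (O : Finset (Irr (Cg g))) (f : ℕ), χ ≠ trivIrr → χ.deg + e < p - 1 → 1 ≤ f ∧ #O = e ∧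
      (∀ θ ∈ O, θ.deg = f ∧ om (gC g) θ ≠ 1 ∧ 0 < mult (res (Cg g) χ.1) θ) ∧ χ.deg = e * f := by
  classical
  by_cases hχ : χ ≠ trivIrr
  swap
  · exact ⟨∅, 0, fun h => absurd h hχ⟩
  by_cases hd : χ.deg + e < p - 1
  swap
  · exact ⟨∅, 0, fun _ h => absurd h hd⟩
  obtain ⟨ψ, hψ, mψ⟩ := X.exists_om χ hχ
  refine ⟨orb (Cg g) ψ, ψ.deg, fun _ _ => ⟨ψ.deg_pos, X.orb_card ψ hψ, ?_, ?_⟩⟩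
  · intro θ hθ
    obtain ⟨n, rfl⟩ := mem_orb.1 hθ
    exact ⟨nact_deg _ n ψ, X.om_orb ψ hψ n, by rw [nact_mult]; exact mψ⟩
  · rw [(χ.isCh.res (Cg g)).deg_expand (n := χ.deg) χ.one_eq,
      ← sum_subset (subset_univ (orb (Cg g) ψ)), ← X.orb_card ψ hψ, ← smul_eq_mul, ← sum_const]
    · apply sum_congr rfl
      intro θ hθ
      obtain ⟨n, rfl⟩ := mem_orb.1 hθ
      rw [nact_mult, nact_deg, X.mult_one χ hd ψ hψ mψ, one_mul]
    · intro θ _ hθ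
      have : mult (res (Cg g) χ.1) θ = 0 := by
        by_contra h0
        by_cases h1 : om (gC g) θ = 1
        · exact h0 (X.xi_zero χ hχ hd hpe θ h1)
        · exact hθ (mem_orb.2 (X.uniq χ hd ψ θ hψ h1 mψ (Nat.pos_of_ne_zero h0)))
      rw [this, zero_mul]

lemma Ctx.typeI_sum [IsSimpleGroup S] (X : Ctx p e g K l) (hpe : (e + 1) ^ 2 ≤ p) (T : Finset (Irr S))
    (hT : ∀ χ ∈ T, χ ≠ trivIrr ∧ χ.deg + e < p - 1) :
    ∑ χ ∈ T, χ.deg ^ 2 ≤ e * Nat.card (Cg g) := by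
  classical
  choose O f h using X.typeI hpe
  have h1 : ∀ χ ∈ T, χ.deg ^ 2 = e * ∑ θ ∈ O χ, θ.deg ^ 2 := by
    intro χ hχ
    obtain ⟨_, a, b, c⟩ := h χ (hT χ hχ).1 (hT χ hχ).2
    rw [sum_congr rfl (fun θ hθ => by rw [(b θ hθ).1]), sum_const, a, smul_eq_mul, c]
    ring
  rw [sum_congr rfl h1, ← mul_sum]
  apply Nat.mul_le_mul_left
  rw [← sum_biUnion, Nat.card_eq_fintype_card, ← sum_deg_sq]
  · exact sum_le_sum_of_subset (subset_univ _)
  · intro χ hχ χ' hχ' hne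
    rw [Function.onFun, disjoint_left]
    intro θ hθ hθ'
    apply hne
    have a := h χ (hT χ hχ).1 (hT χ hχ).2
    have b := h χ' (hT χ' hχ').1 (hT χ' hχ').2
    exact X.disj χ χ' (hT χ hχ).2 (hT χ' hχ').2 θ (a.2.2.1 θ hθ).2.1 (a.2.2.1 θ hθ).2.2 (b.2.2.1 θ hθ').2.2

lemma Ctx.typeI_zero [IsSimpleGroup S] (X : Ctx p e g K l) (hpe : (e + 1) ^ 2 ≤ p) (χ : Irr S)
    (hχ : χ ≠ trivIrr) (hd : χ.deg + e < p - 1) : ∑ j ∈ range p, χ.1 (g ^ j) = 0 := by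
  have h : ∀ j : ℕ, χ.1 (g ^ j) = ∑ ψ : Irr (Cg g), mult (res (Cg g) χ.1) ψ * ψ.1 (gC g ^ j) := fun j =>
    (χ.isCh.res (Cg g)).expand (gC g ^ j)
  simp only [h]
  rw [sum_comm]
  apply sum_eq_zero
  intro ψ _
  rw [← mul_sum]
  by_cases h1 : om (gC g) ψ = 1
  · rw [X.xi_zero χ hχ hd hpe ψ h1]; simp
  · rw [om_sum_zero (gC_comm g) ψ X.gCp h1, mul_zero]

lemma Ctx.zsum (X : Ctx p e g K l) (f : S → ℝ) :
    ∑ x : Subgroup.zpowers g, f x = ∑ j ∈ range p, f (g ^ j) := by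
  rw [← X.hg, ← Fin.sum_univ_eq_sum_range (fun j => f (g ^ j))]
  symm
  apply Fintype.sum_equiv (finEquivZPowers (isOfFinOrder_of_finite g))
  intro j
  rfl

lemma Ctx.tensor [IsSimpleGroup S] (X : Ctx p e g K l) (hpe : (e + 1) ^ 2 ≤ p) (χ : Irr S)
    (h2 : 2 ≤ χ.deg) (hb : χ.deg ^ 2 + e ≤ p - 1) : False := by
  classical
  have hp0 := X.hp.pos
  set θ : S → ℂ := fun x => χ.1 x * χ.1 x⁻¹ with hθ
  have hθc : IsCh S θ := χ.isCh.mul χ.isCh.inv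
  have hθn : ∀ x, θ x = ((‖χ.1 x‖ ^ 2 : ℝ) : ℂ) := by
    intro x
    rw [hθ]
    simp only
    rw [χ.isCh.conj, Complex.mul_conj, Complex.normSq_eq_norm_sq]
  have hm1 : mult θ trivIrr = 1 := by
    have a := hθc.ip_mult trivIrr
    have b := χ.2.ip_self
    have c : ip θ (trivIrr : Irr S).1 = ip χ.1 χ.1 := by
      simp only [ip, trivIrr_apply, map_one, mul_one, hθ, χ.isCh.conj]
    rw [c, b] at a
    exact_mod_cast a.symm
  have hdeg := hθc.deg_expand (n := χ.deg ^ 2) (by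
    simp only [hθ, inv_one, χ.one_eq]; push_cast; ring)
  rw [← add_sum_erase _ _ (mem_univ (trivIrr : Irr S)), hm1, trivIrr_deg, one_mul] at hdeg
  have hz : ∑ j ∈ range p, θ (g ^ j) = p := by
    simp only [hθc.expand]
    rw [sum_comm, ← add_sum_erase _ _ (mem_univ (trivIrr : Irr S)), hm1]
    rw [sum_eq_zero (s := univ.erase (trivIrr : Irr S))]
    · simp
    · intro χ' hχ'
      rw [← mul_sum]
      rcases Nat.eq_zero_or_pos (mult θ χ') with h0 | h0
      · rw [h0]; simp
      · rw [X.typeI_zero hpe χ' (ne_of_mem_erase hχ'), mul_zero]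
        have h3 := single_le_sum (f := fun χ' : Irr S => mult θ χ' * χ'.deg) (fun _ _ => Nat.zero_le _) hχ'
        have h4 : χ'.deg ≤ mult θ χ' * χ'.deg := Nat.le_mul_of_pos_left _ h0
        omega
  have hz' : ∑ j ∈ range p, ‖χ.1 (g ^ j)‖ ^ 2 = p := by
    simp only [hθn] at hz
    exact_mod_cast hz
  have h5 := res_norm (Subgroup.zpowers g) χ.1 χ.isCh
  rw [X.zsum (fun x => ‖χ.1 x‖ ^ 2), hz', X.zcard] at h5
  have h3 : χ.deg ≤ ∑ ψ : Irr (Subgroup.zpowers g), mult (res (Subgroup.zpowers g) χ.1) ψ ^ 2 := by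
    rw [(χ.isCh.res (Subgroup.zpowers g)).deg_expand (n := χ.deg) χ.one_eq]
    apply sum_le_sum
    intro ψ _
    rw [ψ.deg_one_of_comm (comm_zpowers g), mul_one]
    exact Nat.le_self_pow two_ne_zero _
  have h6 : p = p * (∑ ψ : Irr (Subgroup.zpowers g), mult (res (Subgroup.zpowers g) χ.1) ψ ^ 2) := by
    exact_mod_cast h5
  have h7 : p * 2 ≤ p := by
    conv_rhs => rw [h6]
    exact Nat.mul_le_mul_left _ (le_trans h2 h3)
  omega

theorem simple_contra [IsSimpleGroup S] (hnc : ¬ ∀ x y : S, x * y = y * x) (hp : p.Prime)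
    (hd : p ∣ Fintype.card S) (hk : 3 * Fintype.card S ≤ p ^ 2 * Fintype.card (Irr S))
    (hPS : ∀ H : Subgroup S, H ≠ ⊤ → PS p H) : False := by
  classical
  obtain ⟨e, κ, g, K, l, X, he, hκ, hC, hN⟩ := setup hnc hp hd hk hPS
  obtain ⟨χ0, hχ0, hd0⟩ := step1 hnc hp hd hk
  set T : Finset (Irr S) := univ.filter fun χ => χ ≠ trivIrr ∧ χ.deg < p - 1 with hT
  obtain ⟨h2e, hs⟩ := X.sbound T (fun χ h => (mem_filter.1 h).2) ⟨χ0, by simp [hT, hχ0, hd0]⟩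
  have hp0 := hp.pos
  have hpos : 1 ≤ p := hp0
  have hs' : #T * e ≤ (p - 1) * κ := by
    rw [hC] at hs
    apply Nat.le_of_mul_le_mul_right _ hp0
    calc _ ≤ _ := hs
      _ = _ := by ring
  have c1 := count_irr (p - 1) (insert trivIrr T) (by
    intro χ hχ
    simp only [hT, mem_insert, mem_filter, mem_univ, true_and, not_or, not_and, not_lt] at hχ
    exact hχ.2 hχ.1)
  have htT : (trivIrr : Irr S) ∉ T := by simp [hT]
  rw [sum_insert htT, card_insert_of_notMem htT, trivIrr_deg] at c1
  have c2 : #T * 4 ≤ ∑ χ ∈ T, χ.deg ^ 2 := by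
    rw [← smul_eq_mul]
    apply card_nsmul_le_sum
    intro χ hχ
    have := χ.ne_triv_deg hnc (mem_filter.1 hχ).2.1
    nlinarith
  have hkZ : 3 * (Fintype.card S : ℤ) ≤ (p : ℤ) ^ 2 * Fintype.card (Irr S) := by exact_mod_cast hk
  have hNZ : ((p : ℤ) + 1) * e * p * κ ≤ Fintype.card S := by exact_mod_cast hN
  have hpeZ : ((e : ℤ) + 1) ^ 2 ≤ p := by
    apply num1 p e κ #T (Fintype.card (Irr S)) (Fintype.card S) (by exact_mod_cast he) (by omega)
    · intro h8
      have : p = 8 := by exact_mod_cast h8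
      rw [this] at hp; revert hp; norm_num
    · exact_mod_cast hκ
    · positivity
    · zify [hpos] at hs'; exact hs'
    · exact hNZ
    · exact hkZ
    · have c1' : (p - 1) ^ 2 * Fintype.card (Irr S) + 1 + 4 * #T ≤ Fintype.card S + (p - 1) ^ 2 * (1 + #T) := by
        rw [add_comm 1 #T]; linarith
      zify [hpos] at c1'
      exact c1'
  have hpe : (e + 1) ^ 2 ≤ p := by exact_mod_cast hpeZ
  have hp11 : 11 ≤ p := by
    have : 9 ≤ p := by nlinarith
    by_contra hlt
    push Not at hlt
    interval_cases p
    · revert hp; norm_num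
    · revert hp; norm_num
  set T1 : Finset (Irr S) := univ.filter fun χ => χ ≠ trivIrr ∧ χ.deg + e < p - 1 with hT1
  have htT1 : (trivIrr : Irr S) ∉ T1 := by simp [hT1]
  have c3 := count_irr (p - 1 - e) (insert trivIrr T1) (by
    intro χ hχ
    simp only [hT1, mem_insert, mem_filter, mem_univ, true_and, not_or, not_and, not_lt] at hχ
    have := hχ.2 hχ.1
    omega)
  rw [sum_insert htT1, card_insert_of_notMem htT1, trivIrr_deg] at c3
  have hbZ : ((p - 1 - e : ℕ) : ℤ) = (p : ℤ) - 1 - e := by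
    have : e ≤ p - 1 := by omega
    push_cast [this, hpos]; rfl
  rcases T1.eq_empty_or_nonempty with h0 | h0
  · rw [h0] at c3
    simp only [sum_empty, card_empty] at c3
    apply num4 p e κ (Fintype.card (Irr S)) (Fintype.card S) ((p - 1 - e : ℕ) : ℤ) (by exact_mod_cast he) hpeZ hbZ
      (by exact_mod_cast hκ) hNZ hkZ
    have c4 : (p - 1 - e) ^ 2 * Fintype.card (Irr S) + 1 ≤ Fintype.card S + (p - 1 - e) ^ 2 := by
      linarith
    exact_mod_cast c4
  · obtain ⟨χ, hχ, hmin⟩ := exists_min_image T1 Irr.deg h0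
    have hχ' := (mem_filter.1 hχ).2
    obtain ⟨O, f, hf⟩ := X.typeI hpe χ
    obtain ⟨hf1, -, -, hf⟩ := hf hχ'.1 hχ'.2
    have s1 : #T1 * χ.deg ^ 2 ≤ ∑ χ ∈ T1, χ.deg ^ 2 := by
      rw [← smul_eq_mul]
      apply card_nsmul_le_sum
      intro χ' h'
      exact Nat.pow_le_pow_left (hmin χ' h') 2
    have s2 := X.typeI_sum hpe T1 (fun χ h => (mem_filter.1 h).2)
    rw [hC] at s2
    rw [hf] at s1
    have s3 : #T1 * (e * f) ^ 2 ≤ e * p * κ := by rw [mul_assoc]; exact s1.trans s2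
    have c4 : (p - 1 - e) ^ 2 * Fintype.card (Irr S) + 1 + #T1 * (e * f) ^ 2 ≤
        Fintype.card S + (p - 1 - e) ^ 2 * (1 + #T1) := by
      rw [add_comm 1 #T1]; linarith
    have hfb : e * f ≤ p - 1 - e := by rw [← hf]; omega
    have key := num3 p e κ #T1 (Fintype.card (Irr S)) (Fintype.card S) f (by exact_mod_cast he) hpeZ
      (by exact_mod_cast hp11) (by exact_mod_cast hκ) ((p - 1 - e : ℕ) : ℤ) hbZ (by positivity)
      (by exact_mod_cast hf1) (by exact_mod_cast hfb) (by exact_mod_cast s3) hNZ hkZ (by exact_mod_cast c4)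
    have key' : (e * f) ^ 2 ≤ p - 1 - e := by exact_mod_cast key
    apply X.tensor hpe χ (χ.ne_triv_deg hnc hχ'.1)
    rw [hf]; omega

end fin

end part19

section part20
set_option linter.all false
open scoped ComplexConjugate
open Finset

section red

lemma PS.map {p : ℕ} {A B : Type} [Group A] [Group B] (f : A →* B) (hf : Function.Injective f)
    {H : Subgroup A} (h : PS p H) : PS p (H.map f) := by
  induction h with
  | bot => rw [Subgroup.map_bot]; exact PS.bot
  | step K H hKH hn hq hK ih =>
    refine PS.step (K.map f) (H.map f) (Subgroup.map_mono hKH)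
      ((Subgroup.map_mono hn).trans (Subgroup.le_normalizer_map f)) ?_ ih
    rw [Subgroup.relIndex_map_map_of_injective _ _ hf]
    exact hq

lemma PS.comap {p : ℕ} {A B : Type} [Group A] [Group B] (f : A →* B) (hf : Function.Surjective f)
    (h0 : PS p f.ker) {H : Subgroup B} (h : PS p H) : PS p (H.comap f) := by
  induction h with
  | bot => exact h0
  | step K H hKH hn hq hK ih =>
    refine PS.step (K.comap f) (H.comap f) (Subgroup.comap_mono hKH)
      ((Subgroup.comap_mono hn).trans (Subgroup.le_normalizer_comap f)) ?_ ih
    rw [Subgroup.relIndex_comap, Subgroup.map_comap_eq_self_of_surjective hf]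
    exact hq

variable {G : Type} [Group G] [Fintype G]

/-- number of commuting pairs -/
noncomputable def cpr (G : Type) [Group G] [Fintype G] : ℕ :=
  ∑ x : G, Nat.card {h : G // h * x = x * h}

lemma card_irr' : Fintype.card (Irr G) * Fintype.card G = cpr G := by
  classical
  rw [card_irr, ncomm, cpr]
  apply sum_congr rfl
  intro x _
  rw [Nat.card_eq_fintype_card, Fintype.card_subtype]
  congr 1
  ext h
  simp [mul_inv_eq_iff_eq_mul]

lemma cent_le (H : Subgroup G) (x : G) :
    Nat.card {h : G // h * x = x * h} ≤ H.index * Nat.card {h : H // (h : G) * x = x * h} := by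
  set C := Subgroup.centralizer ({x} : Set G) with hC
  have h1 : Nat.card {h : G // h * x = x * h} = Nat.card C :=
    Nat.card_congr (Equiv.subtypeEquivRight fun h => Subgroup.mem_centralizer_singleton_iff.symm)
  have h2 : Nat.card {h : H // (h : G) * x = x * h} = Nat.card (H.subgroupOf C) := by
    apply Nat.card_congr
    refine ⟨fun h => ⟨⟨h.1.1, Subgroup.mem_centralizer_singleton_iff.2 h.2⟩, h.1.2⟩,
      fun c => ⟨⟨c.1.1, c.2⟩, Subgroup.mem_centralizer_singleton_iff.1 c.1.2⟩, fun _ => rfl, fun _ => rfl⟩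
  rw [h1, h2, ← Subgroup.card_mul_index (H.subgroupOf C), mul_comm]
  apply Nat.mul_le_mul_right
  change H.relIndex C ≤ _
  rw [← Subgroup.relIndex_top_right]
  apply Subgroup.relIndex_le_of_le_right le_top
  rw [Subgroup.relIndex_top_right]
  exact Subgroup.index_ne_zero_of_finite

lemma natcard_sub_ite {α : Type} [Fintype α] (P : α → Prop) [DecidablePred P] :
    Nat.card {a // P a} = ∑ a, if P a then 1 else 0 := by
  rw [Nat.card_eq_fintype_card, Fintype.card_subtype, card_filter]

lemma cpr_sub (H : Subgroup G) : cpr G ≤ H.index ^ 2 * cpr H := by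
  classical
  calc cpr G ≤ ∑ x : G, H.index * Nat.card {h : H // (h : G) * x = x * h} :=
        sum_le_sum fun x _ => cent_le H x
    _ = H.index * ∑ h : H, Nat.card {x : G // x * h = h * x} := by
        rw [← mul_sum]
        simp only [natcard_sub_ite]
        rw [sum_comm]
        simp only [eq_comm]
    _ ≤ H.index * ∑ h : H, H.index * Nat.card {x : H // (x : G) * h = h * x} := by
        apply Nat.mul_le_mul_left
        exact sum_le_sum fun h _ => cent_le H h
    _ = H.index ^ 2 * cpr H := by
        rw [← mul_sum, ← mul_assoc, ← pow_two, cpr]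
        congr 1
        apply sum_congr rfl
        intro h _
        apply Nat.card_congr
        exact Equiv.subtypeEquivRight fun x => by rw [Subtype.ext_iff]; rfl

lemma sum_quot (N : Subgroup G) [Fintype (G ⧸ N)] (F : G ⧸ N → ℕ) :
    ∑ x : G, F (x : G ⧸ N) = Nat.card N * ∑ q, F q := by
  classical
  rw [Fintype.sum_equiv (Subgroup.groupEquivQuotientProdSubgroup (s := N)) (fun x : G => F x)
    (fun y => F y.1) (fun x => rfl), Fintype.sum_prod_type]
  simp only [sum_const, card_univ, smul_eq_mul]
  rw [mul_sum, Nat.card_eq_fintype_card]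

lemma cpr_quot (N : Subgroup G) [N.Normal] [Fintype (G ⧸ N)] :
    cpr G ≤ Nat.card N ^ 2 * cpr (G ⧸ N) := by
  classical
  obtain ⟨m, hm⟩ : ∃ m, m = Nat.card N := ⟨_, rfl⟩
  rw [← hm]
  simp only [cpr, natcard_sub_ite]
  calc _ ≤ ∑ x : G, ∑ h : G, (if (h : G ⧸ N) * (x : G ⧸ N) = (x : G ⧸ N) * (h : G ⧸ N) then 1 else 0) := by
        apply sum_le_sum; intro x _
        apply sum_le_sum; intro h _
        by_cases hc : h * x = x * h
        · have : (h : G ⧸ N) * (x : G ⧸ N) = (x : G ⧸ N) * (h : G ⧸ N) := by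
            rw [← QuotientGroup.mk_mul, hc, QuotientGroup.mk_mul]
          rw [if_pos hc, if_pos this]
        · rw [if_neg hc]; exact Nat.zero_le _
    _ = ∑ x : G, Nat.card N * ∑ h : G ⧸ N, (if h * (x : G ⧸ N) = (x : G ⧸ N) * h then 1 else 0) := by
        apply sum_congr rfl; intro x _
        exact sum_quot N (fun h => if h * (x : G ⧸ N) = (x : G ⧸ N) * h then 1 else 0)
    _ = _ := by
        rw [← mul_sum]
        rw [sum_quot N (fun x => ∑ h : G ⧸ N, (if h * x = x * h then 1 else 0)), ← hm]
        ring

theorem PS_top {p : ℕ} (hp : p.Prime) : ∀ (n : ℕ) (G : Type) [Group G] [Fintype G],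
    Nat.card G = n → 3 * Nat.card G ^ 2 ≤ p ^ 2 * cpr G → PS p (⊤ : Subgroup G) := by
  classical
  intro n
  induction n using Nat.strong_induction_on with
  | _ n ih =>
    intro G _ _ hn hG
    have hsub : ∀ H : Subgroup G, H ≠ ⊤ → PS p H := by
      intro H hH
      have h1 := H.card_mul_index
      have hidx : 0 < H.index := Nat.pos_of_ne_zero Subgroup.index_ne_zero_of_finite
      have h2 : Nat.card H < n := by
        rw [← hn]
        apply lt_of_le_of_ne (Subgroup.card_le_card_group H)
        intro h
        exact hH (Subgroup.eq_top_of_card_eq H h)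
      have h3 : 3 * Nat.card H ^ 2 ≤ p ^ 2 * cpr H := by
        have := Nat.mul_le_mul_left (p ^ 2) (cpr_sub H)
        rw [← h1] at hG
        have h4 : H.index ^ 2 * (3 * Nat.card H ^ 2) ≤ H.index ^ 2 * (p ^ 2 * cpr H) := by
          calc _ = 3 * (Nat.card H * H.index) ^ 2 := by ring
            _ ≤ _ := hG
            _ ≤ _ := this
            _ = _ := by ring
        exact Nat.le_of_mul_le_mul_left h4 (by positivity)
      have := (ih _ h2 H rfl h3).map H.subtype H.subtype_injective
      rwa [← MonoidHom.range_eq_map, Subgroup.range_subtype] at this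
    rcases subsingleton_or_nontrivial G with ht | ht
    · rw [Subsingleton.elim (⊤ : Subgroup G) ⊥]; exact PS.bot
    by_cases hs : ∃ N : Subgroup G, N.Normal ∧ N ≠ ⊥ ∧ N ≠ ⊤
    · obtain ⟨N, hN, hb, htop⟩ := hs
      have h1 := N.card_eq_card_quotient_mul_card_subgroup
      have hc1 : 1 < Nat.card N := by
        have := Subgroup.one_lt_card_iff_ne_bot N
        exact this.2 hb
      have hq0 : 0 < Nat.card (G ⧸ N) := Nat.card_pos
      have h2 : Nat.card (G ⧸ N) < n := by
        rw [← hn, h1]; nlinarith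
      have h3 : 3 * Nat.card (G ⧸ N) ^ 2 ≤ p ^ 2 * cpr (G ⧸ N) := by
        have := Nat.mul_le_mul_left (p ^ 2) (cpr_quot N)
        rw [h1] at hG
        have h4 : Nat.card N ^ 2 * (3 * Nat.card (G ⧸ N) ^ 2) ≤ Nat.card N ^ 2 * (p ^ 2 * cpr (G ⧸ N)) := by
          calc _ = 3 * (Nat.card (G ⧸ N) * Nat.card N) ^ 2 := by ring
            _ ≤ _ := hG
            _ ≤ _ := this
            _ = _ := by ring
        exact Nat.le_of_mul_le_mul_left h4 (by positivity)
      have h5 := ih _ h2 (G ⧸ N) rfl h3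
      have h6 := PS.comap (QuotientGroup.mk' N) (QuotientGroup.mk'_surjective N) (by
        rw [QuotientGroup.ker_mk']; exact hsub N htop) h5
      rwa [Subgroup.comap_top] at h6
    · have hsimp : IsSimpleGroup G := by
        refine ⟨fun N hN => ?_⟩
        by_contra hcon
        push Not at hcon
        exact hs ⟨N, hN, hcon.1, hcon.2⟩
      have hnorm : (⊤ : Subgroup G) ≤ Subgroup.normalizer ((⊥ : Subgroup G) : Set G) :=
        le_of_eq (Subgroup.normalizer_eq_top (H := (⊥ : Subgroup G))).symm
      by_cases hd : p ∣ Nat.card G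
      · by_cases hnc : ∀ x y : G, x * y = y * x
        · let _ : CommGroup G := { (inferInstance : Group G) with mul_comm := hnc }
          have hpr : (Nat.card G).Prime := IsSimpleGroup.prime_card
          have hcard : Nat.card G = p := ((Nat.prime_dvd_prime_iff_eq hp hpr).1 hd).symm
          refine PS.step ⊥ ⊤ bot_le hnorm (Or.inl ⟨1, ?_⟩) PS.bot
          rw [Subgroup.relIndex_bot_left, Subgroup.card_top, hcard, pow_one]
        · exfalso
          refine simple_contra hnc hp (by rwa [← Nat.card_eq_fintype_card]) ?_ hsub
          have hpos : 0 < Fintype.card G := Fintype.card_pos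
          rw [← card_irr', Nat.card_eq_fintype_card] at hG
          apply Nat.le_of_mul_le_mul_right _ hpos
          calc _ = _ := by ring
            _ ≤ _ := hG
            _ = _ := by ring
      · refine PS.step ⊥ ⊤ bot_le hnorm (Or.inr ?_) PS.bot
        rw [Subgroup.relIndex_bot_left, Subgroup.card_top]
        exact ((Nat.Prime.coprime_iff_not_dvd hp).2 hd).symm

lemma PS.series {p : ℕ} (hp : p.Prime) {G : Type} [Group G] [Finite G] {L : Subgroup G} (h : PS p L) :
    ∃ (n : ℕ) (H : Fin (n + 1) → Subgroup G),
    H 0 = ⊥ ∧ H (Fin.last n) = L ∧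
    (∀ i : Fin n, H i.castSucc ≤ H i.succ) ∧
    (∀ i : Fin n, ∃ _ : ((H i.castSucc).subgroupOf (H i.succ)).Normal,
      IsPGroup p (↥(H i.succ) ⧸ (H i.castSucc).subgroupOf (H i.succ)) ∨
      (Nat.card (↥(H i.succ) ⧸ (H i.castSucc).subgroupOf (H i.succ))).Coprime p) := by
  induction h with
  | bot => exact ⟨0, fun _ => ⊥, rfl, rfl, fun i => i.elim0, fun i => i.elim0⟩
  | step K L hKL hn hq hK ih =>
    obtain ⟨n, H, h0, h1, h2, h3⟩ := ih
    refine ⟨n + 1, Fin.snoc (α := fun _ => Subgroup G) H L, ?_, ?_, ?_, ?_⟩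
    · rw [← Fin.castSucc_zero, Fin.snoc_castSucc (α := fun _ => Subgroup G), h0]
    · rw [Fin.snoc_last]
    · intro i
      rw [Fin.snoc_castSucc (α := fun _ => Subgroup G)]
      refine Fin.lastCases ?_ (fun j => ?_) i
      · rw [Fin.succ_last, Fin.snoc_last, h1]; exact hKL
      · rw [Fin.succ_castSucc, Fin.snoc_castSucc (α := fun _ => Subgroup G)]; exact h2 j
    · intro i
      rw [Fin.snoc_castSucc (α := fun _ => Subgroup G)]
      refine Fin.lastCases ?_ (fun j => ?_) i
      · rw [Fin.succ_last, Fin.snoc_last, h1]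
        have hnor := (Subgroup.normal_subgroupOf_iff_le_normalizer hKL).2 hn
        refine ⟨hnor, ?_⟩
        rcases hq with ⟨m, hm⟩ | hq
        · left
          exact IsPGroup.of_card hm
        · right; exact hq
      · rw [Fin.succ_castSucc, Fin.snoc_castSucc (α := fun _ => Subgroup G)]; exact h3 j

theorem main_thm (G : Type) [Group G] [Fintype G] (p : ℕ) (hp : p.Prime)
    (h : charDegSum G ≥ Real.sqrt 3 / (p : ℝ) * Nat.card G) :
    IsPSolvable p G := by
  apply PS.series hp
  apply PS_top hp _ G rfl
  have h1 := charDegSum_sq (G := G)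
  have hp0 : (0 : ℝ) < p := by exact_mod_cast hp.pos
  have h2 : (Real.sqrt 3 / (p : ℝ) * Nat.card G) ^ 2 ≤ charDegSum G ^ 2 :=
    pow_le_pow_left₀ (by positivity) h 2
  have h3 : (Real.sqrt 3 / (p : ℝ) * Nat.card G) ^ 2 * (p : ℝ) ^ 2 = 3 * (Nat.card G : ℝ) ^ 2 := by
    rw [mul_pow, div_pow, Real.sq_sqrt (by norm_num)]
    field_simp
  have h4 : (3 : ℝ) * (Nat.card G : ℝ) ^ 2 ≤ (p : ℝ) ^ 2 * (cpr G : ℝ) := by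
    rw [← card_irr', ← h3]
    push_cast
    have := mul_le_mul_of_nonneg_right (h2.trans h1) (sq_nonneg (p : ℝ))
    linarith
  exact_mod_cast h4

end red

end part20

/-- If `T(G) ≥ (√3/p)·|G|`, then the finite group `G` is `p`-solvable. -/
theorem degree_sum_p_solvable (G : Type) [Group G] [Fintype G] (p : ℕ) (hp : p.Prime)
    (h : charDegSum G ≥ Real.sqrt 3 / (p : ℝ) * Nat.card G) :
    IsPSolvable p G := by
  exact main_thm G p hp h
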